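/- arXiv:math/0603636 — 5 statements merged into one kernel-verified Lean document; each statement's English description precedes it below -/
import Mathlib

section
/- Let α ∈ (0,1/2), p ∈ (2, 1/α), and let b ∈ Λ^α_T with representative φ_b ∈ L^p([0,T]). For t ∈ [0,T] let φ_t ∈ L²([0,T]) denote the representative of b·1_{[0,t]} ∈ Λ^α_T. Then for every δ with 0 < δ < min( (p-2)/(2p), α, (1-αp)/p ) there exists a constant C, depending only on α, p, δ and T, such that for every n ≥ 1 and all 0 ≤ s ≤ t ≤ T, ( ∫_{[0,T]^n} | ∏_{i=1}^n φ_t(u_i) − ∏_{i=1}^n φ_s(u_i) |² du_1⋯du_n )^{1/2} ≤ 2^{n-1} C^n ‖φ_b‖_{L^p([0,T])}^n (t-s)^{δ}. -/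
open MeasureTheory Real Set

/-- The right-sided fractional integral of order `α` on `[0,T]`. -/
noncomputable def fracInt (T α : ℝ) (f : ℝ → ℝ) (x : ℝ) : ℝ :=
  (1 / Real.Gamma α) * ∫ u in Set.Ioo x T, f u * (u - x) ^ (α - 1)

/-- `f ∈ Λ^α_T` with representative `φ`. -/
def memLambda (T α : ℝ) (f φ : ℝ → ℝ) : Prop :=
  MemLp φ 2 (volume.restrict (Set.Icc 0 T)) ∧
  ∀ᵐ u ∂(volume.restrict (Set.Icc 0 T)),
    f u = u ^ α * fracInt T α (fun s => s ^ (-α) * φ s) u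

namespace RepHolder

/-- the constant `∫_0^∞ z^(a-1)/(1+z) dz`. -/
noncomputable def W (a : ℝ) : ENNReal := ∫⁻ z in Ioi (0 : ℝ), ENNReal.ofReal (z ^ (a - 1) / (1 + z))

lemma W_lt_top {a : ℝ} (h0 : 0 < a) (h1 : a < 1) : W a < ⊤ := by
  unfold W
  rw [← Ioc_union_Ioi_eq_Ioi (zero_le_one : (0:ℝ) ≤ 1)]
  refine (lintegral_union_le _ _ _).trans_lt (ENNReal.add_lt_top.2 ⟨?_, ?_⟩)
  · have h := (intervalIntegral.intervalIntegrable_rpow' (a := 0) (b := 1) (r := a - 1) (by linarith))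
    rw [intervalIntegrable_iff_integrableOn_Ioc_of_le zero_le_one] at h
    refine lt_of_le_of_lt (setLIntegral_mono' measurableSet_Ioc fun z hz => ?_) h.lintegral_lt_top
    apply ENNReal.ofReal_le_ofReal
    have : 0 ≤ z ^ (a - 1) := rpow_nonneg hz.1.le _
    exact div_le_self this (by linarith [hz.1])
  · have h := integrableOn_Ioi_rpow_of_lt (a := a - 2) (c := 1) (by linarith) one_pos
    refine lt_of_le_of_lt (setLIntegral_mono' measurableSet_Ioi fun z hz => ?_) h.lintegral_lt_top
    apply ENNReal.ofReal_le_ofReal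
    have hz' : (1:ℝ) < z := hz
    have hz0 : 0 < z := by linarith
    have : 0 ≤ z ^ (a - 1) := rpow_nonneg hz0.le _
    have e : z ^ (a - 2) = z ^ (a - 1) / z := by
      rw [← rpow_sub_one hz0.ne']; congr 1; ring
    rw [e]
    gcongr
    linarith

lemma W_pos (a : ℝ) : 0 < W a := by
  unfold W
  rw [setLIntegral_pos_iff (by fun_prop)]
  have : Ioi (0:ℝ) ⊆ (Function.support fun z : ℝ => ENNReal.ofReal (z ^ (a - 1) / (1 + z))) ∩ Ioi 0 := by
    intro z hz
    have hz' : (0:ℝ) < z := hz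
    refine ⟨?_, hz⟩
    have : 0 < z ^ (a - 1) / (1 + z) := by positivity
    simp [Function.mem_support, this]
  refine lt_of_lt_of_le ?_ (measure_mono this)
  simp

lemma W_toReal_pos {a : ℝ} (h0 : 0 < a) (h1 : a < 1) : 0 < (W a).toReal :=
  ENNReal.toReal_pos (W_pos a).ne' (W_lt_top h0 h1).ne

lemma ofReal_W {a : ℝ} (h0 : 0 < a) (h1 : a < 1) : ENNReal.ofReal (W a).toReal = W a :=
  ENNReal.ofReal_toReal (W_lt_top h0 h1).ne

/-- Moebius substitution. -/
lemma moebius {x t A : ℝ} (hxt : x < t) (hA : 0 < A) (F : ℝ → ENNReal) :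
    ∫⁻ u in Ioo x t, F u = ∫⁻ z in Ioi (0:ℝ),
      ENNReal.ofReal (A * (t - x) / (z + A) ^ 2) * F ((z * t + A * x) / (z + A)) := by
  have him : (fun z : ℝ => (z * t + A * x) / (z + A)) '' Ioi 0 = Ioo x t := by
    ext u
    constructor
    · rintro ⟨z, hz, rfl⟩
      have hz : 0 < z := hz
      have : 0 < z + A := by positivity
      constructor
      · rw [lt_div_iff₀ this]; nlinarith
      · rw [div_lt_iff₀ this]; nlinarith
    · rintro ⟨h1, h2⟩
      have h3 : 0 < t - u := by linarith
      have h4 : 0 < u - x := by linarith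
      have h5 : 0 < t - x := by linarith
      refine ⟨A * (u - x) / (t - u), by simp only [mem_Ioi]; positivity, ?_⟩
      have : A * (u - x) / (t - u) + A ≠ 0 := by positivity
      simp only
      rw [div_eq_iff this]
      field_simp
      ring
  rw [← him, lintegral_image_eq_lintegral_abs_deriv_mul (f' := fun z => A * (t - x) / (z + A) ^ 2)
    measurableSet_Ioi]
  · refine setLIntegral_congr_fun measurableSet_Ioi fun z hz => ?_
    have hz : 0 < z := hz
    have : 0 ≤ A * (t - x) / (z + A) ^ 2 := by
      have : 0 < t - x := by linarith
      positivity
    simp only [abs_of_nonneg this]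
  · intro z hz
    have hz : 0 < z := hz
    have hne : z + A ≠ 0 := by positivity
    have h1 : HasDerivAt (fun z : ℝ => z * t + A * x) t z := by
      simpa using ((hasDerivAt_id z).mul_const t).add_const (A * x)
    have h2 : HasDerivAt (fun z : ℝ => z + A) 1 z := by
      simpa using (hasDerivAt_id z).add_const A
    convert! (h1.div h2 hne).hasDerivWithinAt using 1
    congr 1
    ring
  · intro z hz w hw h
    have hz : 0 < z := hz
    have hw : 0 < w := hw
    have hne : z + A ≠ 0 := by positivity
    have hne' : w + A ≠ 0 := by positivity
    simp only at h
    rw [div_eq_div_iff hne hne'] at h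
    have : (z - w) * (A * (t - x)) = 0 := by linear_combination h
    rcases mul_eq_zero.1 this with h | h
    · linarith
    · have : 0 < A * (t - x) := mul_pos hA (by linarith)
      linarith

/-- affine substitution. -/
lemma affine_sub {s c : ℝ} (hc : 0 < c) (F : ℝ → ENNReal) :
    ∫⁻ v in Ioi s, F v = ∫⁻ z in Ioi (0:ℝ), ENNReal.ofReal c * F (s + c * z) := by
  have him : (fun z : ℝ => s + c * z) '' Ioi 0 = Ioi s := by
    ext u
    constructor
    · rintro ⟨z, hz, rfl⟩
      have hz : 0 < z := hz
      have : 0 < c * z := by positivity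
      simp only [mem_Ioi]; linarith
    · intro h
      have h : s < u := h
      have h3 : 0 < u - s := by linarith
      refine ⟨(u - s) / c, by simp only [mem_Ioi]; positivity, ?_⟩
      simp only
      field_simp
      ring
  rw [← him, lintegral_image_eq_lintegral_abs_deriv_mul (f' := fun z => c) measurableSet_Ioi]
  · simp only [abs_of_pos hc]
  · intro z hz
    have := (((hasDerivAt_id z).const_mul c).const_add s).hasDerivWithinAt (s := Ioi 0)
    simpa using this
  · intro z hz w hw h
    simp only at h
    have : c * z = c * w := by linarith
    exact mul_left_cancel₀ hc.ne' this

/-- reflected affine substitution. -/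
lemma affine_refl {s c : ℝ} (hc : 0 < c) (F : ℝ → ENNReal) :
    ∫⁻ x in Iio s, F x = ∫⁻ z in Ioi (0:ℝ), ENNReal.ofReal c * F (s - c * z) := by
  have him : (fun z : ℝ => s - c * z) '' Ioi 0 = Iio s := by
    ext u
    constructor
    · rintro ⟨z, hz, rfl⟩
      have hz : 0 < z := hz
      have : 0 < c * z := by positivity
      simp only [mem_Iio]; linarith
    · intro h
      have h : u < s := h
      have h3 : 0 < s - u := by linarith
      refine ⟨(s - u) / c, by simp only [mem_Ioi]; positivity, ?_⟩
      simp only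
      field_simp
      ring
  rw [← him, lintegral_image_eq_lintegral_abs_deriv_mul (f' := fun z => -c) measurableSet_Ioi]
  · simp only [abs_neg, abs_of_pos hc]
  · intro z hz
    have := (((hasDerivAt_id z).const_mul c).const_sub s).hasDerivWithinAt (s := Ioi 0)
    simpa using this
  · intro z hz w hw h
    simp only at h
    have : c * z = c * w := by linarith
    exact mul_left_cancel₀ hc.ne' this

lemma beta1 {α y u : ℝ} (hyu : y < u) :
    ∫⁻ x in Ioo y u, ENNReal.ofReal ((x - y) ^ (-α) * (u - x) ^ (α - 1)) = W (1 - α) := by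
  rw [moebius hyu one_pos, W]
  refine setLIntegral_congr_fun measurableSet_Ioi fun z hz => ?_
  have hz : 0 < z := hz
  have hD : 0 < u - y := by linarith
  have hq : 0 < z + 1 := by linarith
  rw [← ENNReal.ofReal_mul (by positivity)]
  congr 1
  have e1 : (z * u + 1 * y) / (z + 1) - y = z * (u - y) / (z + 1) := by field_simp; ring
  have e2 : u - (z * u + 1 * y) / (z + 1) = (u - y) / (z + 1) := by field_simp; ring
  rw [e1, e2, rpow_sub_one (by positivity), rpow_neg (by positivity), div_rpow (by positivity) hq.le,
    div_rpow (by positivity) hq.le, mul_rpow hz.le hD.le, show 1 - α - 1 = -α by ring, rpow_neg hz.le]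
  have h1 : 0 < z ^ α := by positivity
  have h2 : 0 < (u - y) ^ α := by positivity
  have h3 : 0 < (z + 1) ^ α := by positivity
  field_simp
  ring

lemma beta2 {α x s v : ℝ} (hxs : x < s) (hsv : s < v) :
    ∫⁻ u in Ioo x s, ENNReal.ofReal ((u - x) ^ (α - 1) * (((v - s) / (s - u)) ^ α / (v - u)))
      = ENNReal.ofReal ((v - x) ^ (α - 1)) * W α := by
  have hB : 0 < v - s := by linarith
  have hE : 0 < v - x := by linarith
  have hD : 0 < s - x := by linarith
  have hA : 0 < (v - s) / (v - x) := by positivity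
  rw [moebius hxs hA, W, ← lintegral_const_mul' _ _ ENNReal.ofReal_ne_top]
  refine setLIntegral_congr_fun measurableSet_Ioi fun z hz => ?_
  have hz : 0 < z := hz
  set A := (v - s) / (v - x) with hAdef
  have hq : 0 < z + A := by linarith
  rw [← ENNReal.ofReal_mul (by positivity), ← ENNReal.ofReal_mul (by positivity)]
  congr 1
  have e1 : (z * s + A * x) / (z + A) - x = z * (s - x) / (z + A) := by field_simp; ring
  have e2 : s - (z * s + A * x) / (z + A) = A * (s - x) / (z + A) := by field_simp; ring
  have e3 : v - (z * s + A * x) / (z + A) = (v - s) * (z + 1) / (z + A) := by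
    have : A * (v - x) = v - s := by rw [hAdef]; field_simp
    field_simp
    linear_combination this
  have e4 : (v - s) / (A * (s - x) / (z + A)) = (v - x) * (z + A) / (s - x) := by
    rw [hAdef]
    field_simp
  have e5 : v - s = A * (v - x) := by rw [hAdef]; field_simp
  rw [e1, e2, e3, e4, rpow_sub_one (by positivity), rpow_sub_one (by positivity),
    rpow_sub_one (by positivity), div_rpow (by positivity) hq.le,
    div_rpow (by positivity) hD.le, mul_rpow hz.le hD.le, mul_rpow hE.le hq.le]
  have h1 : 0 < z ^ α := by positivity
  have h2 : 0 < (s - x) ^ α := by positivity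
  have h3 : 0 < (z + A) ^ α := by positivity
  have h4 : 0 < (v - x) ^ α := by positivity
  rw [e5]
  field_simp
  try ring

lemma beta3 {α s v : ℝ} (hsv : s < v) :
    ∫⁻ x in Iio s, ENNReal.ofReal (((v - s) / (s - x)) ^ α / (v - x)) = W (1 - α) := by
  have hB : 0 < v - s := by linarith
  rw [affine_refl hB, W]
  refine setLIntegral_congr_fun measurableSet_Ioi fun z hz => ?_
  have hz : 0 < z := hz
  rw [← ENNReal.ofReal_mul (by positivity)]
  congr 1
  have e1 : (v - s) / (s - (s - (v - s) * z)) = z⁻¹ := by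
    rw [show s - (s - (v - s) * z) = (v - s) * z by ring]; field_simp
  have e2 : v - (s - (v - s) * z) = (v - s) * (1 + z) := by ring
  rw [e1, e2, inv_rpow hz.le, show 1 - α - 1 = -α by ring, rpow_neg hz.le]
  have h1 : 0 < z ^ α := by positivity
  field_simp

end RepHolder
namespace RepHolder

open Function

lemma fub {P : ℝ → ℝ → ℝ} (hP : Measurable (uncurry P)) (hP0 : ∀ x u, 0 ≤ P x u) {R : ℝ → ℝ}
    (hR0 : ∀ u, 0 ≤ R u) (hR : ∀ u, ∫⁻ x, ENNReal.ofReal (P x u) = ENNReal.ofReal (R u))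
    {f : ℝ → ℝ} (hf : AEStronglyMeasurable f volume)
    (hfin : ∫⁻ u, ENNReal.ofReal (R u) * ‖f u‖ₑ < ⊤) :
    Integrable (uncurry fun x u => P x u * f u) (volume.prod volume) ∧
      ∫ x, ∫ u, P x u * f u = ∫ u, R u * f u := by
  have hPu : ∀ u, Measurable fun x => P x u := fun u => hP.comp (measurable_id.prodMk measurable_const)
  have hm : AEStronglyMeasurable (uncurry fun x u => P x u * f u) (volume.prod volume) :=
    hP.aestronglyMeasurable.mul (hf.comp_snd (μ := volume))
  have hint : Integrable (uncurry fun x u => P x u * f u) (volume.prod volume) := by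
    refine ⟨hm, ?_⟩
    rw [HasFiniteIntegral, lintegral_prod_symm _ hm.enorm]
    refine lt_of_le_of_lt (le_of_eq ?_) hfin
    refine lintegral_congr fun u => ?_
    simp only [uncurry, enorm_mul]
    rw [lintegral_mul_const'' _ (hPu u).enorm.aemeasurable, ← hR u]
    congr 1
    refine lintegral_congr fun x => ?_
    rw [Real.enorm_eq_ofReal (hP0 x u)]
  refine ⟨hint, ?_⟩
  rw [integral_integral_swap hint]
  refine integral_congr_ae (Filter.Eventually.of_forall fun u => ?_)
  simp only
  rw [integral_mul_const, integral_eq_lintegral_of_nonneg_ae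
    (Filter.Eventually.of_forall fun x => hP0 x u) (hPu u).aestronglyMeasurable, hR u,
    ENNReal.toReal_ofReal (hR0 u)]

/-- kernel of the fractional integral -/
noncomputable def kap (α x u : ℝ) : ℝ := if x < u then (u - x) ^ (α - 1) else 0

/-- kernel of the Hilbert type operator -/
noncomputable def gam (α s x v : ℝ) : ℝ :=
  if x < s ∧ s < v then ((v - s) / (s - x)) ^ α / (v - x) else 0

noncomputable def J (α : ℝ) (f : ℝ → ℝ) (x : ℝ) : ℝ := ∫ u, kap α x u * f u

noncomputable def G (α s : ℝ) (f : ℝ → ℝ) (x : ℝ) : ℝ := ∫ v, gam α s x v * f v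

lemma kap_meas (α : ℝ) : Measurable (uncurry (kap α)) := by
  unfold kap uncurry
  refine Measurable.ite (measurableSet_lt (by fun_prop) (by fun_prop)) (by fun_prop) (by fun_prop)

lemma gam_meas (α s : ℝ) : Measurable (uncurry (gam α s)) := by
  unfold gam uncurry
  refine Measurable.ite ?_ (by fun_prop) (by fun_prop)
  exact (measurableSet_lt measurable_fst measurable_const).inter
    (measurableSet_lt measurable_const measurable_snd)

lemma kap_nonneg (α x u : ℝ) : 0 ≤ kap α x u := by
  unfold kap; split_ifs with h
  · exact rpow_nonneg (by linarith) _
  · rfl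

lemma gam_nonneg (α s x u : ℝ) : 0 ≤ gam α s x u := by
  unfold gam; split_ifs with h
  · have h1 : 0 < s - x := by linarith [h.1]
    have h2 : 0 < u - s := by linarith [h.2]
    have h3 : 0 < u - x := by linarith
    positivity
  · rfl

/-- weight -/
noncomputable def wt (α y x : ℝ) : ℝ := if y < x then (x - y) ^ (-α) else 0

lemma wt_meas (α y : ℝ) : Measurable (wt α y) := by
  unfold wt
  exact Measurable.ite (measurableSet_lt (by fun_prop) (by fun_prop)) (by fun_prop) (by fun_prop)

lemma wt_nonneg (α y x : ℝ) : 0 ≤ wt α y x := by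
  unfold wt; split_ifs with h
  · exact rpow_nonneg (by linarith) _
  · rfl

lemma ite_fin {k : ℝ} {y : ℝ} {f : ℝ → ℝ} (hf : Integrable f) :
    ∫⁻ u, ENNReal.ofReal (if y < u then k else 0) * ‖f u‖ₑ < ⊤ := by
  refine lt_of_le_of_lt (lintegral_mono (g := fun u => ENNReal.ofReal k * ‖f u‖ₑ) fun u => ?_) ?_
  · by_cases h : y < u <;> simp [h]
  · rw [lintegral_const_mul' _ _ ENNReal.ofReal_ne_top]
    exact ENNReal.mul_lt_top ENNReal.ofReal_lt_top hf.2


lemma fub_wt {α : ℝ} (h0 : 0 < α) (h1 : α < 1) {f : ℝ → ℝ} (hf : Integrable f) (y : ℝ) :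
    Integrable (uncurry fun x u => (wt α y x * kap α x u) * f u) (volume.prod volume) ∧
      ∫ x, ∫ u, (wt α y x * kap α x u) * f u =
        ∫ u, (if y < u then (W (1 - α)).toReal else 0) * f u := by
  refine fub (P := fun x u => wt α y x * kap α x u) ?_ ?_ ?_ ?_ hf.1 (ite_fin hf)
  · exact ((wt_meas α y).comp measurable_fst).mul (kap_meas α)
  · intro x u; exact mul_nonneg (wt_nonneg _ _ _) (kap_nonneg _ _ _)
  · intro u; split_ifs
    · exact ENNReal.toReal_nonneg
    · rfl
  · intro u
    split_ifs with hu
    · rw [ofReal_W (by linarith) (by linarith), ← beta1 hu, ← lintegral_indicator measurableSet_Ioo]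
      refine lintegral_congr fun x => ?_
      by_cases hx : x ∈ Ioo y u
      · rw [indicator_of_mem hx]; simp [wt, kap, hx.1, hx.2]
      · rw [indicator_of_notMem hx]
        have : wt α y x * kap α x u = 0 := by
          unfold wt kap
          split_ifs with a b
          · exact absurd ⟨a, b⟩ hx
          all_goals simp
        simp [this]
    · have : ∀ x, wt α y x * kap α x u = 0 := by
        intro x
        unfold wt kap
        split_ifs with a b
        · linarith
        all_goals simp
      simp [this]

lemma J_int {α : ℝ} (h0 : 0 < α) (h1 : α < 1) {f : ℝ → ℝ} (hf : Integrable f) :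
    ∀ᵐ x, 0 < x → Integrable (fun u => kap α x u * f u) := by
  have := (fub_wt h0 h1 hf 0).1.prod_right_ae
  filter_upwards [this] with x hx hx0
  have hw : wt α 0 x ≠ 0 := by
    simp only [wt, hx0, if_true]
    exact (rpow_pos_of_pos (by linarith) _).ne'
  have := hx.const_mul (wt α 0 x)⁻¹
  refine this.congr (Filter.Eventually.of_forall fun u => ?_)
  simp only [uncurry]
  field_simp

lemma ae_zero_of_Ioi {F : ℝ → ℝ} (hF : Integrable F) (h : ∀ y, ∫ u in Ioi y, F u = 0) :
    F =ᵐ[volume] 0 := by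
  have huniv : ∫ u, F u = 0 := by
    have h2 := tendsto_setIntegral_of_monotone (μ := volume) (f := F) (s := fun n : ℕ => Ioi (-(n:ℝ)))
      (fun _ => measurableSet_Ioi) (fun a b hab => Ioi_subset_Ioi (by simpa using hab))
      hF.integrableOn
    have e : (⋃ n : ℕ, Ioi (-(n:ℝ))) = univ := by
      ext x
      simp only [mem_iUnion, mem_Ioi, mem_univ, iff_true]
      obtain ⟨n, hn⟩ := exists_nat_gt (-x)
      exact ⟨n, by linarith⟩
    rw [e] at h2
    simp only [h, setIntegral_univ] at h2
    exact tendsto_nhds_unique h2 tendsto_const_nhds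
  refine hF.ae_eq_zero_of_forall_setIntegral_eq_zero fun S hS hS' => ?_
  clear hS'
  induction S, hS using MeasurableSpace.induction_on_inter (borel_eq_generateFrom_Ioi ℝ ▸ BorelSpace.measurable_eq) isPiSystem_Ioi with
  | empty => simp
  | basic t ht => obtain ⟨y, rfl⟩ := ht; exact h y
  | compl t ht ih =>
    have := integral_add_compl ht hF
    rw [ih] at this
    linarith
  | iUnion g hd hm ih =>
    rw [integral_iUnion hm hd hF.integrableOn]
    simp [ih]

lemma uniq {α : ℝ} (h0 : 0 < α) (h1 : α < 1) {f : ℝ → ℝ} (hf : Integrable f) (hJ : ∀ᵐ x, 0 < x → J α f x = 0) :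
    ∀ᵐ x, 0 < x → f x = 0 := by
  have key : ∀ y, 0 ≤ y → ∫ u in Ioi y, f u = 0 := by
    intro y hy
    have h2 := (fub_wt h0 h1 hf y).2
    have hl : ∫ x, ∫ u, (wt α y x * kap α x u) * f u = 0 := by
      rw [← integral_zero ℝ ℝ (μ := volume)]
      refine integral_congr_ae ?_
      filter_upwards [hJ] with x hx
      simp only [mul_assoc]
      rw [integral_const_mul]
      by_cases hyx : y < x
      · have := hx (by linarith)
        rw [J] at this
        rw [this, mul_zero]
      · simp [wt, hyx]
    rw [hl] at h2
    have e : ∀ u, (if y < u then (W (1 - α)).toReal else 0) * f u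
        = (Ioi y).indicator (fun u => (W (1 - α)).toReal * f u) u := by
      intro u
      by_cases hu : y < u <;> simp [hu]
    simp only [e] at h2
    rw [integral_indicator measurableSet_Ioi, integral_const_mul] at h2
    have := (W_toReal_pos (a := 1 - α) (by linarith) (by linarith)).ne'
    exact (mul_eq_zero.1 h2.symm).resolve_left this
  have := ae_zero_of_Ioi (F := (Ioi 0).indicator f) (hf.indicator measurableSet_Ioi) fun y => by
    rw [setIntegral_indicator measurableSet_Ioi, Ioi_inter_Ioi]
    exact key _ (by simp)
  filter_upwards [this] with x hx hx0
  simpa [hx0] using hx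

lemma fub_gam {α : ℝ} (h0 : 0 < α) (h1 : α < 1) {f : ℝ → ℝ} (hf : Integrable f) (s : ℝ) :
    Integrable (uncurry fun x u => gam α s x u * f u) (volume.prod volume) := by
  refine (fub (P := gam α s) (R := fun u => if s < u then (W (1 - α)).toReal else 0)
    (gam_meas _ _) (gam_nonneg _ _) ?_ ?_ hf.1 (ite_fin hf)).1
  · intro u; split_ifs
    · exact ENNReal.toReal_nonneg
    · rfl
  · intro u
    split_ifs with hu
    · rw [ofReal_W (by linarith) (by linarith), ← beta3 hu, ← lintegral_indicator measurableSet_Iio]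
      refine lintegral_congr fun x => ?_
      by_cases hx : x < s
      · simp [gam, hx, hu]
      · simp [gam, hx]
    · simp [gam, hu]

lemma G_int {α : ℝ} (h0 : 0 < α) (h1 : α < 1) {f : ℝ → ℝ} (hf : Integrable f) (s : ℝ) : Integrable (G α s f) :=
  (fub_gam h0 h1 hf s).integral_prod_left

lemma fub_verif {α : ℝ} (h0 : 0 < α) (h1 : α < 1) {f : ℝ → ℝ} (hf : Integrable f) {x s : ℝ} (hxs : x < s) :
    Integrable (uncurry fun u v => (kap α x u * gam α s u v) * f v) (volume.prod volume) ∧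
    ∫ u, ∫ v, (kap α x u * gam α s u v) * f v =
      ∫ v, (if s < v then (W α).toReal * (v - x) ^ (α - 1) else 0) * f v := by
  refine fub (P := fun u v => kap α x u * gam α s u v) ?_ ?_ ?_ ?_ hf.1 ?_
  · have : Measurable (kap α x) := (kap_meas α).comp (measurable_const.prodMk measurable_id)
    exact (this.comp measurable_fst).mul (gam_meas α s)
  · intro u v; exact mul_nonneg (kap_nonneg _ _ _) (gam_nonneg _ _ _ _)
  · intro v; split_ifs with h
    · exact mul_nonneg ENNReal.toReal_nonneg (rpow_nonneg (by linarith) _)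
    · rfl
  · intro v
    split_ifs with hv
    · rw [ENNReal.ofReal_mul ENNReal.toReal_nonneg, ofReal_W h0 h1, mul_comm, ← beta2 hxs hv,
        ← lintegral_indicator measurableSet_Ioo]
      refine lintegral_congr fun u => ?_
      by_cases hx : u ∈ Ioo x s
      · rw [indicator_of_mem hx]; simp [gam, kap, hx.1, hx.2, hv]
      · rw [indicator_of_notMem hx]
        have : kap α x u * gam α s u v = 0 := by
          unfold gam kap
          split_ifs with a b
          · exact absurd ⟨a, b.1⟩ hx
          all_goals simp
        simp [this]
    · simp [gam, hv]
  · refine lt_of_le_of_lt (lintegral_mono fun u => ?_)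
      (ite_fin (k := (W α).toReal * (s - x) ^ (α - 1)) (y := s) hf)
    dsimp only
    gcongr
    split_ifs with h
    · gcongr ?_ * ?_
      exact rpow_le_rpow_of_nonpos (by linarith) (by linarith) (by linarith)
    · rfl

lemma verif {α : ℝ} (h0 : 0 < α) (h1 : α < 1) {f : ℝ → ℝ} (hf : Integrable f) (s : ℝ) :
    ∀ᵐ x, 0 < x → (Integrable fun u => kap α x u *
        ((if u < s then f u else 0) + (W α).toReal⁻¹ * G α s f u)) ∧
      J α (fun u => (if u < s then f u else 0) + (W α).toReal⁻¹ * G α s f u) x =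
      if x < s then J α f x else 0 := by
  filter_upwards [J_int h0 h1 hf] with x hx hx0
  have hk := hx hx0
  by_cases hxs : x < s
  · obtain ⟨hi, he⟩ := fub_verif h0 h1 hf hxs
    have e1 : ∀ u, ∫ v, (kap α x u * gam α s u v) * f v = kap α x u * G α s f u := by
      intro u; simp only [mul_assoc]; rw [integral_const_mul]; rfl
    have i2 := hi.integral_prod_left
    simp only [uncurry, e1] at i2
    simp only [e1] at he
    have i1 : Integrable fun u => kap α x u * (if u < s then f u else 0) := by
      have := hk.indicator (measurableSet_Iio (a := s))
      refine this.congr (Filter.Eventually.of_forall fun u => ?_)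
      by_cases hu : u < s <;> simp [hu]
    have i3 := i2.const_mul (W α).toReal⁻¹
    have e2 : ∀ u, kap α x u * ((if u < s then f u else 0) + (W α).toReal⁻¹ * G α s f u) =
      kap α x u * (if u < s then f u else 0) + (W α).toReal⁻¹ * (kap α x u * G α s f u) := by
      intro u; ring
    refine ⟨by simp only [e2]; exact i1.add i3, ?_⟩
    simp only [J, e2, hxs, if_true]
    rw [integral_add i1 i3, integral_const_mul, he, ← integral_const_mul]
    have hW := (W_toReal_pos h0 h1).ne'
    have e3 : (fun v => (W α).toReal⁻¹ * ((if s < v then (W α).toReal * (v - x) ^ (α - 1) else 0) * f v))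
        =ᵐ[volume] fun v => kap α x v * f v - kap α x v * (if v < s then f v else 0) := by
      have : ∀ᵐ v : ℝ, v ≠ s := by simp [ae_iff]
      filter_upwards [this] with v hv
      rcases lt_or_gt_of_ne hv with h | h
      · simp [h, h.not_gt]
      · have : x < v := by linarith
        simp only [h, h.not_gt, if_true, if_false, kap, this]
        field_simp
        ring
    rw [integral_congr_ae e3, integral_sub hk i1]
    ring
  · have : ∀ u, kap α x u * ((if u < s then f u else 0) + (W α).toReal⁻¹ * G α s f u) = 0 := by
      intro u
      by_cases hu : x < u
      · have : ¬ u < s := by linarith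
        simp [G, gam, this]
      · simp [kap, hu]
    simp [J, this, hxs]

/-- The representation formula. -/
lemma repr_formula {α : ℝ} (h0 : 0 < α) (h1 : α < 1) {f g : ℝ → ℝ} (hf : Integrable f) (hg : Integrable g) (s : ℝ)
    (h : ∀ᵐ x, 0 < x → J α g x = if x < s then J α f x else 0) :
    ∀ᵐ x, 0 < x → g x = (if x < s then f x else 0) + (W α).toReal⁻¹ * G α s f x := by
  have hg2 : Integrable fun u => (if u < s then f u else 0) + (W α).toReal⁻¹ * G α s f u := by
    refine Integrable.add ?_ ((G_int h0 h1 hf s).const_mul _)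
    refine (hf.indicator (measurableSet_Iio (a := s))).congr (Filter.Eventually.of_forall fun u => ?_)
    by_cases hu : u < s <;> simp [hu]
  have := uniq h0 h1 (hg.sub hg2) (by
    filter_upwards [J_int h0 h1 hg, verif h0 h1 hf s, h] with x a b c hx
    have a := a hx
    obtain ⟨b1, b2⟩ := b hx
    have c := c hx
    rw [← b2] at c
    simp only [J, Pi.sub_apply, mul_sub] at c ⊢
    rw [integral_sub a b1, c, sub_self])
  filter_upwards [this] with x hx hx0
  have := hx hx0
  simp only [Pi.sub_apply] at this
  linarith

end RepHolder
namespace RepHolder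

open Function

lemma inner_sub {α s y : ℝ} (hy : 0 < y) (h : ℝ → ENNReal) :
    ∫⁻ v, ENNReal.ofReal (gam α s (s - y) v) * h v =
      ∫⁻ z in Ioi (0:ℝ), ENNReal.ofReal (z ^ α / (1 + z)) * h (s + y * z) := by
  have e : ∀ v, ENNReal.ofReal (gam α s (s - y) v) * h v = (Ioi s).indicator (fun v =>
      ENNReal.ofReal (((v - s) / (s - (s - y))) ^ α / (v - (s - y))) * h v) v := by
    intro v
    have : s - y < s := by linarith
    by_cases hv : s < v
    · simp only [gam, this, hv, and_self, if_true, indicator_of_mem (mem_Ioi.2 hv)]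
    · have hv' : v ∉ Ioi s := hv
      rw [indicator_of_notMem hv']
      simp [gam, hv]
  rw [lintegral_congr e, lintegral_indicator measurableSet_Ioi, affine_sub hy]
  refine setLIntegral_congr_fun measurableSet_Ioi fun z hz => ?_
  have hz : 0 < z := hz
  rw [← mul_assoc, ← ENNReal.ofReal_mul hy.le]
  congr 2
  have e1 : (s + y * z - s) / (s - (s - y)) = z := by
    rw [show s + y * z - s = y * z by ring, show s - (s - y) = y by ring]; field_simp
  rw [e1, show s + y * z - (s - y) = y * (1 + z) by ring]
  field_simp

lemma holder_step {α r : ℝ} (hr : 1 < r) {h : ℝ → ENNReal} (hm : Measurable h) :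
    (∫⁻ z in Ioi (0:ℝ), ENNReal.ofReal (z ^ α / (1 + z)) * h z) ^ r ≤
      W (α + 1 - 1 / r) ^ (r - 1) *
        ∫⁻ z in Ioi (0:ℝ), ENNReal.ofReal (z ^ (α - 1 / r) / (1 + z)) * (ENNReal.ofReal z * h z ^ r) := by
  have hr0 : 0 < r := by linarith
  have hc : r.HolderConjugate (r / (r - 1)) := Real.HolderConjugate.conjExponent hr
  set q := r / (r - 1) with hq
  have hq0 : 0 < q := hc.symm.pos
  let w : ℝ → ENNReal := fun z => ENNReal.ofReal (z ^ (α - 1 / r) / (1 + z))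
  have hw : Measurable w := by fun_prop
  have key := ENNReal.lintegral_mul_le_Lp_mul_Lq (volume.restrict (Ioi (0:ℝ))) hc
    (f := fun z => w z ^ (1 / r) * (ENNReal.ofReal z ^ (1 / r) * h z)) (g := fun z => w z ^ (1 / q))
    (by fun_prop) (by fun_prop)
  have e1 : ∫⁻ z in Ioi (0:ℝ), ENNReal.ofReal (z ^ α / (1 + z)) * h z =
      ∫⁻ z in Ioi (0:ℝ), ((fun z => w z ^ (1 / r) * (ENNReal.ofReal z ^ (1 / r) * h z)) *
        (fun z => w z ^ (1 / q))) z := by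
    refine setLIntegral_congr_fun measurableSet_Ioi fun z hz => ?_
    have hz : 0 < z := hz
    simp only [Pi.mul_apply]
    have : w z ^ (1 / r) * (ENNReal.ofReal z ^ (1 / r) * h z) * w z ^ (1 / q)
      = (w z ^ (1 / r) * w z ^ (1 / q)) * ENNReal.ofReal z ^ (1 / r) * h z := by ring
    rw [this, ← ENNReal.rpow_add_of_nonneg _ _ (by positivity) (by positivity), one_div, one_div,
      hc.inv_add_inv_eq_one, ENNReal.rpow_one, ENNReal.ofReal_rpow_of_pos hz,
      ← ENNReal.ofReal_mul (by positivity)]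
    congr 2
    rw [div_mul_eq_mul_div, ← rpow_add hz]
    congr 2
    rw [one_div]; ring
  have e2 : ∀ z, (w z ^ (1 / r) * (ENNReal.ofReal z ^ (1 / r) * h z)) ^ r
      = w z * (ENNReal.ofReal z * h z ^ r) := by
    intro z
    rw [ENNReal.mul_rpow_of_nonneg _ _ hr0.le, ENNReal.mul_rpow_of_nonneg _ _ hr0.le,
      ← ENNReal.rpow_mul, ← ENNReal.rpow_mul, one_div, inv_mul_cancel₀ hr0.ne', ENNReal.rpow_one,
      ENNReal.rpow_one]
  have e3 : ∀ z, (w z ^ (1 / q)) ^ q = w z := by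
    intro z
    rw [← ENNReal.rpow_mul, one_div, inv_mul_cancel₀ hq0.ne', ENNReal.rpow_one]
  have e4 : ∫⁻ z in Ioi (0:ℝ), w z = W (α + 1 - 1 / r) := by
    simp only [W, w]
    rw [show α + 1 - 1 / r - 1 = α - 1 / r by ring]
  simp only [e2, e3, e4] at key
  rw [e1]
  refine (ENNReal.rpow_le_rpow key hr0.le).trans (le_of_eq ?_)
  rw [ENNReal.mul_rpow_of_nonneg _ _ hr0.le, ← ENNReal.rpow_mul, ← ENNReal.rpow_mul, one_div,
    inv_mul_cancel₀ hr0.ne', ENNReal.rpow_one, mul_comm]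
  congr 1
  · congr 1
    rw [hq]
    field_simp
  · simp only [w, one_div]

lemma hil {α r s : ℝ} (hr : 1 < r) {h : ℝ → ENNReal} (hm : Measurable h) :
    ∫⁻ x in Iio s, (∫⁻ v, ENNReal.ofReal (gam α s x v) * h v) ^ r ≤
      W (α + 1 - 1 / r) ^ r * ∫⁻ v in Ioi s, h v ^ r := by
  have hr0 : 0 < r := by linarith
  rw [affine_refl one_pos]
  simp only [ENNReal.ofReal_one, one_mul]
  calc ∫⁻ y in Ioi (0:ℝ), (∫⁻ v, ENNReal.ofReal (gam α s (s - y) v) * h v) ^ r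
      ≤ ∫⁻ y in Ioi (0:ℝ), W (α + 1 - 1 / r) ^ (r - 1) *
        ∫⁻ z in Ioi (0:ℝ), ENNReal.ofReal (z ^ (α - 1 / r) / (1 + z)) *
          (ENNReal.ofReal z * h (s + y * z) ^ r) := by
        refine setLIntegral_mono' measurableSet_Ioi fun y hy => ?_
        rw [inner_sub hy]
        exact holder_step hr (h := fun z => h (s + y * z)) (by fun_prop)
    _ = W (α + 1 - 1 / r) ^ (r - 1) * ∫⁻ y in Ioi (0:ℝ),
        ∫⁻ z in Ioi (0:ℝ), ENNReal.ofReal (z ^ (α - 1 / r) / (1 + z)) *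
          (ENNReal.ofReal z * h (s + y * z) ^ r) := by
        rw [lintegral_const_mul]
        apply Measurable.lintegral_prod_right
        unfold uncurry
        fun_prop
    _ = W (α + 1 - 1 / r) ^ (r - 1) * ∫⁻ z in Ioi (0:ℝ),
        ∫⁻ y in Ioi (0:ℝ), ENNReal.ofReal (z ^ (α - 1 / r) / (1 + z)) *
          (ENNReal.ofReal z * h (s + y * z) ^ r) := by
        rw [lintegral_lintegral_swap]
        unfold uncurry
        fun_prop
    _ = W (α + 1 - 1 / r) ^ (r - 1) * ∫⁻ z in Ioi (0:ℝ),
        ENNReal.ofReal (z ^ (α - 1 / r) / (1 + z)) * ∫⁻ v in Ioi s, h v ^ r := by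
        congr 1
        refine setLIntegral_congr_fun measurableSet_Ioi fun z hz => ?_
        have hz : 0 < z := hz
        rw [lintegral_const_mul' _ _ ENNReal.ofReal_ne_top, affine_sub hz (s := s)]
        congr 1
        refine lintegral_congr fun y => ?_
        rw [mul_comm y z]
    _ = W (α + 1 - 1 / r) ^ r * ∫⁻ v in Ioi s, h v ^ r := by
        rw [lintegral_mul_const _ (by fun_prop)]
        have : ∫⁻ z in Ioi (0:ℝ), ENNReal.ofReal (z ^ (α - 1 / r) / (1 + z)) = W (α + 1 - 1 / r) := by
          simp only [W]
          rw [show α + 1 - 1 / r - 1 = α - 1 / r by ring]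
        rw [this, ← mul_assoc]
        congr 1
        nth_rw 2 [← ENNReal.rpow_one (W (α + 1 - 1 / r))]
        rw [← ENNReal.rpow_add_of_nonneg _ _ (by linarith) zero_le_one]
        congr 1; ring

lemma g_int {T α : ℝ} (hα : α < 1 / 2) {φ : ℝ → ℝ}
    (hφ : MemLp φ 2 (volume.restrict (Icc 0 T))) :
    Integrable ((Ioo 0 T).indicator fun u => u ^ (-α) * φ u) := by
  rw [integrable_indicator_iff measurableSet_Ioo]
  have h1 : MemLp (fun u : ℝ => u ^ (-α)) 2 (volume.restrict (Ioo 0 T)) := by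
    rw [memLp_two_iff_integrable_sq (by fun_prop)]
    rcases le_or_gt T 0 with hT | hT
    · rw [Ioo_eq_empty (by linarith)]; simp
    have := (intervalIntegral.intervalIntegrable_rpow' (a := 0) (b := T) (r := -α * 2) (by linarith))
    rw [intervalIntegrable_iff_integrableOn_Ioo_of_le hT.le] at this
    refine IntegrableOn.congr_fun this (fun u hu => ?_) measurableSet_Ioo
    rw [rpow_mul hu.1.le]
    simp
  have h2 : MemLp φ 2 (volume.restrict (Ioo 0 T)) :=
    hφ.mono_measure (Measure.restrict_mono Ioo_subset_Icc_self le_rfl)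
  exact h1.integrable_mul h2

lemma frac_J {T α x : ℝ} (hx : 0 < x) (φ : ℝ → ℝ) :
    fracInt T α (fun s => s ^ (-α) * φ s) x =
      1 / Real.Gamma α * J α ((Ioo 0 T).indicator fun u => u ^ (-α) * φ u) x := by
  unfold fracInt J
  rw [← integral_indicator measurableSet_Ioo]
  congr 1
  refine integral_congr_ae (Filter.Eventually.of_forall fun u => ?_)
  simp only
  by_cases hu : u ∈ Ioo x T
  · have hu' : u ∈ Ioo 0 T := ⟨hx.trans hu.1, hu.2⟩
    rw [indicator_of_mem hu, indicator_of_mem hu', kap, if_pos hu.1]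
    ring
  · rw [indicator_of_notMem hu]
    by_cases h : x < u
    · have hu' : u ∉ Ioo 0 T := fun h' => hu ⟨h, h'.2⟩
      rw [indicator_of_notMem hu', mul_zero]
    · simp [kap, h]

lemma key {T α : ℝ} (h0 : 0 < α) (hα : α < 1 / 2) {f φ ψ : ℝ → ℝ} {s : ℝ} (hs : 0 ≤ s)
    (hφ : memLambda T α f φ) (hψ : memLambda T α (indicator (Icc 0 s) f) ψ) :
    ∀ᵐ x ∂(volume.restrict (Icc 0 T)), (s < x → ψ x = 0) ∧
      (x < s → ‖ψ x - φ x‖ₑ ≤ ENNReal.ofReal (W α).toReal⁻¹ *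
        ∫⁻ v, ENNReal.ofReal (gam α s x v) * (Ioo s T).indicator (fun v => ‖φ v‖ₑ) v) := by
  have h1 : α < 1 := by linarith
  have hJ : ∀ᵐ x, 0 < x → J α ((Ioo 0 T).indicator fun u => u ^ (-α) * ψ u) x =
      if x < s then J α ((Ioo 0 T).indicator fun u => u ^ (-α) * φ u) x else 0 := by
    have a := hφ.2
    have b := hψ.2
    rw [ae_restrict_iff' measurableSet_Icc] at a b
    have c : ∀ᵐ v : ℝ, v ≠ s := by simp [ae_iff]
    filter_upwards [a, b, c] with x a b c hx
    by_cases hxT : x ≤ T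
    · have a := a ⟨hx.le, hxT⟩
      have b := b ⟨hx.le, hxT⟩
      rw [frac_J hx] at a b
      have hG := (Real.Gamma_pos_of_pos h0).ne'
      have hxa := (rpow_pos_of_pos hx α).ne'
      by_cases hxs : x < s
      · rw [if_pos hxs]
        have hm : x ∈ Icc 0 s := ⟨hx.le, hxs.le⟩
        rw [indicator_of_mem hm, a] at b
        have b := mul_left_cancel₀ hxa b
        exact (mul_left_cancel₀ (one_div_ne_zero hG) b).symm
      · rw [if_neg hxs]
        have : x ∉ Icc 0 s := fun h => hxs (lt_of_le_of_ne h.2 c)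
        rw [indicator_of_notMem this] at b
        have b := (mul_eq_zero.1 b.symm).resolve_left hxa
        exact (mul_eq_zero.1 b).resolve_left (one_div_ne_zero hG)
    · have z : ∀ χ : ℝ → ℝ, J α ((Ioo 0 T).indicator fun u => u ^ (-α) * χ u) x = 0 := by
        intro χ
        unfold J
        refine integral_eq_zero_of_ae (Filter.Eventually.of_forall fun u => ?_)
        simp only [Pi.zero_apply]
        by_cases h : x < u
        · have hu' : u ∉ Ioo 0 T := fun h' => hxT (h.trans h'.2).le
          rw [indicator_of_notMem hu', mul_zero]
        · simp [kap, h]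
      simp [z]
  have main := repr_formula h0 h1 (g_int hα hφ.1) (g_int hα hψ.1) s hJ
  have c0 : ∀ᵐ v : ℝ, v ≠ 0 := by simp [ae_iff]
  have cT : ∀ᵐ v : ℝ, v ≠ T := by simp [ae_iff]
  rw [ae_restrict_iff' measurableSet_Icc]
  filter_upwards [main, c0, cT] with x hx c0 cT hxI
  have hx0 : 0 < x := lt_of_le_of_ne hxI.1 (Ne.symm c0)
  have hxI' : x ∈ Ioo 0 T := ⟨hx0, lt_of_le_of_ne hxI.2 cT⟩
  have hx := hx hx0
  rw [indicator_of_mem hxI', indicator_of_mem hxI'] at hx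
  have hxp : 0 < x ^ α := rpow_pos_of_pos hx0 _
  rw [rpow_neg hx0.le] at hx
  constructor
  · intro hsx
    have hG0 : G α s ((Ioo 0 T).indicator fun u => u ^ (-α) * φ u) x = 0 := by
      simp [G, gam, hsx.not_gt]
    rw [if_neg hsx.not_gt, hG0] at hx
    simp only [mul_zero, add_zero] at hx
    exact (mul_eq_zero.1 hx).resolve_left (inv_ne_zero hxp.ne')
  · intro hxs
    rw [if_pos hxs] at hx
    have e : ψ x - φ x = (W α).toReal⁻¹ *
        ∫ v, x ^ α * (gam α s x v * (Ioo 0 T).indicator (fun u => u ^ (-α) * φ u) v) := by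
      rw [integral_const_mul]
      unfold G at hx
      have := congrArg (fun r => x ^ α * r) hx
      simp only [mul_add] at this
      rw [mul_inv_cancel_left₀ hxp.ne', mul_inv_cancel_left₀ hxp.ne'] at this
      rw [this]; ring
    rw [e, enorm_mul, Real.enorm_eq_ofReal (inv_nonneg.2 ENNReal.toReal_nonneg)]
    gcongr
    refine (enorm_integral_le_lintegral_enorm _).trans (lintegral_mono fun v => ?_)
    simp only
    by_cases hv : v ∈ Ioo s T
    · have hv0 : 0 < v := by linarith [hv.1]
      have hm : v ∈ Ioo 0 T := ⟨hv0, hv.2⟩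
      rw [indicator_of_mem hv, indicator_of_mem hm,
        Real.enorm_eq_ofReal_abs, Real.enorm_eq_ofReal_abs, ← ENNReal.ofReal_mul (gam_nonneg _ _ _ _)]
      apply ENNReal.ofReal_le_ofReal
      have hvp : 0 < v ^ α := rpow_pos_of_pos hv0 _
      rw [abs_mul, abs_mul, abs_mul, abs_of_pos hxp, abs_of_nonneg (gam_nonneg _ _ _ _),
        rpow_neg hv0.le, abs_of_pos (inv_pos.2 hvp)]
      have hle : x ^ α ≤ v ^ α := rpow_le_rpow hx0.le (by linarith [hv.1]) h0.le
      have hle' : x ^ α * (v ^ α)⁻¹ ≤ 1 := by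
        rw [← div_eq_mul_inv]; exact (div_le_one hvp).2 hle
      have hnn : 0 ≤ gam α s x v * |φ v| := mul_nonneg (gam_nonneg _ _ _ _) (abs_nonneg _)
      calc x ^ α * (gam α s x v * ((v ^ α)⁻¹ * |φ v|))
          = (x ^ α * (v ^ α)⁻¹) * (gam α s x v * |φ v|) := by ring
        _ ≤ 1 * (gam α s x v * |φ v|) := by gcongr
        _ = _ := one_mul _
    · rw [indicator_of_notMem hv]
      by_cases hsv : s < v
      · have : v ∉ Ioo 0 T := fun h => hv ⟨hsv, h.2⟩
        rw [indicator_of_notMem this]; simp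
      · simp [gam, hsv]

/-- the `L^q` bound -/
lemma diff_bound {T α : ℝ} (h0 : 0 < α) (hα : α < 1 / 2) {f φ ψ : ℝ → ℝ} {s : ℝ} (hs : 0 ≤ s)
    (hsT : s ≤ T)
    (hφ : memLambda T α f φ) (hψ : memLambda T α (indicator (Icc 0 s) f) ψ)
    {q : ENNReal} (hq : 1 < q.toReal) :
    eLpNorm (ψ - φ) q (volume.restrict (Ioo 0 s)) ≤
      ENNReal.ofReal (W α).toReal⁻¹ * W (α + 1 - 1 / q.toReal) *
        eLpNorm φ q (volume.restrict (Ioo s T)) := by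
  have hq0 : q ≠ 0 := by rintro rfl; simp at hq; linarith
  have hqt : q ≠ ⊤ := by rintro rfl; simp at hq; linarith
  have hr0 : 0 < q.toReal := by linarith
  set r := q.toReal with hr
  have hk := key h0 hα hs hφ hψ
  have hmφ : AEStronglyMeasurable φ (volume.restrict (Ioo s T)) :=
    hφ.1.1.mono_measure (Measure.restrict_mono
      (show Ioo s T ⊆ Icc 0 T from fun x hx => ⟨hs.trans hx.1.le, hx.2.le⟩) le_rfl)
  -- measurable representative
  let h : ℝ → ENNReal := (Ioo s T).indicator (fun v => ‖hmφ.mk φ v‖ₑ)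
  have hm : Measurable h := by
    refine Measurable.indicator ?_ measurableSet_Ioo
    exact hmφ.stronglyMeasurable_mk.enorm
  have hhe : (Ioo s T).indicator (fun v => ‖φ v‖ₑ) =ᵐ[volume] h := by
    have := hmφ.ae_eq_mk
    rw [Filter.EventuallyEq, ae_restrict_iff' measurableSet_Ioo] at this
    filter_upwards [this] with v hv
    by_cases hvm : v ∈ Ioo s T
    · simp only [h, indicator_of_mem hvm, hv hvm]
    · simp only [h, indicator_of_notMem hvm]
  have hk2 : ∀ᵐ x ∂(volume.restrict (Ioo 0 s)), ‖(ψ - φ) x‖ₑ ^ r ≤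
      ENNReal.ofReal (W α).toReal⁻¹ ^ r *
        (∫⁻ v, ENNReal.ofReal (gam α s x v) * h v) ^ r := by
    have := ae_mono (Measure.restrict_mono (μ := volume)
      (show Ioo 0 s ⊆ Icc 0 T from fun x hx => ⟨hx.1.le, hx.2.le.trans hsT⟩) le_rfl) hk
    filter_upwards [this, ae_restrict_mem measurableSet_Ioo] with x hx hxs
    have hx := hx.2 hxs.2
    rw [← ENNReal.mul_rpow_of_nonneg _ _ hr0.le]
    refine ENNReal.rpow_le_rpow (hx.trans (le_of_eq ?_)) hr0.le
    congr 1
    refine lintegral_congr_ae ?_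
    filter_upwards [hhe] with v hv
    rw [hv]
  rw [eLpNorm_eq_lintegral_rpow_enorm_toReal hq0 hqt, eLpNorm_eq_lintegral_rpow_enorm_toReal hq0 hqt,
    ← hr, one_div r, ENNReal.rpow_inv_le_iff hr0, ENNReal.mul_rpow_of_nonneg _ _ hr0.le,
    ENNReal.mul_rpow_of_nonneg _ _ hr0.le, ← ENNReal.rpow_mul, inv_mul_cancel₀ hr0.ne',
    ENNReal.rpow_one, mul_assoc]
  refine (lintegral_mono_ae hk2).trans ?_
  rw [lintegral_const_mul' _ _ (ENNReal.rpow_ne_top_of_nonneg hr0.le ENNReal.ofReal_ne_top)]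
  gcongr
  refine (lintegral_mono_set (show Ioo 0 s ⊆ Iio s from fun x hx => hx.2)).trans ?_
  refine (hil hq hm).trans ?_
  rw [one_div]
  refine mul_le_mul' le_rfl ?_
  refine (lintegral_mono_ae (g := (Ioo s T).indicator fun v => ‖φ v‖ₑ ^ r) ?_).trans ?_
  · filter_upwards [ae_restrict_of_ae hhe] with v hv
    rw [← hv]
    by_cases hvm : v ∈ Ioo s T
    · simp only [indicator_of_mem hvm, le_refl]
    · simp only [indicator_of_notMem hvm, ENNReal.zero_rpow_of_pos hr0, le_refl]
  · refine (setLIntegral_le_lintegral _ _).trans (le_of_eq ?_)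
    rw [lintegral_indicator measurableSet_Ioo]

end RepHolder
namespace RepHolder

open Function

lemma lintegral_fin_prod {μ : Measure ℝ} [SigmaFinite μ] : ∀ {n : ℕ} (g : Fin n → ℝ → ENNReal)
    (_ : ∀ i, AEMeasurable (g i) μ),
    ∫⁻ u : Fin n → ℝ, ∏ i, g i (u i) ∂(Measure.pi fun _ => μ) = ∏ i, ∫⁻ x, g i x ∂μ := by
  intro n
  induction n with
  | zero =>
    intro g _
    simp [Measure.pi_of_empty]
  | succ n ih =>
    intro g hg
    have mp := measurePreserving_piFinSuccAbove (fun _ : Fin (n + 1) => μ) 0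
    have h1 := mp.lintegral_comp_emb (MeasurableEquiv.measurableEmbedding _)
      (fun z : ℝ × (Fin n → ℝ) => g 0 z.1 * ∏ i : Fin n, g i.succ (z.2 i))
    have hm : AEMeasurable (fun w : Fin n → ℝ => ∏ i : Fin n, g i.succ (w i)) (Measure.pi fun _ => μ) := by
      refine Finset.aemeasurable_fun_prod _ fun i _ => ?_
      exact (hg i.succ).comp_quasiMeasurePreserving (Measure.quasiMeasurePreserving_eval (fun _ => μ) i)
    rw [lintegral_prod_mul (hg 0) hm, ih _ fun i => hg i.succ] at h1
    rw [Fin.prod_univ_succ, ← h1]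
    refine lintegral_congr fun u => ?_
    rw [Fin.prod_univ_succ]
    rfl

lemma eLpNorm_tensor {μ : Measure ℝ} [SigmaFinite μ] {n : ℕ} (g : Fin n → ℝ → ℝ)
    (hg : ∀ i, AEStronglyMeasurable (g i) μ) :
    eLpNorm (fun u : Fin n → ℝ => ∏ i, g i (u i)) 2 (Measure.pi fun _ => μ) =
      ∏ i, eLpNorm (g i) 2 μ := by
  have h2 : (2 : ENNReal) ≠ 0 := two_ne_zero
  have h3 : (2 : ENNReal) ≠ ⊤ := ENNReal.ofNat_ne_top
  simp only [eLpNorm_eq_lintegral_rpow_enorm_toReal h2 h3]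
  rw [ENNReal.prod_rpow_of_nonneg (by positivity)]
  congr 1
  rw [← lintegral_fin_prod (fun i x => ‖g i x‖ₑ ^ (2 : ENNReal).toReal)
    fun i => (hg i).enorm.pow_const _]
  refine lintegral_congr fun u => ?_
  rw [ENNReal.prod_rpow_of_nonneg (by positivity)]
  congr 1
  simp only [enorm_eq_nnnorm, nnnorm_prod]
  push_cast
  rfl

/-- telescoping factors -/
noncomputable def tel (n : ℕ) (a b : ℝ → ℝ) (i j : Fin n) : ℝ → ℝ :=
  if j < i then a else if j = i then a - b else b

lemma tel_sum (a b : ℝ → ℝ) : ∀ (n : ℕ) (u : Fin n → ℝ),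
    (∏ i, a (u i)) - ∏ i, b (u i) = ∑ i, ∏ j, tel n a b i j (u j) := by
  intro n
  induction n with
  | zero => intro u; simp
  | succ n ih =>
    intro u
    have h := ih (fun i => u i.succ)
    rw [Fin.sum_univ_succ]
    simp only [Fin.prod_univ_succ (n := n)]
    have e1 : ∀ i j : Fin n, tel (n + 1) a b i.succ j.succ = tel n a b i j := by
      intro i j; simp [tel]
    have e2 : ∀ i : Fin n, tel (n + 1) a b i.succ 0 = a := by
      intro i; simp [tel]
    have e3 : ∀ j : Fin n, tel (n + 1) a b 0 j.succ = b := by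
      intro j; simp [tel]
    have e4 : tel (n + 1) a b 0 0 = a - b := by simp [tel]
    simp only [e1, e2, e3, e4, ← Finset.mul_sum, ← h, Pi.sub_apply]
    ring

lemma tensor_diff {μ : Measure ℝ} [SigmaFinite μ] {n : ℕ} {a b : ℝ → ℝ}
    (ha : AEStronglyMeasurable a μ) (hb : AEStronglyMeasurable b μ) {A D : ENNReal}
    (hA : eLpNorm a 2 μ ≤ A) (hB : eLpNorm b 2 μ ≤ A) (hD : eLpNorm (a - b) 2 μ ≤ D) :
    eLpNorm (fun u : Fin n → ℝ => (∏ i, a (u i)) - ∏ i, b (u i)) 2 (Measure.pi fun _ => μ) ≤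
      n * (D * A ^ (n - 1)) := by
  have hm : ∀ i j, AEStronglyMeasurable (tel n a b i j) μ := by
    intro i j
    unfold tel
    split_ifs
    exacts [ha, ha.sub hb, hb]
  have e : (fun u : Fin n → ℝ => (∏ i, a (u i)) - ∏ i, b (u i)) =
      ∑ i, fun u : Fin n → ℝ => ∏ j, tel n a b i j (u j) := by
    funext u
    rw [tel_sum, Finset.sum_apply]
  rw [e]
  refine (eLpNorm_sum_le (fun i _ => ?_) one_le_two).trans ?_
  · refine Finset.aestronglyMeasurable_fun_prod _ fun j _ => ?_
    exact (hm i j).comp_quasiMeasurePreserving (Measure.quasiMeasurePreserving_eval (fun _ => μ) j)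
  · refine (Finset.sum_le_card_nsmul Finset.univ _ (D * A ^ (n - 1)) fun i _ => ?_).trans ?_
    · rw [eLpNorm_tensor _ (hm i), ← Finset.mul_prod_erase _ _ (Finset.mem_univ i)]
      refine mul_le_mul' ?_ ?_
      · simpa [tel] using hD
      · refine (Finset.prod_le_pow_card _ _ A fun j hj => ?_).trans ?_
        · have : j ≠ i := Finset.ne_of_mem_erase hj
          unfold tel
          split_ifs
          exacts [hA, hB]
        · simp
    · simp

/-- operator constant -/
noncomputable def K (α : ℝ) (q : ENNReal) : ENNReal :=
  ENNReal.ofReal (W α).toReal⁻¹ * W (α + 1 - 1 / q.toReal)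

lemma K_ne_top {α : ℝ} (h0 : 0 < α) {q : ENNReal} (hq : 1 < q.toReal) (hαq : α < 1 / q.toReal) :
    K α q ≠ ⊤ := by
  refine ENNReal.mul_ne_top ENNReal.ofReal_ne_top (W_lt_top ?_ ?_).ne
  · have : 1 / q.toReal < 1 := by rw [div_lt_one (by linarith)]; exact hq
    linarith
  · linarith

lemma one_le_of_toReal {q : ENNReal} (hq : 1 < q.toReal) : 1 ≤ q := by
  by_contra! h
  have := ENNReal.toReal_mono ENNReal.one_ne_top h.le
  simp at this
  linarith

lemma trunc_bound {T α : ℝ} (h0 : 0 < α) (hα : α < 1 / 2) {f φ ψ : ℝ → ℝ} {s : ℝ} (hs : 0 ≤ s)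
    (hsT : s ≤ T) (hφ : memLambda T α f φ) (hψ : memLambda T α (indicator (Icc 0 s) f) ψ)
    {q : ENNReal} (hq : 1 < q.toReal) :
    eLpNorm ψ q (volume.restrict (Icc 0 T)) ≤
      (1 + K α q) * eLpNorm φ q (volume.restrict (Icc 0 T)) := by
  have hsub : Ioo 0 s ⊆ Icc 0 T := fun x hx => ⟨hx.1.le, hx.2.le.trans hsT⟩
  have hsub2 : Ioo s T ⊆ Icc 0 T := fun x hx => ⟨hs.trans hx.1.le, hx.2.le⟩
  have hle := Measure.restrict_mono (μ := (volume : Measure ℝ)) hsub le_rfl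
  have hle2 := Measure.restrict_mono (μ := (volume : Measure ℝ)) hsub2 le_rfl
  have e : ψ =ᵐ[volume.restrict (Icc 0 T)] (Ioo 0 s).indicator ψ := by
    have c0 : ∀ᵐ v : ℝ, v ≠ 0 := by simp [ae_iff]
    have cs : ∀ᵐ v : ℝ, v ≠ s := by simp [ae_iff]
    filter_upwards [key h0 hα hs hφ hψ, ae_restrict_of_ae c0, ae_restrict_of_ae cs,
      ae_restrict_mem measurableSet_Icc] with x hx c0 cs hxI
    by_cases hxs : x < s
    · have : x ∈ Ioo 0 s := ⟨lt_of_le_of_ne hxI.1 (Ne.symm c0), hxs⟩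
      rw [indicator_of_mem this]
    · have : x ∉ Ioo 0 s := fun h => hxs h.2
      rw [indicator_of_notMem this]
      exact hx.1 (lt_of_le_of_ne (not_lt.1 hxs) (Ne.symm cs))
  rw [eLpNorm_congr_ae e, eLpNorm_indicator_eq_eLpNorm_restrict measurableSet_Ioo,
    Measure.restrict_restrict measurableSet_Ioo, inter_eq_left.2 hsub]
  have e2 : ψ = φ + (ψ - φ) := by simp
  have m1 := hφ.1.1.mono_measure hle
  have m2 := hψ.1.1.mono_measure hle
  calc eLpNorm ψ q (volume.restrict (Ioo 0 s))
      = eLpNorm (φ + (ψ - φ)) q (volume.restrict (Ioo 0 s)) := by rw [← e2]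
    _ ≤ eLpNorm φ q (volume.restrict (Ioo 0 s)) + eLpNorm (ψ - φ) q (volume.restrict (Ioo 0 s)) :=
        eLpNorm_add_le m1 (m2.sub m1) (one_le_of_toReal hq)
    _ ≤ eLpNorm φ q (volume.restrict (Icc 0 T)) +
        K α q * eLpNorm φ q (volume.restrict (Icc 0 T)) := by
        refine add_le_add (eLpNorm_mono_measure _ hle) ?_
        refine (diff_bound h0 hα hs hsT hφ hψ hq).trans ?_
        exact mul_le_mul' le_rfl (eLpNorm_mono_measure _ hle2)
    _ = _ := by ring

lemma indicator_trunc {b : ℝ → ℝ} {s t : ℝ} (hst : s ≤ t) :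
    indicator (Icc 0 s) (indicator (Icc 0 t) b) = indicator (Icc 0 s) b := by
  rw [indicator_indicator, inter_eq_left.2 (Icc_subset_Icc_right hst)]

lemma diff_two {T α : ℝ} (h0 : 0 < α) (hα : α < 1 / 2) {b φb φs φt : ℝ → ℝ} {s t : ℝ} (hs : 0 ≤ s)
    (hst : s ≤ t) (htT : t ≤ T) (hb : memLambda T α b φb)
    (hφs : memLambda T α (indicator (Icc 0 s) b) φs)
    (hφt : memLambda T α (indicator (Icc 0 t) b) φt) {q : ENNReal} (hq : 2 ≤ q) (hqt : q ≠ ⊤) :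
    eLpNorm (φt - φs) 2 (volume.restrict (Icc 0 T)) ≤
      (1 + K α 2) * ((1 + K α q) * eLpNorm φb q (volume.restrict (Icc 0 T)) *
        ENNReal.ofReal (t - s) ^ (1 / 2 - 1 / q.toReal)) := by
  have hq1 : 1 < q.toReal := by
    have := ENNReal.toReal_mono hqt hq
    simp at this
    linarith
  have hsT := hst.trans htT
  have hφs' := hφs
  rw [← indicator_trunc hst] at hφs'
  have hsub : Ioo 0 s ⊆ Icc 0 T := fun x hx => ⟨hx.1.le, hx.2.le.trans hsT⟩
  have hsub2 : Ioo s T ⊆ Icc 0 T := fun x hx => ⟨hs.trans hx.1.le, hx.2.le⟩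
  have hsub3 : Ioc s t ⊆ Icc 0 T := fun x hx => ⟨hs.trans hx.1.le, hx.2.trans htT⟩
  have hle := Measure.restrict_mono (μ := (volume : Measure ℝ)) hsub le_rfl
  have hle2 := Measure.restrict_mono (μ := (volume : Measure ℝ)) hsub2 le_rfl
  have hle3 := Measure.restrict_mono (μ := (volume : Measure ℝ)) hsub3 le_rfl
  have e : φt - φs =ᵐ[volume.restrict (Icc 0 T)]
      (Ioo 0 s).indicator (φt - φs) + (Ioo s T).indicator φt := by
    have c0 : ∀ᵐ v : ℝ, v ≠ 0 := by simp [ae_iff]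
    have cs : ∀ᵐ v : ℝ, v ≠ s := by simp [ae_iff]
    have cT : ∀ᵐ v : ℝ, v ≠ T := by simp [ae_iff]
    filter_upwards [key h0 hα hs hφt hφs', ae_restrict_of_ae c0, ae_restrict_of_ae cs,
      ae_restrict_of_ae cT, ae_restrict_mem measurableSet_Icc] with x hx c0 cs cT hxI
    rw [Pi.add_apply]
    by_cases hxs : x < s
    · have h1 : x ∈ Ioo 0 s := ⟨lt_of_le_of_ne hxI.1 (Ne.symm c0), hxs⟩
      have h2 : x ∉ Ioo s T := fun h => hxs.not_gt h.1
      rw [indicator_of_mem h1, indicator_of_notMem h2, add_zero]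
    · have hsx : s < x := lt_of_le_of_ne (not_lt.1 hxs) (Ne.symm cs)
      have h1 : x ∉ Ioo 0 s := fun h => hxs h.2
      have h2 : x ∈ Ioo s T := ⟨hsx, lt_of_le_of_ne hxI.2 cT⟩
      rw [indicator_of_notMem h1, indicator_of_mem h2, Pi.sub_apply, hx.1 hsx]
      ring
  have e' : φt =ᵐ[volume.restrict (Ioo s T)] (Ioc s t).indicator φt := by
    filter_upwards [ae_mono hle2 (key h0 hα (hs.trans hst) hb hφt),
      ae_restrict_mem measurableSet_Ioo] with x hx hxI
    by_cases hxt : x ≤ t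
    · have : x ∈ Ioc s t := ⟨hxI.1, hxt⟩
      rw [indicator_of_mem this]
    · have : x ∉ Ioc s t := fun h => hxt h.2
      rw [indicator_of_notMem this]
      exact hx.1 (not_le.1 hxt)
  have hst2 : eLpNorm φt 2 (volume.restrict (Ioo s T)) ≤
      (1 + K α q) * eLpNorm φb q (volume.restrict (Icc 0 T)) *
        ENNReal.ofReal (t - s) ^ (1 / 2 - 1 / q.toReal) := by
    rw [eLpNorm_congr_ae e', eLpNorm_indicator_eq_eLpNorm_restrict measurableSet_Ioc,
      Measure.restrict_restrict measurableSet_Ioc]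
    refine (eLpNorm_mono_measure _ (Measure.restrict_mono inter_subset_left le_rfl)).trans ?_
    refine (eLpNorm_le_eLpNorm_mul_rpow_measure_univ hq (hφt.1.1.mono_measure hle3)).trans ?_
    refine mul_le_mul' ?_ (le_of_eq ?_)
    · exact (eLpNorm_mono_measure _ hle3).trans
        (trunc_bound h0 hα (hs.trans hst) htT hb hφt hq1)
    · simp
  rw [eLpNorm_congr_ae e]
  refine (eLpNorm_add_le ((hφt.1.1.sub hφs.1.1).indicator measurableSet_Ioo)
    (hφt.1.1.indicator measurableSet_Ioo) one_le_two).trans ?_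
  rw [eLpNorm_indicator_eq_eLpNorm_restrict measurableSet_Ioo,
    eLpNorm_indicator_eq_eLpNorm_restrict measurableSet_Ioo,
    Measure.restrict_restrict measurableSet_Ioo, Measure.restrict_restrict measurableSet_Ioo,
    inter_eq_left.2 hsub, inter_eq_left.2 hsub2, eLpNorm_sub_comm]
  have hd := diff_bound h0 hα hs hsT hφt hφs' (q := 2) (by simp)
  calc _ ≤ K α 2 * eLpNorm φt 2 (volume.restrict (Ioo s T)) +
        eLpNorm φt 2 (volume.restrict (Ioo s T)) := add_le_add hd le_rfl
    _ = (1 + K α 2) * eLpNorm φt 2 (volume.restrict (Ioo s T)) := by ring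
    _ ≤ _ := mul_le_mul' le_rfl hst2

lemma two_bound {T α : ℝ} (h0 : 0 < α) (hα : α < 1 / 2) {b φb φs : ℝ → ℝ} {s : ℝ} (hs : 0 ≤ s)
    (hsT : s ≤ T) (hb : memLambda T α b φb)
    (hφs : memLambda T α (indicator (Icc 0 s) b) φs) {q : ENNReal} (hq : 2 ≤ q) :
    eLpNorm φs 2 (volume.restrict (Icc 0 T)) ≤
      (1 + K α 2) * (eLpNorm φb q (volume.restrict (Icc 0 T)) *
        ENNReal.ofReal T ^ (1 / 2 - 1 / q.toReal)) := by
  refine (trunc_bound h0 hα hs hsT hb hφs (q := 2) (by simp)).trans (mul_le_mul' le_rfl ?_)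
  refine (eLpNorm_le_eLpNorm_mul_rpow_measure_univ hq hb.1.1).trans (le_of_eq ?_)
  simp

end RepHolder
/-- Lemma 4.9.1: Hölder estimate for tensor powers of the representatives of
`b·1_{[0,t]}`: `‖φ_t^{⊗n} − φ_s^{⊗n}‖_{L²([0,T]^n)} ≤ 2^{n-1} C^n ‖φ_b‖_{L^p}^n (t-s)^δ`. -/
theorem rep_tensor_holder_bound (T α p : ℝ) (hT : 0 < T) (hα : α ∈ Set.Ioo (0 : ℝ) (1 / 2))
    (hp : p ∈ Set.Ioo 2 (1 / α)) (δ : ℝ) (hδ0 : 0 < δ)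
    (hδ : δ < min (min ((p - 2) / (2 * p)) α) ((1 - α * p) / p)) :
    ∃ C : ℝ, 0 < C ∧ ∀ b φb : ℝ → ℝ, memLambda T α b φb →
      MemLp φb (ENNReal.ofReal p) (volume.restrict (Set.Icc 0 T)) →
      ∀ n : ℕ, 1 ≤ n → ∀ s t : ℝ, 0 ≤ s → s ≤ t → t ≤ T →
      ∀ φs φt : ℝ → ℝ,
        memLambda T α (Set.indicator (Set.Icc 0 s) b) φs →
        memLambda T α (Set.indicator (Set.Icc 0 t) b) φt →
        eLpNorm (fun u : Fin n → ℝ => (∏ i, φt (u i)) - ∏ i, φs (u i)) 2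
            (Measure.pi fun _ : Fin n => volume.restrict (Set.Icc 0 T)) ≤
          ENNReal.ofReal ((2 : ℝ) ^ (n - 1) * C ^ n *
            (eLpNorm φb (ENNReal.ofReal p) (volume.restrict (Set.Icc 0 T))).toReal ^ n *
            (t - s) ^ δ) := by
  obtain ⟨h0, hα⟩ := hα
  obtain ⟨hp2, hpα⟩ := hp
  have hp0 : 0 < p := by linarith
  have hαp : α < 1 / p := by
    rw [lt_div_iff₀ hp0]
    rw [lt_div_iff₀ h0] at hpα
    linarith
  set q : ENNReal := ENNReal.ofReal p with hqdef
  have hqr : q.toReal = p := ENNReal.toReal_ofReal hp0.le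
  have hqt : q ≠ ⊤ := ENNReal.ofReal_ne_top
  have hq2 : 2 ≤ q := by
    rw [hqdef, ← ENNReal.ofReal_ofNat]
    exact ENNReal.ofReal_le_ofReal hp2.le
  set γ : ℝ := 1 / 2 - 1 / p with hγ
  have hδγ : δ < γ := by
    have h1 : δ < (p - 2) / (2 * p) :=
      lt_of_lt_of_le hδ ((min_le_left _ _).trans (min_le_left _ _))
    have h2 : (p - 2) / (2 * p) = γ := by rw [hγ]; field_simp
    linarith
  have hK2 : RepHolder.K α 2 ≠ ⊤ := RepHolder.K_ne_top h0 (by simp) (by simpa using hα)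
  have hKp : RepHolder.K α q ≠ ⊤ := RepHolder.K_ne_top h0 (by rw [hqr]; linarith) (by rw [hqr]; exact hαp)
  set C1 : ENNReal := (1 + RepHolder.K α 2) * ENNReal.ofReal T ^ γ with hC1
  set C2 : ENNReal := (1 + RepHolder.K α 2) * (1 + RepHolder.K α q) * ENNReal.ofReal (T ^ (γ - δ)) with hC2
  have hC1t : C1 ≠ ⊤ := ENNReal.mul_ne_top (by simp [hK2])
    (ENNReal.rpow_ne_top_of_nonneg (by linarith) ENNReal.ofReal_ne_top)
  have hC2t : C2 ≠ ⊤ := ENNReal.mul_ne_top (ENNReal.mul_ne_top (by simp [hK2]) (by simp [hKp]))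
    ENNReal.ofReal_ne_top
  have hn1 : 0 ≤ C1.toReal := ENNReal.toReal_nonneg
  have hn2 : 0 ≤ C2.toReal := ENNReal.toReal_nonneg
  set C : ℝ := C1.toReal + C2.toReal + 1 with hC
  have hC0 : 0 < C := by positivity
  have hle1 : C1 ≤ ENNReal.ofReal C := by
    rw [← ENNReal.ofReal_toReal hC1t]
    exact ENNReal.ofReal_le_ofReal (by linarith)
  have hle2 : C2 ≤ ENNReal.ofReal C := by
    rw [← ENNReal.ofReal_toReal hC2t]
    exact ENNReal.ofReal_le_ofReal (by linarith)
  refine ⟨C, hC0, ?_⟩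
  intro b φb hb hφb n hn s t hs hst htT φs φt hφs hφt
  set N := eLpNorm φb q (volume.restrict (Set.Icc 0 T)) with hN
  have hNt : N ≠ ⊤ := hφb.2.ne
  have hA : ∀ (r : ℝ) (χ : ℝ → ℝ), 0 ≤ r → r ≤ T → memLambda T α (Set.indicator (Set.Icc 0 r) b) χ →
      eLpNorm χ 2 (volume.restrict (Set.Icc 0 T)) ≤ ENNReal.ofReal C * N := by
    intro r χ hr hrT hχ
    refine (RepHolder.two_bound h0 hα hr hrT hb hχ hq2).trans ?_
    rw [hqr]
    calc _ = C1 * N := by rw [hC1]; ring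
      _ ≤ _ := mul_le_mul' hle1 le_rfl
  have hts : ENNReal.ofReal (t - s) ^ γ ≤ ENNReal.ofReal (T ^ (γ - δ)) * ENNReal.ofReal ((t - s) ^ δ) := by
    rw [ENNReal.ofReal_rpow_of_nonneg (by linarith) (by linarith),
      ← ENNReal.ofReal_mul (rpow_nonneg hT.le _)]
    apply ENNReal.ofReal_le_ofReal
    have hts0 : 0 ≤ t - s := by linarith
    have : γ = (γ - δ) + δ := by ring
    nth_rw 1 [this]
    rw [rpow_add_of_nonneg hts0 (by linarith) hδ0.le]
    refine mul_le_mul_of_nonneg_right ?_ (rpow_nonneg hts0 _)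
    exact rpow_le_rpow hts0 (by linarith) (by linarith)
  have hD : eLpNorm (φt - φs) 2 (volume.restrict (Set.Icc 0 T)) ≤
      ENNReal.ofReal C * N * ENNReal.ofReal ((t - s) ^ δ) := by
    refine (RepHolder.diff_two h0 hα hs hst htT hb hφs hφt hq2 hqt).trans ?_
    rw [hqr]
    calc _ ≤ (1 + RepHolder.K α 2) * ((1 + RepHolder.K α q) * N *
          (ENNReal.ofReal (T ^ (γ - δ)) * ENNReal.ofReal ((t - s) ^ δ))) := by gcongr
      _ = C2 * N * ENNReal.ofReal ((t - s) ^ δ) := by rw [hC2]; ring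
      _ ≤ _ := by gcongr
  refine (RepHolder.tensor_diff (n := n) hφt.1.1 hφs.1.1 (hA t φt (hs.trans hst) htT hφt)
    (hA s φs hs (hst.trans htT) hφs) hD).trans ?_
  have hnle : (n : ENNReal) ≤ ENNReal.ofReal (2 ^ (n - 1)) := by
    have h1 : n ≤ 2 ^ (n - 1) := by
      have := Nat.lt_two_pow_self (n := n - 1)
      omega
    rw [← ENNReal.ofReal_natCast]
    apply ENNReal.ofReal_le_ofReal
    exact_mod_cast h1
  have hts0 : 0 ≤ (t - s) ^ δ := rpow_nonneg (by linarith) _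
  have hNn : 0 ≤ N.toReal := ENNReal.toReal_nonneg
  rw [ENNReal.ofReal_mul (by positivity), ENNReal.ofReal_mul (by positivity),
    ENNReal.ofReal_mul (by positivity), ENNReal.ofReal_pow hC0.le, ENNReal.ofReal_pow hNn,
    ENNReal.ofReal_toReal hNt]
  obtain ⟨m, rfl⟩ : ∃ m, n = m + 1 := ⟨n - 1, by omega⟩
  refine (mul_le_mul' hnle le_rfl).trans (le_of_eq ?_)
  simp only [Nat.add_sub_cancel]
  ring
end

section
/- Let α ∈ (0,1/2) and p ∈ (2, 1/α). There exists a constant C, depending only on α, p and T, such that for every φ ∈ L^p([0,T]) and all 0 ≤ s ≤ t ≤ T, ( ∫_s^t (t-r)^{-2α} ( ∫_r^T |φ(u)| (u-r)^{α-1} du )² dr )^{1/2} ≤ C ‖φ‖_{L^p([0,T])} (t-s)^{(p-2)/(2p)}. -/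
open MeasureTheory Real Set

theorem lint_aff (f : ℝ → ENNReal) (hf : Measurable f) (a c : ℝ) (hc : c ≠ 0) :
    ∫⁻ x, f (a + c * x) = ENNReal.ofReal |c⁻¹| * ∫⁻ x, f x := by
  have h1 : ∫⁻ x, f (a + c * x) = ∫⁻ y, f (a + y) ∂(Measure.map (fun x => c * x) volume) := by
    rw [lintegral_map (by fun_prop) (by fun_prop)]
  rw [h1, Real.map_volume_mul_left hc, lintegral_smul_measure, lintegral_add_left_eq_self]
  rfl

theorem cs2 {X : Type*} [MeasurableSpace X] (μ : Measure X) (f g : X → ENNReal)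
    (hf : Measurable f) (hg : Measurable g) :
    ∫⁻ x, f x * g x ∂μ ≤ (∫⁻ x, f x ^ 2 ∂μ) ^ (1/2:ℝ) * (∫⁻ x, g x ^ 2 ∂μ) ^ (1/2:ℝ) := by
  have := ENNReal.lintegral_mul_le_Lp_mul_Lq μ (p := 2) (q := 2)
    Real.HolderConjugate.two_two hf.aemeasurable hg.aemeasurable
  simpa using this

theorem mink2 (μ ν : Measure ℝ) [SFinite μ] [SFinite ν] (F : ℝ → ℝ → ENNReal)
    (hF : Measurable (Function.uncurry F)) :
    ∫⁻ x, (∫⁻ z, F x z ∂ν) ^ 2 ∂μ ≤ (∫⁻ z, (∫⁻ x, F x z ^ 2 ∂μ) ^ (1/2:ℝ) ∂ν) ^ 2 := by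
  have hm : Measurable fun q : ℝ × ℝ => F q.1 q.2 := hF
  have hm1 : ∀ x, Measurable (F x) := fun x => hm.comp (measurable_const.prodMk measurable_id)
  have hm2 : ∀ z, Measurable (fun x => F x z) := fun z =>
    hm.comp (measurable_id.prodMk measurable_const)
  have hN : Measurable fun z => (∫⁻ x, F x z ^ 2 ∂μ) ^ (1/2:ℝ) := by
    refine Measurable.pow_const ?_ _
    exact Measurable.lintegral_prod_left' (f := fun q : ℝ × ℝ => F q.1 q.2 ^ 2) (by fun_prop)
  calc ∫⁻ x, (∫⁻ z, F x z ∂ν) ^ 2 ∂μ 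
      = ∫⁻ x, ∫⁻ z, ∫⁻ w, F x z * F x w ∂ν ∂ν ∂μ := by
        refine lintegral_congr fun x => ?_
        rw [sq, lintegral_lintegral_mul (hm1 x).aemeasurable (hm1 x).aemeasurable]
    _ = ∫⁻ z, ∫⁻ x, ∫⁻ w, F x z * F x w ∂ν ∂μ ∂ν := by
        refine lintegral_lintegral_swap ?_
        refine Measurable.aemeasurable ?_
        refine Measurable.lintegral_prod_right'
          (f := fun q : (ℝ × ℝ) × ℝ => F q.1.1 q.1.2 * F q.1.1 q.2) ?_
        exact (hm.comp (measurable_fst.fst.prodMk measurable_fst.snd)).mul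
          (hm.comp (measurable_fst.fst.prodMk measurable_snd))
    _ = ∫⁻ z, ∫⁻ w, ∫⁻ x, F x z * F x w ∂μ ∂ν ∂ν := by
        refine lintegral_congr fun z => ?_
        refine lintegral_lintegral_swap ?_
        refine Measurable.aemeasurable ?_
        exact ((hm2 z).comp measurable_fst).mul hm
    _ ≤ ∫⁻ z, ∫⁻ w, (∫⁻ x, F x z ^ 2 ∂μ) ^ (1/2:ℝ) * (∫⁻ x, F x w ^ 2 ∂μ) ^ (1/2:ℝ) ∂ν ∂ν := by
        gcongr with z w
        exact cs2 μ _ _ (hm2 z) (hm2 w)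
    _ = _ := by
        rw [lintegral_lintegral_mul hN.aemeasurable hN.aemeasurable, sq]

theorem const_fin (α p : ℝ) (hα : 0 < α) (hα' : α < 1) (hp : 1 < p) (hap : α < 1 / p) :
    ∫⁻ z in Iio (1:ℝ), ENNReal.ofReal ((1 - z) ^ (α - 1) * |z| ^ (-(1/p))) < ⊤ := by
  have hp1 : 1 / p < 1 := by rw [div_lt_one (by linarith)]; exact hp
  have hp0 : 0 < 1 / p := by positivity
  have hsub : Iio (1:ℝ) ⊆ Iio (-1) ∪ (Icc (-1) 0 ∪ (Icc 0 (1/2) ∪ Ioc (1/2) 1)) := by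
    intro z hz
    simp only [mem_union, mem_Iio, mem_Icc, mem_Ioc] at *
    grind
  have key : IntegrableOn (fun z : ℝ => (1 - z) ^ (α - 1) * |z| ^ (-(1/p))) (Iio 1) := by
    refine IntegrableOn.mono_set ?_ hsub
    have hms : ∀ s, AEStronglyMeasurable (fun z : ℝ => (1 - z) ^ (α - 1) * |z| ^ (-(1/p)))
        (volume.restrict s) := fun s => by
      refine Measurable.aestronglyMeasurable ?_
      fun_prop
    have hi : IntegrableOn (fun z : ℝ => z ^ (-(1/p))) (Icc 0 1) := by
      rw [integrableOn_Icc_iff_integrableOn_Ioc, ← intervalIntegrable_iff_integrableOn_Ioc_of_le (by norm_num)]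
      exact intervalIntegral.intervalIntegrable_rpow' (by linarith)
    refine IntegrableOn.union ?_ (IntegrableOn.union ?_ (IntegrableOn.union ?_ ?_))
    · have h1 : IntegrableOn (fun z : ℝ => (-z) ^ (α - 1 - 1/p)) (Iio (-1)) := by
        have := integrableOn_Ioi_rpow_of_lt (a := α - 1 - 1/p) (c := 1) (by linarith) (by norm_num)
        simpa using this.comp_neg
      refine Integrable.mono' h1 (hms _) ?_
      filter_upwards [ae_restrict_mem measurableSet_Iio] with z hz
      simp only [mem_Iio] at hz
      have : 0 < -z := by linarith
      rw [abs_of_neg (by linarith : z < 0), Real.norm_of_nonneg (mul_nonneg (rpow_nonneg (by linarith) _) (rpow_nonneg (by linarith) _)), show α - 1 - 1/p = (α-1) + -(1/p) by ring, rpow_add this]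
      refine mul_le_mul_of_nonneg_right ?_ (rpow_nonneg this.le _)
      exact rpow_le_rpow_of_nonpos this (by linarith) (by linarith)
    · have h1 : IntegrableOn (fun z : ℝ => (-z) ^ (-(1/p))) (Icc (-1) 0) := by
        have := hi.comp_neg
        simpa using this
      refine Integrable.mono' h1 (hms _) ?_
      filter_upwards [ae_restrict_mem measurableSet_Icc] with z hz
      rw [abs_of_nonpos hz.2, Real.norm_of_nonneg (mul_nonneg (rpow_nonneg (by linarith [hz.2]) _) (rpow_nonneg (by linarith [hz.2]) _))]
      refine mul_le_of_le_one_left (rpow_nonneg (by linarith [hz.2]) _) ?_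
      exact rpow_le_one_of_one_le_of_nonpos (by linarith [hz.2]) (by linarith)
    · have h1 : IntegrableOn (fun z : ℝ => (1/2:ℝ)^(α-1) * z ^ (-(1/p))) (Icc 0 (1/2)) := 
        (hi.mono_set (Icc_subset_Icc le_rfl (by norm_num))).const_mul _
      refine Integrable.mono' h1 (hms _) ?_
      filter_upwards [ae_restrict_mem measurableSet_Icc] with z hz
      rw [abs_of_nonneg hz.1, Real.norm_of_nonneg (mul_nonneg (rpow_nonneg (by linarith [hz.2]) _) (rpow_nonneg (by linarith [hz.1]) _))]
      refine mul_le_mul_of_nonneg_right ?_ (rpow_nonneg hz.1 _)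
      exact rpow_le_rpow_of_nonpos (by norm_num) (by linarith [hz.2]) (by linarith)
    · have h1 : IntegrableOn (fun z : ℝ => (1-z)^(α-1) * (1/2:ℝ) ^ (-(1/p))) (Ioc (1/2) 1) := by
        refine Integrable.mul_const ?_ _
        change IntegrableOn (fun z : ℝ => (1-z)^(α-1)) (Ioc (1/2) 1)
        rw [← intervalIntegrable_iff_integrableOn_Ioc_of_le (by norm_num)]
        have := (intervalIntegral.intervalIntegrable_rpow' (a := 1/2) (b := 0) (r := α - 1) (by linarith)).comp_sub_left 1
        convert this using 1 <;> norm_num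
      refine Integrable.mono' h1 (hms _) ?_
      filter_upwards [ae_restrict_mem measurableSet_Ioc] with z hz
      rw [abs_of_pos (by linarith [hz.1]), Real.norm_of_nonneg (mul_nonneg (rpow_nonneg (by linarith [hz.2]) _) (rpow_nonneg (by linarith [hz.1]) _))]
      refine mul_le_mul_of_nonneg_left ?_ (rpow_nonneg (by linarith [hz.2]) _)
      exact rpow_le_rpow_of_nonpos (by norm_num) (by linarith [hz.1]) (by linarith)
  exact key.lintegral_lt_top

theorem step1 (α r t : ℝ) (hrt : r < t) (g : ℝ → ENNReal) (hg : Measurable g) :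
    ∫⁻ u in Ioi r, g u * ENNReal.ofReal ((u - r) ^ (α - 1)) =
      ENNReal.ofReal ((t - r) ^ α) *
        ∫⁻ z in Iio (1:ℝ), g ((t - t * z) + z * r) * ENNReal.ofReal ((1 - z) ^ (α - 1)) := by
  have hx : 0 < t - r := by linarith
  have hmf : Measurable (fun u => g u * ENNReal.ofReal ((u - r) ^ (α - 1))) := by fun_prop
  have h := lint_aff ((Ioi r).indicator fun u => g u * ENNReal.ofReal ((u - r) ^ (α - 1)))
    (hmf.indicator measurableSet_Ioi) t (-(t - r)) (by linarith)
  have h2 : ∫⁻ x, ((Ioi r).indicator fun u => g u * ENNReal.ofReal ((u - r) ^ (α - 1)))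
      (t + -(t - r) * x) = ENNReal.ofReal ((t - r) ^ (α - 1)) *
        ∫⁻ z in Iio (1:ℝ), g ((t - t * z) + z * r) * ENNReal.ofReal ((1 - z) ^ (α - 1)) := by
    rw [← lintegral_const_mul _ (by fun_prop), ← lintegral_indicator measurableSet_Iio]
    refine lintegral_congr fun z => ?_
    by_cases hz : z < 1
    · have h3 : r < t + -(t - r) * z := by nlinarith
      rw [indicator_of_mem (show _ ∈ Ioi r from h3), indicator_of_mem (show z ∈ Iio 1 from hz),
        show t + -(t - r) * z - r = (t - r) * (1 - z) by ring,
        mul_rpow hx.le (by linarith), ENNReal.ofReal_mul (rpow_nonneg hx.le _),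
        show t + -(t - r) * z = (t - t * z) + z * r by ring]
      ring
    · have h3 : ¬ r < t + -(t - r) * z := by nlinarith
      rw [indicator_of_notMem (show _ ∉ Ioi r from h3),
        indicator_of_notMem (show z ∉ Iio 1 from hz)]
  rw [h2, lintegral_indicator measurableSet_Ioi, inv_neg, abs_neg, abs_of_pos (inv_pos.2 hx)] at h
  have h4 : ENNReal.ofReal (t - r) * ENNReal.ofReal ((t - r)⁻¹) = 1 := by
    rw [← ENNReal.ofReal_mul hx.le, mul_inv_cancel₀ hx.ne', ENNReal.ofReal_one]
  calc _ = ENNReal.ofReal (t - r) * (ENNReal.ofReal ((t - r)⁻¹) *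
        ∫⁻ u in Ioi r, g u * ENNReal.ofReal ((u - r) ^ (α - 1))) := by
        rw [← mul_assoc, h4, one_mul]
    _ = _ := by
        rw [← h, ← mul_assoc, ← ENNReal.ofReal_mul hx.le]
        congr 2
        rw [rpow_sub_one hx.ne']
        field_simp

theorem step2 (p s t z : ℝ) (hp : 2 < p) (hst : s < t) (hz : z ≠ 0) (g : ℝ → ENNReal)
    (hg : Measurable g) (k : ENNReal) :
    (∫⁻ r in Ioo s t, (g ((t - t * z) + z * r) * k) ^ 2) ^ (1/2:ℝ) ≤
      k * ENNReal.ofReal (|z| ^ (-(1/p))) *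
        ((∫⁻ u, g u ^ p) ^ (1/p) * ENNReal.ofReal ((t - s) ^ ((p - 2) / (2 * p)))) := by
  have hp0 : 0 < p := by linarith
  have hq : 0 < (p - 2) / (2 * p) := div_pos (by linarith) (by linarith)
  have hH := ENNReal.lintegral_Lp_mul_le_Lq_mul_Lr (p := 2) (q := p) (r := ((p - 2) / (2 * p))⁻¹)
    (by norm_num) hp (by field_simp; ring) (volume.restrict (Ioo s t))
    (f := fun r => g ((t - t * z) + z * r)) (g := fun _ => k) (by fun_prop) (by fun_prop)
  have hA : ∫⁻ r in Ioo s t, g ((t - t * z) + z * r) ^ p ≤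
      ENNReal.ofReal |z⁻¹| * ∫⁻ u, g u ^ p := by
    rw [← lint_aff (fun u => g u ^ p) (by fun_prop) (t - t * z) z hz]
    exact setLIntegral_le_lintegral _ _
  have hB : (ENNReal.ofReal |z⁻¹| * ∫⁻ u, g u ^ p) ^ (1/p) =
      ENNReal.ofReal (|z| ^ (-(1/p))) * (∫⁻ u, g u ^ p) ^ (1/p) := by
    rw [ENNReal.mul_rpow_of_nonneg _ _ (by positivity),
      ENNReal.ofReal_rpow_of_nonneg (abs_nonneg _) (by positivity), abs_inv,
      inv_rpow (abs_nonneg _), rpow_neg (abs_nonneg _)]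
  have hC : (∫⁻ r in Ioo s t, k ^ (((p - 2) / (2 * p))⁻¹)) ^ (1 / (((p - 2) / (2 * p))⁻¹)) =
      k * ENNReal.ofReal ((t - s) ^ ((p - 2) / (2 * p))) := by
    rw [setLIntegral_const, Real.volume_Ioo, ENNReal.mul_rpow_of_nonneg _ _ (by positivity),
      one_div, inv_inv, ← ENNReal.rpow_mul, inv_mul_cancel₀ hq.ne', ENNReal.rpow_one,
      ENNReal.ofReal_rpow_of_nonneg (by linarith) hq.le]
  rw [hC] at hH
  calc _ ≤ (∫⁻ r in Ioo s t, g ((t - t * z) + z * r) ^ p) ^ (1/p) *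
        (k * ENNReal.ofReal ((t - s) ^ ((p - 2) / (2 * p)))) := by simpa using hH
    _ ≤ (ENNReal.ofReal (|z| ^ (-(1/p))) * (∫⁻ u, g u ^ p) ^ (1/p)) *
        (k * ENNReal.ofReal ((t - s) ^ ((p - 2) / (2 * p)))) := by
        rw [← hB]
        gcongr
    _ = _ := by ring

theorem step3 (α p s t : ℝ) (hp : 2 < p) (hst : s < t) (g : ℝ → ENNReal)
    (hg : Measurable g) :
    (∫⁻ r in Ioo s t, ENNReal.ofReal ((t - r) ^ (-(2 * α))) *
      (∫⁻ u in Ioi r, g u * ENNReal.ofReal ((u - r) ^ (α - 1))) ^ 2) ^ (1/2:ℝ) ≤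
      (∫⁻ z in Iio (1:ℝ), ENNReal.ofReal ((1 - z) ^ (α - 1) * |z| ^ (-(1/p)))) *
        ((∫⁻ u, g u ^ p) ^ (1/p) * ENNReal.ofReal ((t - s) ^ ((p - 2) / (2 * p)))) := by
  have h1 : ∫⁻ r in Ioo s t, ENNReal.ofReal ((t - r) ^ (-(2 * α))) *
      (∫⁻ u in Ioi r, g u * ENNReal.ofReal ((u - r) ^ (α - 1))) ^ 2 =
      ∫⁻ r in Ioo s t, (∫⁻ z in Iio (1:ℝ), g ((t - t * z) + z * r) *
        ENNReal.ofReal ((1 - z) ^ (α - 1))) ^ 2 := by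
    refine setLIntegral_congr_fun measurableSet_Ioo fun r hr => ?_
    have hx : 0 < t - r := by linarith [hr.2]
    rw [step1 α r t hr.2 g hg, mul_pow, ← mul_assoc, ← ENNReal.ofReal_pow (rpow_nonneg hx.le _),
      ← ENNReal.ofReal_mul (rpow_nonneg hx.le _), ← rpow_natCast, ← rpow_mul hx.le, ← rpow_add hx,
      show -(2 * α) + α * ((2:ℕ):ℝ) = 0 by push_cast; ring, rpow_zero, ENNReal.ofReal_one, one_mul]
  rw [h1]
  have h2 := mink2 (volume.restrict (Ioo s t)) (volume.restrict (Iio (1:ℝ)))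
    (fun r z => g ((t - t * z) + z * r) * ENNReal.ofReal ((1 - z) ^ (α - 1))) (by
      unfold Function.uncurry; fun_prop)
  refine (ENNReal.rpow_le_rpow h2 (by norm_num : (0:ℝ) ≤ 1/2)).trans ?_
  rw [← ENNReal.rpow_natCast, ← ENNReal.rpow_mul]
  norm_num only [Nat.cast_ofNat, mul_one_div, ENNReal.rpow_one]
  rw [← lintegral_mul_const _ (by fun_prop)]
  refine lintegral_mono_ae ?_
  have hz0 : ∀ᵐ z ∂(volume.restrict (Iio (1:ℝ))), z ≠ 0 :=
    ae_restrict_of_ae (by simp [ae_iff])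
  filter_upwards [hz0, ae_restrict_mem measurableSet_Iio] with z hz hz1
  rw [ENNReal.ofReal_mul (rpow_nonneg (by simp only [mem_Iio] at hz1; linarith) _)]
  exact step2 p s t z hp hst hz g hg _

theorem I3_bound (T α p : ℝ) (hT : 0 < T) (hα : α ∈ Set.Ioo (0 : ℝ) (1 / 2))
    (hp : p ∈ Set.Ioo 2 (1 / α)) :
    ∃ C : ℝ, 0 < C ∧ ∀ φ : ℝ → ℝ,
      MemLp φ (ENNReal.ofReal p) (volume.restrict (Set.Icc 0 T)) →
      ∀ s t : ℝ, 0 ≤ s → s ≤ t → t ≤ T →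
      (∫⁻ r in Set.Ioo s t, ENNReal.ofReal ((t - r) ^ (-(2 * α))) *
          (∫⁻ u in Set.Ioo r T, ENNReal.ofReal (|φ u| * (u - r) ^ (α - 1))) ^ 2) ^ (1 / 2 : ℝ) ≤
        ENNReal.ofReal (C *
          (eLpNorm φ (ENNReal.ofReal p) (volume.restrict (Set.Icc 0 T))).toReal *
          (t - s) ^ ((p - 2) / (2 * p))) := by
  obtain ⟨ha0, ha1⟩ := hα
  obtain ⟨hp2, hpa⟩ := hp
  have hp0 : 0 < p := by linarith
  have hap : α < 1 / p := by rwa [lt_one_div ha0 hp0]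
  have hA := const_fin α p ha0 (by linarith) (by linarith) hap
  set A := ∫⁻ z in Iio (1:ℝ), ENNReal.ofReal ((1 - z) ^ (α - 1) * |z| ^ (-(1/p))) with hAdef
  refine ⟨A.toReal + 1, by positivity, fun φ hφ s t hs hst htT => ?_⟩
  rcases hst.eq_or_lt with rfl | hst
  · simp
  have hae : AEMeasurable (fun u => ‖φ u‖ₑ) (volume.restrict (Icc 0 T)) := hφ.1.enorm
  let g : ℝ → ENNReal := (Icc 0 T).indicator (hae.mk _)
  have hg : Measurable g := hae.measurable_mk.indicator measurableSet_Icc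
  have hgae : ∀ᵐ u ∂(volume.restrict (Icc 0 T)), ‖φ u‖ₑ = g u := by
    filter_upwards [hae.ae_eq_mk, ae_restrict_mem measurableSet_Icc] with u hu hu2
    rw [hu]
    exact (indicator_of_mem hu2 _).symm
  have hN : (∫⁻ u, g u ^ p) ^ (1/p) =
      eLpNorm φ (ENNReal.ofReal p) (volume.restrict (Set.Icc 0 T)) := by
    rw [eLpNorm_eq_lintegral_rpow_enorm_toReal (by simpa using hp0) ENNReal.ofReal_ne_top,
      ENNReal.toReal_ofReal hp0.le]
    congr 1
    have : ∫⁻ u in Icc 0 T, ‖φ u‖ₑ ^ p = ∫⁻ u in Icc 0 T, g u ^ p :=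
      lintegral_congr_ae (hgae.mono fun u hu => by simp only [hu])
    rw [this, ← lintegral_indicator measurableSet_Icc]
    refine lintegral_congr fun u => ?_
    by_cases hu : u ∈ Icc 0 T
    · rw [indicator_of_mem hu]
    · rw [indicator_of_notMem hu]
      simp [g, indicator_of_notMem hu, hp0]
  have h3 := step3 α p s t hp2 hst g hg
  rw [hN, ← hAdef] at h3
  have hle : ∫⁻ r in Set.Ioo s t, ENNReal.ofReal ((t - r) ^ (-(2 * α))) *
      (∫⁻ u in Set.Ioo r T, ENNReal.ofReal (|φ u| * (u - r) ^ (α - 1))) ^ 2 ≤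
      ∫⁻ r in Ioo s t, ENNReal.ofReal ((t - r) ^ (-(2 * α))) *
      (∫⁻ u in Ioi r, g u * ENNReal.ofReal ((u - r) ^ (α - 1))) ^ 2 := by
    refine setLIntegral_mono' measurableSet_Ioo fun r hr => ?_
    refine mul_le_mul_right (pow_le_pow_left' ?_ 2) _
    calc _ = ∫⁻ u in Ioo r T, g u * ENNReal.ofReal ((u - r) ^ (α - 1)) := by
          refine lintegral_congr_ae ?_
          have hsub : Ioo r T ⊆ Icc 0 T := fun u hu => ⟨by linarith [hu.1, hr.1], hu.2.le⟩
          filter_upwards [ae_restrict_of_ae_restrict_of_subset hsub hgae] with u hu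
          rw [ENNReal.ofReal_mul (abs_nonneg _), ← hu, Real.enorm_eq_ofReal_abs]
      _ ≤ _ := lintegral_mono_set Ioo_subset_Ioi_self
  refine (ENNReal.rpow_le_rpow hle (by norm_num)).trans (h3.trans ?_)
  rw [ENNReal.ofReal_mul (by positivity), ENNReal.ofReal_mul (by positivity),
    ENNReal.ofReal_toReal hφ.2.ne, mul_assoc]
  gcongr
  exact (ENNReal.ofReal_toReal hA.ne).symm.le.trans (ENNReal.ofReal_le_ofReal (by linarith))
end

section
/- Let α ∈ (0,1/2), let f ∈ Λ^α_T with representative φ_f, let δ ∈ (0, α), and let 0 ≤ r < s < t ≤ T. Then r^α ∫_s^t |f(u)| u^{-α} (u-r)^{-1-α} du ≤ ( (t-s)^{δ} / (α Γ(α)) ) (s-r)^{-α} ∫_s^t |φ_f(θ)| (θ-r)^{(α-δ)-1} dθ + (1/Γ(α)) (s-r)^{-α-δ} ∫_s^t (u-r)^{δ-1} ( ∫_t^T |φ_f(θ)| (θ-u)^{α-1} dθ ) du. -/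
open MeasureTheory Real Set

lemma kernel_bound (α δ r s t θ : ℝ) (hα : 0 < α) (hδ : 0 < δ) (hδα : δ < α)
    (hrs : r < s) (hsθ : s < θ) (hθt : θ < t) :
    ∫⁻ u in Set.Ioo s θ, ENNReal.ofReal ((u - r) ^ (-1 - α) * (θ - u) ^ (α - 1)) ≤
      ENNReal.ofReal ((t - s) ^ δ / α * (s - r) ^ (-α) * (θ - r) ^ ((α - δ) - 1)) := by
  set F : ℝ → ℝ := fun u => -(1 / (α * (θ - r))) * ((θ - u) / (u - r)) ^ α with hF
  have hθr : 0 < θ - r := by linarith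
  have hcont : ContinuousOn F (Set.Icc s θ) := by
    apply ContinuousOn.mul continuousOn_const
    apply ContinuousOn.rpow_const
    · apply ContinuousOn.div (by fun_prop) (by fun_prop)
      intro x hx
      have := hx.1
      linarith
    · intro x hx
      right; exact hα.le
  have hderiv : ∀ u ∈ Set.Ioo s θ,
      HasDerivAt F ((u - r) ^ (-1 - α) * (θ - u) ^ (α - 1)) u := by
    intro u hu
    have h1 : 0 < u - r := by linarith [hu.1]
    have h2 : 0 < θ - u := by linarith [hu.2]
    have hw : HasDerivAt (fun u => (θ - u) / (u - r))
        (((-1) * (u - r) - (θ - u) * 1) / (u - r) ^ 2) u :=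
      ((hasDerivAt_id u).const_sub θ).div ((hasDerivAt_id u).sub_const r) h1.ne'
    have := (hw.rpow_const (p := α) (Or.inl (div_pos h2 h1).ne')).const_mul (-(1 / (α * (θ - r))))
    refine this.congr_deriv ?_
    rw [Real.div_rpow h2.le h1.le]
    have e : (u - r) ^ (-1 - α) = ((u - r) ^ (α - 1))⁻¹ * ((u - r) ^ 2)⁻¹ := by
      rw [← Real.rpow_neg h1.le, ← Real.rpow_natCast, ← Real.rpow_neg h1.le,
        ← Real.rpow_add h1]
      congr 1; push_cast; ring
    rw [e]
    have : 0 < (u - r) ^ (α - 1) := by positivity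
    field_simp
    ring
  have hnn : ∀ u ∈ Set.Ioo s θ, 0 ≤ (u - r) ^ (-1 - α) * (θ - u) ^ (α - 1) := by
    intro u hu
    have h1 : 0 < u - r := by linarith [hu.1]
    have h2 : 0 < θ - u := by linarith [hu.2]
    positivity
  have hint := intervalIntegral.integrableOn_deriv_of_nonneg hcont hderiv hnn
  have hval := intervalIntegral.integral_eq_sub_of_hasDerivAt_of_le hsθ.le hcont hderiv
    ((intervalIntegrable_iff_integrableOn_Ioc_of_le hsθ.le).2 hint)
  rw [intervalIntegral.integral_of_le hsθ.le, integral_Ioc_eq_integral_Ioo] at hval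
  rw [← ofReal_integral_eq_lintegral_ofReal (hint.mono_set Set.Ioo_subset_Ioc_self)
    ((ae_restrict_mem measurableSet_Ioo).mono hnn), hval]
  apply ENNReal.ofReal_le_ofReal
  have h1 : 0 < s - r := by linarith
  have h2 : 0 < θ - s := by linarith
  have h3 : 0 < t - s := by linarith
  simp only [hF, sub_self, zero_div, Real.zero_rpow hα.ne', mul_zero, zero_sub]
  rw [Real.div_rpow h2.le h1.le, Real.rpow_neg h1.le, Real.rpow_sub_one hθr.ne']
  have key : (θ - s) ^ α ≤ (t - s) ^ δ * (θ - r) ^ (α - δ) := by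
    calc (θ - s) ^ α = (θ - s) ^ δ * (θ - s) ^ (α - δ) := by
          rw [← Real.rpow_add h2]; congr 1; ring
      _ ≤ _ := by
          gcongr
  have hp : 0 < (s - r) ^ α := by positivity
  calc -(-(1 / (α * (θ - r))) * ((θ - s) ^ α / (s - r) ^ α))
      = (θ - s) ^ α * (1 / (α * (θ - r) * (s - r) ^ α)) := by field_simp
    _ ≤ ((t - s) ^ δ * (θ - r) ^ (α - δ)) * (1 / (α * (θ - r) * (s - r) ^ α)) := by gcongr
    _ = _ := by field_simp

lemma swap_bound (α δ r s t : ℝ) (g : ℝ → ℝ) (hg : Measurable g) (hα : 0 < α) (hδ : 0 < δ)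
    (hδα : δ < α) (hrs : r < s) :
    ∫⁻ u in Set.Ioo s t, ENNReal.ofReal ((u - r) ^ (-1 - α)) *
        ∫⁻ θ in Set.Ioo u t, ENNReal.ofReal (|g θ| * (θ - u) ^ (α - 1)) ≤
      ENNReal.ofReal ((t - s) ^ δ / α * (s - r) ^ (-α)) *
          (∫⁻ θ in Set.Ioo s t, ENNReal.ofReal (|g θ| * (θ - r) ^ ((α - δ) - 1))) := by
  set K : ℝ → ℝ → ENNReal := fun u θ => {p : ℝ × ℝ | p.1 < p.2}.indicator
    (fun p => ENNReal.ofReal ((p.1 - r) ^ (-1 - α)) *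
      ENNReal.ofReal (|g p.2| * (p.2 - p.1) ^ (α - 1))) (u, θ) with hK
  have hKm : Measurable (Function.uncurry K) := by
    have : Function.uncurry K = {p : ℝ × ℝ | p.1 < p.2}.indicator
      (fun p => ENNReal.ofReal ((p.1 - r) ^ (-1 - α)) *
        ENNReal.ofReal (|g p.2| * (p.2 - p.1) ^ (α - 1))) := by
      ext ⟨a, b⟩; rfl
    rw [this]
    apply Measurable.indicator _ (measurableSet_lt measurable_fst measurable_snd)
    have : Measurable (fun p : ℝ × ℝ => |g p.2|) := by
      simpa [Real.norm_eq_abs] using (hg.comp measurable_snd).norm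
    fun_prop
  calc _ = ∫⁻ u in Set.Ioo s t, ∫⁻ θ in Set.Ioo s t, K u θ := by
        apply setLIntegral_congr_fun measurableSet_Ioo
        intro u hu
        simp only
        have hm : Measurable (fun θ => |g θ|) := by
          simpa [Real.norm_eq_abs] using hg.norm
        rw [← lintegral_const_mul _ (by fun_prop), ← lintegral_indicator measurableSet_Ioo,
          ← lintegral_indicator measurableSet_Ioo]
        congr 1; ext θ
        by_cases h : u < θ
        · by_cases h' : θ < t
          · have : s < θ := hu.1.trans h
            simp [hK, Set.indicator, h, h', this]
          · simp [hK, Set.indicator, h']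
        · simp [hK, Set.indicator, h]
    _ = ∫⁻ θ in Set.Ioo s t, ∫⁻ u in Set.Ioo s t, K u θ :=
        lintegral_lintegral_swap hKm.aemeasurable
    _ ≤ ∫⁻ θ in Set.Ioo s t, ENNReal.ofReal ((t - s) ^ δ / α * (s - r) ^ (-α)) *
          ENNReal.ofReal (|g θ| * (θ - r) ^ ((α - δ) - 1)) := by
        apply setLIntegral_mono' measurableSet_Ioo
        intro θ hθ
        have h1 : 0 < s - r := by linarith
        have h3 : 0 < t - s := by linarith [hθ.1, hθ.2]
        have h4 : 0 < θ - r := by linarith [hθ.1, hθ.2]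
        calc ∫⁻ u in Set.Ioo s t, K u θ
            = ∫⁻ u in Set.Ioo s θ, ENNReal.ofReal |g θ| *
                ENNReal.ofReal ((u - r) ^ (-1 - α) * (θ - u) ^ (α - 1)) := by
              rw [← lintegral_indicator measurableSet_Ioo,
                ← lintegral_indicator measurableSet_Ioo]
              congr 1; ext u
              by_cases h : u < θ
              · by_cases h' : s < u
                · have h5 : u < t := h.trans hθ.2
                  have h6 : 0 < u - r := by linarith
                  simp only [hK, Set.indicator, Set.mem_Ioo, h, h', h5, and_self, if_true,
                    Set.mem_setOf_eq]
                  rw [← ENNReal.ofReal_mul (by positivity), ← ENNReal.ofReal_mul (by positivity)]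
                  congr 1; ring
                · simp [Set.indicator, h']
              · simp [hK, Set.indicator, h]
          _ = ENNReal.ofReal |g θ| * ∫⁻ u in Set.Ioo s θ,
                ENNReal.ofReal ((u - r) ^ (-1 - α) * (θ - u) ^ (α - 1)) :=
              lintegral_const_mul _ (by fun_prop)
          _ ≤ ENNReal.ofReal |g θ| * ENNReal.ofReal
                ((t - s) ^ δ / α * (s - r) ^ (-α) * (θ - r) ^ ((α - δ) - 1)) := by
              gcongr
              exact kernel_bound α δ r s t θ hα hδ hδα hrs hθ.1 hθ.2
          _ = _ := by
              rw [← ENNReal.ofReal_mul (by positivity), ← ENNReal.ofReal_mul (by positivity)]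
              congr 1; ring
    _ = _ := by
        have hm : Measurable (fun θ => |g θ|) := by
          simpa [Real.norm_eq_abs] using hg.norm
        exact lintegral_const_mul _ (by fun_prop)

lemma point_bound (T α r t u : ℝ) (g : ℝ → ℝ) (hα : 0 < α) (hr : 0 ≤ r) (hru : r < u)
    (hut : u < t) :
    ENNReal.ofReal (r ^ α) * ENNReal.ofReal
      (|u ^ α * fracInt T α (fun s => s ^ (-α) * g s) u| * u ^ (-α) * (u - r) ^ (-1 - α)) ≤
    ENNReal.ofReal (1 / Real.Gamma α) * (ENNReal.ofReal ((u - r) ^ (-1 - α)) *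
      ((∫⁻ θ in Set.Ioo u t, ENNReal.ofReal (|g θ| * (θ - u) ^ (α - 1))) +
       ∫⁻ θ in Set.Ioo t T, ENNReal.ofReal (|g θ| * (θ - u) ^ (α - 1)))) := by
  have hG : 0 < Real.Gamma α := Real.Gamma_pos_of_pos hα
  have hu : 0 < u := by linarith
  have hur : 0 < u - r := by linarith
  have e1 : r ^ α * (|u ^ α * fracInt T α (fun s => s ^ (-α) * g s) u| * u ^ (-α) *
      (u - r) ^ (-1 - α)) = (1 / Real.Gamma α) * ((u - r) ^ (-1 - α) *
      |∫ θ in Set.Ioo u T, r ^ α * (θ ^ (-α) * g θ * (θ - u) ^ (α - 1))|) := by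
    rw [integral_const_mul, fracInt, abs_mul, abs_mul, abs_mul, Real.rpow_neg hu.le,
      abs_of_pos (show 0 < u ^ α by positivity), abs_of_nonneg (show 0 ≤ r ^ α by positivity),
      abs_of_pos (show 0 < 1 / Real.Gamma α by positivity)]
    have : 0 < u ^ α := by positivity
    field_simp
  rw [← ENNReal.ofReal_mul (by positivity), e1, ENNReal.ofReal_mul (by positivity),
    ENNReal.ofReal_mul (by positivity)]
  gcongr
  rw [← Real.enorm_eq_ofReal_abs]
  calc _ ≤ ∫⁻ θ in Set.Ioo u T, ‖r ^ α * (θ ^ (-α) * g θ * (θ - u) ^ (α - 1))‖ₑ :=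
        enorm_integral_le_lintegral_enorm _
    _ ≤ ∫⁻ θ in Set.Ioo u T, ENNReal.ofReal (|g θ| * (θ - u) ^ (α - 1)) := by
        apply setLIntegral_mono' measurableSet_Ioo
        intro θ hθ
        have h1 : 0 < θ - u := by linarith [hθ.1]
        have h2 : 0 < θ := by linarith [hθ.1]
        rw [Real.enorm_eq_ofReal_abs]
        apply ENNReal.ofReal_le_ofReal
        rw [abs_mul, abs_mul, abs_mul, abs_of_nonneg (show 0 ≤ r ^ α by positivity),
          abs_of_pos (show 0 < θ ^ (-α) by positivity),
          abs_of_pos (show 0 < (θ - u) ^ (α - 1) by positivity)]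
        have h3 : r ^ α * θ ^ (-α) ≤ 1 := by
          rw [Real.rpow_neg h2.le, ← div_eq_mul_inv, div_le_one (by positivity)]
          exact Real.rpow_le_rpow hr (by linarith [hθ.1]) hα.le
        calc r ^ α * (θ ^ (-α) * |g θ| * (θ - u) ^ (α - 1))
            = (r ^ α * θ ^ (-α)) * (|g θ| * (θ - u) ^ (α - 1)) := by ring
          _ ≤ 1 * (|g θ| * (θ - u) ^ (α - 1)) := by gcongr
          _ = _ := one_mul _
    _ ≤ ∫⁻ θ in Set.Ioo u t ∪ Set.Ico t T, ENNReal.ofReal (|g θ| * (θ - u) ^ (α - 1)) := by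
        apply lintegral_mono_set
        intro θ hθ
        rcases lt_or_ge θ t with h | h
        · exact Or.inl ⟨hθ.1, h⟩
        · exact Or.inr ⟨h, hθ.2⟩
    _ ≤ _ := lintegral_union_le _ _ _
    _ = _ := by rw [setLIntegral_congr (Ioo_ae_eq_Ico (a := t) (b := T))]

theorem pointwise_tail_bound (T α : ℝ) (hT : 0 < T) (hα : α ∈ Set.Ioo (0 : ℝ) (1 / 2))
    (f φf : ℝ → ℝ) (hf : memLambda T α f φf)
    (δ : ℝ) (hδ : δ ∈ Set.Ioo 0 α)
    (r s t : ℝ) (hr : 0 ≤ r) (hrs : r < s) (hst : s < t) (htT : t ≤ T) :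
    ENNReal.ofReal (r ^ α) *
        ∫⁻ u in Set.Ioo s t, ENNReal.ofReal (|f u| * u ^ (-α) * (u - r) ^ (-1 - α)) ≤
      ENNReal.ofReal ((t - s) ^ δ / (α * Real.Gamma α) * (s - r) ^ (-α)) *
          (∫⁻ θ in Set.Ioo s t, ENNReal.ofReal (|φf θ| * (θ - r) ^ ((α - δ) - 1))) +
        ENNReal.ofReal (1 / Real.Gamma α * (s - r) ^ (-α - δ)) *
          ∫⁻ u in Set.Ioo s t, ENNReal.ofReal ((u - r) ^ (δ - 1)) *
            ∫⁻ θ in Set.Ioo t T, ENNReal.ofReal (|φf θ| * (θ - u) ^ (α - 1)) := by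
  obtain ⟨hφ, hfe⟩ := hf
  obtain ⟨hα0, -⟩ := hα
  obtain ⟨hδ0, hδα⟩ := hδ
  have hG : 0 < Real.Gamma α := Real.Gamma_pos_of_pos hα0
  have hsr : 0 < s - r := by linarith
  have hts : 0 < t - s := by linarith
  obtain ⟨g, hgm, hge⟩ := hφ.1.aemeasurable
  have hsub : ∀ a b : ℝ, 0 ≤ a → b ≤ T → φf =ᵐ[volume.restrict (Set.Ioo a b)] g := by
    intro a b ha hb
    exact ae_restrict_of_ae_restrict_of_subset
      (show Set.Ioo a b ⊆ Set.Icc 0 T from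
        fun x hx => ⟨ha.trans hx.1.le, hx.2.le.trans hb⟩) hge
  have r1 : ∫⁻ θ in Set.Ioo s t, ENNReal.ofReal (|φf θ| * (θ - r) ^ ((α - δ) - 1)) =
      ∫⁻ θ in Set.Ioo s t, ENNReal.ofReal (|g θ| * (θ - r) ^ ((α - δ) - 1)) :=
    lintegral_congr_ae ((hsub s t (by linarith) htT).mono fun x hx => by simp only [hx])
  have r2 : ∀ u, ∫⁻ θ in Set.Ioo t T, ENNReal.ofReal (|φf θ| * (θ - u) ^ (α - 1)) =
      ∫⁻ θ in Set.Ioo t T, ENNReal.ofReal (|g θ| * (θ - u) ^ (α - 1)) := fun u =>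
    lintegral_congr_ae ((hsub t T (by linarith) le_rfl).mono fun x hx => by simp only [hx])
  simp only [r1, r2]
  have hm : Measurable (fun θ => |g θ|) := by
    simpa [Real.norm_eq_abs] using hgm.norm
  have hm2 : Measurable fun u => ∫⁻ θ in Set.Ioo t T,
      ENNReal.ofReal (|g θ| * (θ - u) ^ (α - 1)) := by
    apply Measurable.lintegral_prod_right'
      (f := fun p : ℝ × ℝ => ENNReal.ofReal (|g p.2| * (p.2 - p.1) ^ (α - 1)))
    have : Measurable (fun p : ℝ × ℝ => |g p.2|) := hm.comp measurable_snd
    fun_prop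
  have hfe' : ∀ᵐ u ∂(volume.restrict (Set.Ioo s t)),
      f u = u ^ α * fracInt T α (fun s => s ^ (-α) * φf s) u :=
    ae_restrict_of_ae_restrict_of_subset
      (show Set.Ioo s t ⊆ Set.Icc 0 T from
        fun x hx => ⟨by linarith [hx.1], by linarith [hx.2]⟩) hfe
  calc _ = ∫⁻ u in Set.Ioo s t, ENNReal.ofReal (r ^ α) *
          ENNReal.ofReal (|f u| * u ^ (-α) * (u - r) ^ (-1 - α)) :=
        (lintegral_const_mul' _ _ ENNReal.ofReal_ne_top).symm
    _ ≤ ∫⁻ u in Set.Ioo s t, (ENNReal.ofReal (1 / Real.Gamma α) *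
          (ENNReal.ofReal ((u - r) ^ (-1 - α)) *
            (∫⁻ θ in Set.Ioo u t, ENNReal.ofReal (|g θ| * (θ - u) ^ (α - 1)))) +
          ENNReal.ofReal (1 / Real.Gamma α * (s - r) ^ (-α - δ)) *
            (ENNReal.ofReal ((u - r) ^ (δ - 1)) *
              ∫⁻ θ in Set.Ioo t T, ENNReal.ofReal (|g θ| * (θ - u) ^ (α - 1)))) := by
        apply lintegral_mono_ae
        filter_upwards [hfe', ae_restrict_mem measurableSet_Ioo] with u hu hus
        have hcongr : fracInt T α (fun s => s ^ (-α) * φf s) u =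
            fracInt T α (fun s => s ^ (-α) * g s) u := by
          unfold fracInt
          congr 1
          exact integral_congr_ae ((hsub u T (by linarith [hus.1]) le_rfl).mono
            fun x hx => by simp only [hx])
        rw [hu, hcongr]
        refine (point_bound T α r t u g hα0 hr (by linarith [hus.1]) hus.2).trans ?_
        rw [mul_add, mul_add]
        refine add_le_add le_rfl ?_
        rw [← mul_assoc, ← mul_assoc]
        gcongr ?_ * _
        have h1 : 0 < u - r := by linarith [hus.1]
        rw [← ENNReal.ofReal_mul (by positivity), ← ENNReal.ofReal_mul (by positivity)]
        apply ENNReal.ofReal_le_ofReal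
        rw [mul_assoc]
        gcongr
        calc (u - r) ^ (-1 - α) = (u - r) ^ (-α - δ) * (u - r) ^ (δ - 1) := by
              rw [← Real.rpow_add h1]; congr 1; ring
          _ ≤ _ := by
              gcongr ?_ * _
              exact Real.rpow_le_rpow_of_nonpos hsr (by linarith [hus.1]) (by linarith)
    _ = ENNReal.ofReal (1 / Real.Gamma α) * (∫⁻ u in Set.Ioo s t,
          ENNReal.ofReal ((u - r) ^ (-1 - α)) *
            (∫⁻ θ in Set.Ioo u t, ENNReal.ofReal (|g θ| * (θ - u) ^ (α - 1)))) +
          ENNReal.ofReal (1 / Real.Gamma α * (s - r) ^ (-α - δ)) *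
            ∫⁻ u in Set.Ioo s t, (ENNReal.ofReal ((u - r) ^ (δ - 1)) *
              ∫⁻ θ in Set.Ioo t T, ENNReal.ofReal (|g θ| * (θ - u) ^ (α - 1))) := by
        rw [lintegral_add_right _ (by fun_prop), lintegral_const_mul' _ _ ENNReal.ofReal_ne_top,
          lintegral_const_mul' _ _ ENNReal.ofReal_ne_top]
    _ ≤ _ := by
        gcongr ?_ + _
        calc _ ≤ ENNReal.ofReal (1 / Real.Gamma α) *
              (ENNReal.ofReal ((t - s) ^ δ / α * (s - r) ^ (-α)) *
          (∫⁻ θ in Set.Ioo s t, ENNReal.ofReal (|g θ| * (θ - r) ^ ((α - δ) - 1)))) := by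
              gcongr
              exact swap_bound α δ r s t g hgm hα0 hδ0 hδα hrs
          _ = _ := by
              rw [← mul_assoc, ← ENNReal.ofReal_mul (by positivity)]
              congr 2
              field_simp
end

section
/- Let α ∈ (0,1/2), let f ∈ Λ^α_T, let a ∈ L²([0,T]) and set e(t) = exp(∫_0^t a(s) ds). For every n ≥ 1 the function g : [0,T]^n → ℝ, g(t_1,…,t_n) = (∏_{i=1}^n f(t_i)) · e(t_1 ∨ ⋯ ∨ t_n), belongs to the n-fold tensor space of Λ^α_T; that is, there exists Φ ∈ L²([0,T]^n) such that for almost every (t_1,…,t_n) ∈ [0,T]^n, g(t_1,…,t_n) = (∏_{i=1}^n t_i^α) · Γ(α)^{-n} ∫_{t_1}^T ⋯ ∫_{t_n}^T ∏_{i=1}^n (s_i - t_i)^{α-1} · (∏_{i=1}^n s_i^{-α}) · Φ(s_1,…,s_n) ds_n ⋯ ds_1. -/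
open MeasureTheory Real Set

open scoped ENNReal

namespace TL

lemma cs {X : Type*} [MeasurableSpace X] (μ : Measure X) {h A B : X → ℝ≥0∞}
    (hA : AEMeasurable A μ) (hB : AEMeasurable B μ) (hh : ∀ᵐ x ∂μ, h x ^ 2 ≤ A x * B x) :
    (∫⁻ x, h x ∂μ) ^ 2 ≤ (∫⁻ x, A x ∂μ) * ∫⁻ x, B x ∂μ := by
  have hpq : (2 : ℝ).HolderConjugate 2 := Real.HolderConjugate.two_two
  have h1 : ∫⁻ x, h x ∂μ ≤ ∫⁻ x, ((fun x => A x ^ (1/2 : ℝ)) * (fun x => B x ^ (1/2 : ℝ))) x ∂μ := by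
    apply lintegral_mono_ae
    filter_upwards [hh] with x hx
    simp only [Pi.mul_apply]
    rw [← ENNReal.mul_rpow_of_nonneg _ _ (by norm_num)]
    have : h x = (h x ^ 2) ^ (1/2 : ℝ) := by
      rw [← ENNReal.rpow_natCast, ← ENNReal.rpow_mul]; norm_num
    rw [this]
    exact ENNReal.rpow_le_rpow hx (by norm_num)
  have h2 := h1.trans (ENNReal.lintegral_mul_le_Lp_mul_Lq μ hpq (hA.pow_const (1/2 : ℝ))
    (hB.pow_const (1/2 : ℝ)))
  have h3 : ∀ y : ℝ≥0∞, (y ^ (1/2 : ℝ)) ^ (2 : ℝ) = y := by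
    intro y; rw [← ENNReal.rpow_mul]; norm_num
  have h4 : ∀ y : ℝ≥0∞, (y ^ (1/2 : ℝ)) ^ 2 = y := by
    intro y; rw [← ENNReal.rpow_natCast, ← ENNReal.rpow_mul]; norm_num
  simp only [h3] at h2
  calc _ ≤ _ := pow_le_pow_left' h2 2
    _ = _ := by rw [mul_pow, h4, h4]

lemma lint_prod {n : ℕ} {μ : Fin n → Measure ℝ} [∀ i, SigmaFinite (μ i)]
    (f : Fin n → ℝ → ℝ≥0∞) (hf : ∀ i, Measurable (f i)) :
    ∫⁻ x, ∏ i, f i (x i) ∂(Measure.pi μ) = ∏ i, ∫⁻ x, f i x ∂(μ i) := by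
  induction n with
  | zero => simp
  | succ n n_ih =>
      calc
        _ = ∫⁻ x : ℝ × (Fin n → ℝ),
            f 0 x.1 * ∏ i : Fin n, f (Fin.succ i) (x.2 i)
            ∂((μ 0).prod (Measure.pi (fun i ↦ μ i.succ))) := by
          rw [← ((measurePreserving_piFinSuccAbove μ 0).symm).lintegral_comp_emb
            (MeasurableEquiv.measurableEmbedding _)]
          simp [MeasurableEquiv.piFinSuccAbove_symm_apply, Fin.insertNthEquiv,
            Fin.prod_univ_succ]
        _ = (∫⁻ x, f 0 x ∂μ 0)
            * ∏ i : Fin n, ∫⁻ x, f (Fin.succ i) x ∂(μ i.succ) := by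
          rw [← n_ih _ (fun i => hf _), ← lintegral_prod_mul (hf 0).aemeasurable]
          apply Measurable.aemeasurable
          apply Finset.measurable_prod
          intro i _
          exact (hf _).comp (measurable_pi_apply _)
        _ = ∏ i, ∫⁻ x, f i x ∂(μ i) := by rw [Fin.prod_univ_succ]

lemma ac_exp {A : ℝ → ℝ} {x y : ℝ} (hA : AbsolutelyContinuousOnInterval A x y) :
    AbsolutelyContinuousOnInterval (fun t => Real.exp (A t)) x y := by
  obtain ⟨C, hC⟩ := hA.exists_bound
  rw [absolutelyContinuousOnInterval_iff] at hA ⊢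
  intro ε hε
  obtain ⟨δ, hδ, H⟩ := hA (ε / Real.exp C) (by positivity)
  refine ⟨δ, hδ, fun E hE hs => ?_⟩
  have h1 := H E hE hs
  have key : ∀ p q : ℝ, p ≤ C → q ≤ C → dist (Real.exp p) (Real.exp q) ≤ Real.exp C * dist p q := by
    have : ∀ p q : ℝ, p ≤ q → q ≤ C → Real.exp q - Real.exp p ≤ Real.exp C * (q - p) := by
      intro p q hpq hq
      have h2 : Real.exp p = Real.exp q * Real.exp (p - q) := by rw [← Real.exp_add]; ring_nf
      have h3 := Real.add_one_le_exp (p - q)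
      have h4 : Real.exp q ≤ Real.exp C := Real.exp_le_exp.mpr hq
      have h5 := Real.exp_pos q
      rw [h2]
      nlinarith
    intro p q hp hq
    rcases le_total p q with h | h
    · rw [dist_comm, dist_comm p q, Real.dist_eq, Real.dist_eq, abs_of_nonneg, abs_of_nonneg]
      · exact this p q h hq
      · linarith
      · have := Real.exp_le_exp.mpr h; linarith
    · rw [Real.dist_eq, Real.dist_eq, abs_of_nonneg, abs_of_nonneg]
      · exact this q p h hp
      · linarith
      · have := Real.exp_le_exp.mpr h; linarith
  have hb : ∀ z ∈ uIcc x y, A z ≤ C := fun z hz => (le_abs_self _).trans (by simpa using hC z hz)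
  calc _ ≤ ∑ i ∈ Finset.range E.1, Real.exp C * dist (A (E.2 i).1) (A (E.2 i).2) := by
        apply Finset.sum_le_sum
        intro i hi
        have := hE.1 i hi
        exact key _ _ (hb _ this.1) (hb _ this.2)
    _ = Real.exp C * ∑ i ∈ Finset.range E.1, dist (A (E.2 i).1) (A (E.2 i).2) := by
        rw [Finset.mul_sum]
    _ < Real.exp C * (ε / Real.exp C) := by gcongr
    _ = ε := by field_simp

lemma ftc {a : ℝ → ℝ} (ha : Integrable a) {x y : ℝ} (hx : 0 ≤ x) (hxy : x ≤ y) :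
    ∫ v in x..y, a v * Real.exp (∫ s in (0:ℝ)..v, a s)
      = Real.exp (∫ s in (0:ℝ)..y, a s) - Real.exp (∫ s in (0:ℝ)..x, a s) := by
  have h1 : AbsolutelyContinuousOnInterval (fun v => ∫ s in (0:ℝ)..v, a s) 0 y :=
    (ha.intervalIntegrable).absolutelyContinuousOnInterval_intervalIntegral (by simp)
  have h2 := (ac_exp h1).mono (c := x) (d := y) (by
    rw [uIcc_of_le hxy, uIcc_of_le (hx.trans hxy)]; exact Icc_subset_Icc_left hx)
  rw [← h2.integral_deriv_eq_sub]
  apply intervalIntegral.integral_congr_ae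
  filter_upwards [LocallyIntegrable.ae_hasDerivAt_integral ha.locallyIntegrable] with v hv _
  have := ((hv 0).exp).deriv
  rw [this, mul_comm]

/-- The constant `∫_0^∞ t^{β-1}/(1+t) dt`. -/
noncomputable def Cb (β : ℝ) : ℝ≥0∞ := ∫⁻ t in Ioi (0:ℝ), ENNReal.ofReal (t ^ (β - 1) / (t + 1))

lemma Cb_lt_top {β : ℝ} (h0 : 0 < β) (h1 : β < 1) : Cb β < ∞ := by
  have hI : IntegrableOn (fun t : ℝ => t ^ (β - 1) / (t + 1)) (Ioi 0) := by
    rw [← Ioc_union_Ioi_eq_Ioi (zero_le_one' ℝ)]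
    apply IntegrableOn.union
    · have : IntegrableOn (fun t : ℝ => t ^ (β - 1)) (Ioc 0 1) := by
        rw [← intervalIntegrable_iff_integrableOn_Ioc_of_le zero_le_one]
        exact intervalIntegral.intervalIntegrable_rpow' (by linarith)
      refine this.mono' (Measurable.aestronglyMeasurable (by fun_prop)) ?_
      filter_upwards [ae_restrict_mem measurableSet_Ioc] with t ht
      have ht0 := ht.1
      rw [Real.norm_of_nonneg (by positivity)]
      apply div_le_self (by positivity); linarith
    · have : IntegrableOn (fun t : ℝ => t ^ (β - 2)) (Ioi 1) :=
        integrableOn_Ioi_rpow_of_lt (by linarith) one_pos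
      refine this.mono' (Measurable.aestronglyMeasurable (by fun_prop)) ?_
      filter_upwards [ae_restrict_mem measurableSet_Ioi] with t ht
      have ht0 : (0:ℝ) < t := lt_trans one_pos ht
      rw [Real.norm_of_nonneg (by positivity)]
      rw [show β - 2 = (β - 1) - 1 by ring, Real.rpow_sub_one ht0.ne' (β - 1)]
      gcongr; linarith
  have := hI.lintegral_lt_top
  exact this

lemma Cb_pos {β : ℝ} : 0 < Cb β := by
  rw [Cb, setLIntegral_pos_iff (by fun_prop)]
  have : (Function.support fun t : ℝ => ENNReal.ofReal (t ^ (β - 1) / (t + 1))) ∩ Ioi 0 = Ioi 0 := by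
    apply inter_eq_self_of_subset_right
    intro t ht
    have ht : 0 < t := ht
    have : 0 < t ^ (β - 1) / (t + 1) := by positivity
    simpa [Function.mem_support] using this
  rw [this]; simp

lemma Cb_scale {β x : ℝ} (hx : 0 < x) :
    ∫⁻ t in Ioi (0:ℝ), ENNReal.ofReal (t ^ (β - 1) / (t + x)) = ENNReal.ofReal (x ^ (β - 1)) * Cb β := by
  have him : (fun t : ℝ => x * t) '' Ioi 0 = Ioi 0 := by
    ext z; simp only [mem_image, mem_Ioi]
    constructor
    · rintro ⟨t, ht, rfl⟩; positivity
    · intro hz; exact ⟨z / x, by positivity, by field_simp⟩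
  have := lintegral_image_eq_lintegral_abs_deriv_mul (s := Ioi (0:ℝ)) (f := fun t => x * t)
    (f' := fun _ => x) measurableSet_Ioi
    (fun t _ => by simpa using ((hasDerivAt_id t).const_mul x).hasDerivWithinAt)
    (fun a _ b _ h => mul_left_cancel₀ hx.ne' h)
    (fun t => ENNReal.ofReal (t ^ (β - 1) / (t + x)))
  rw [him] at this
  rw [this, Cb, ← lintegral_const_mul _ (by fun_prop)]
  apply setLIntegral_congr_fun measurableSet_Ioi
  intro t ht
  have ht : 0 < t := ht
  simp only
  rw [← ENNReal.ofReal_mul (by positivity), ← ENNReal.ofReal_mul (by positivity)]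
  congr 1
  rw [abs_of_pos hx, Real.mul_rpow hx.le ht.le]
  field_simp

lemma Cb_right {β x : ℝ} (hx : 0 < x) (v : ℝ) :
    ∫⁻ s in Ioi v, ENNReal.ofReal ((s - v) ^ (β - 1) / (s - v + x))
      = ENNReal.ofReal (x ^ (β - 1)) * Cb β := by
  rw [← Cb_scale hx, ← lintegral_indicator measurableSet_Ioi, ← lintegral_indicator measurableSet_Ioi,
    ← lintegral_sub_right_eq_self (indicator (Ioi 0) _) v]
  congr 1; ext s
  simp [indicator]

lemma Cb_left {β x : ℝ} (hx : 0 < x) (v : ℝ) :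
    ∫⁻ s in Iio v, ENNReal.ofReal ((v - s) ^ (β - 1) / (v - s + x))
      = ENNReal.ofReal (x ^ (β - 1)) * Cb β := by
  rw [← Cb_scale hx, ← lintegral_indicator measurableSet_Iio, ← lintegral_indicator measurableSet_Ioi,
    ← lintegral_sub_left_eq_self _ v]
  congr 1; ext s
  simp [indicator]

/-- The beta integral. -/
lemma beta {α u v s : ℝ} (huv : u < v) (hvs : v < s) :
    ∫⁻ r in Ioo u v, ENNReal.ofReal ((r - u) ^ (α - 1) * (v - r) ^ (-α) * (s - r)⁻¹)
      = Cb α * ENNReal.ofReal ((s - v) ^ (-α) * (s - u) ^ (α - 1)) := by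
  have hvu : 0 < v - u := by linarith
  have hsv : 0 < s - v := by linarith
  have hsu : 0 < s - u := by linarith
  have him : (fun r : ℝ => (r - u) / (v - r)) '' Ioo u v = Ioi 0 := by
    ext z; simp only [mem_image, mem_Ioi, mem_Ioo]
    constructor
    · rintro ⟨t, ⟨h1, h2⟩, rfl⟩
      exact div_pos (by linarith) (by linarith)
    · intro hz
      refine ⟨(u + z * v) / (1 + z), ⟨?_, ?_⟩, ?_⟩
      · rw [lt_div_iff₀ (by positivity)]; nlinarith
      · rw [div_lt_iff₀ (by positivity)]; nlinarith
      · have h1 : (u + z * v) / (1 + z) - u = z * (v - u) / (1 + z) := by field_simp; ring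
        have h2 : v - (u + z * v) / (1 + z) = (v - u) / (1 + z) := by field_simp; ring
        rw [h1, h2]; field_simp
  have := lintegral_image_eq_lintegral_abs_deriv_mul (s := Ioo u v) (f := fun r => (r - u) / (v - r))
    (f' := fun r => (v - u) / (v - r) ^ 2) measurableSet_Ioo
    (fun r hr => by
      have hvr : v - r ≠ 0 := by have := hr.2; linarith
      have := (((hasDerivAt_id r).sub_const u).div ((hasDerivAt_id r).const_sub v) hvr).hasDerivWithinAt
        (s := Ioo u v)
      convert! this using 1
      simp)
    (fun a ha b hb h => by
      have h1 : v - a ≠ 0 := by have := ha.2; linarith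
      have h2 : v - b ≠ 0 := by have := hb.2; linarith
      simp only at h
      rw [div_eq_div_iff h1 h2] at h
      have : (v - u) * (a - b) = 0 := by linear_combination h
      rcases mul_eq_zero.mp this with h | h <;> linarith)
    (fun w => ENNReal.ofReal (w ^ (α - 1) / (w + (s - u) / (s - v))))
  rw [him, Cb_scale (by positivity)] at this
  have hc : ENNReal.ofReal ((s - v) ^ (-α) * (s - u) ^ (α - 1)) =
      ENNReal.ofReal ((s - v)⁻¹) * ENNReal.ofReal (((s - u) / (s - v)) ^ (α - 1)) := by
    rw [← ENNReal.ofReal_mul (by positivity)]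
    congr 1
    rw [Real.div_rpow hsu.le hsv.le, Real.rpow_neg hsv.le, Real.rpow_sub_one hsv.ne']
    field_simp
  rw [hc, mul_comm (Cb α), mul_assoc, this, ← lintegral_const_mul _ (by fun_prop)]
  apply setLIntegral_congr_fun measurableSet_Ioo
  intro r hr
  have h1 : 0 < r - u := by have := hr.1; linarith
  have h2 : 0 < v - r := by have := hr.2; linarith
  have h3 : 0 < s - r := by linarith
  simp only
  rw [← ENNReal.ofReal_mul (by positivity), ← ENNReal.ofReal_mul (by positivity)]
  congr 1
  rw [abs_of_pos (by positivity), Real.div_rpow h1.le h2.le, Real.rpow_neg h2.le,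
    Real.rpow_sub_one h2.ne']
  have h4 : (r - u) / (v - r) + (s - u) / (s - v) = (v - u) * (s - r) / ((v - r) * (s - v)) := by
    field_simp; ring
  rw [h4]
  field_simp

end TL

namespace TL

/-- The fractional kernel with its weight. -/
noncomputable def kern (α t s : ℝ) : ℝ := (s - t) ^ (α - 1) * s ^ (-α)

/-- The representative of `f · 1_{[0,v)}`. -/
noncomputable def psi (α : ℝ) (φ : ℝ → ℝ) (v r : ℝ) : ℝ :=
  if 0 < r ∧ r < v then
    φ r + (Cb α).toReal⁻¹ * (r ^ α * (v - r) ^ (-α)) *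
      ∫ s in Ioi v, (s - v) ^ α * s ^ (-α) * (s - r)⁻¹ * φ s
  else 0

lemma measurable_psi {α : ℝ} {φ : ℝ → ℝ} (hφ : Measurable φ) :
    Measurable (fun p : ℝ × ℝ => psi α φ p.1 p.2) := by
  have h1 : Measurable (fun p : ℝ × ℝ =>
      ∫ s in Ioi p.1, (s - p.1) ^ α * s ^ (-α) * (s - p.2)⁻¹ * φ s) := by
    have : (fun p : ℝ × ℝ =>
      ∫ s in Ioi p.1, (s - p.1) ^ α * s ^ (-α) * (s - p.2)⁻¹ * φ s) =
      fun p : ℝ × ℝ => ∫ s, {q : (ℝ × ℝ) × ℝ | q.1.1 < q.2}.indicator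
        (fun q => (q.2 - q.1.1) ^ α * q.2 ^ (-α) * (q.2 - q.1.2)⁻¹ * φ q.2) (p, s) := by
      ext p
      rw [← integral_indicator measurableSet_Ioi]
      congr 1
    rw [this]
    refine (StronglyMeasurable.integral_prod_right (f := fun (p : ℝ × ℝ) (s : ℝ) => _) ?_).measurable
    apply Measurable.stronglyMeasurable
    apply Measurable.indicator
    · fun_prop
    · exact measurableSet_lt (by fun_prop) (by fun_prop)
  unfold psi
  refine Measurable.ite ?_ ?_ measurable_const
  · exact (measurableSet_lt measurable_const measurable_snd).inter
      (measurableSet_lt measurable_snd measurable_fst)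
  · fun_prop

/-- Schur test. -/
lemma schur {α : ℝ} {φ : ℝ → ℝ} (hφ : Measurable φ) (v : ℝ) :
    ∫⁻ r in Iio v, (∫⁻ s in Ioi v,
        ENNReal.ofReal ((v - r) ^ (-α) * (s - v) ^ α * (s - r)⁻¹) * ‖φ s‖ₑ) ^ 2
      ≤ Cb (α + 1/2) * Cb (1/2 - α) * ∫⁻ s, ‖φ s‖ₑ ^ 2 := by
  have step1 : ∀ r ∈ Iio v, (∫⁻ s in Ioi v,
        ENNReal.ofReal ((v - r) ^ (-α) * (s - v) ^ α * (s - r)⁻¹) * ‖φ s‖ₑ) ^ 2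
      ≤ Cb (α + 1/2) * ∫⁻ s in Ioi v, ENNReal.ofReal
        ((v - r) ^ (-α - 1/2) * (s - v) ^ (α + 1/2) * (s - r)⁻¹) * ‖φ s‖ₑ ^ 2 := by
    intro r hr
    have hr : 0 < v - r := sub_pos.mpr hr
    have hA : ∫⁻ s in Ioi v, ENNReal.ofReal ((v-r) ^ (1/2-α) * ((s - v) ^ (α + 1/2 - 1) / (s - v + (v - r))))
        = Cb (α + 1/2) := by
      simp_rw [ENNReal.ofReal_mul (Real.rpow_nonneg hr.le (1/2-α))]
      rw [lintegral_const_mul _ (by fun_prop), Cb_right hr, ← mul_assoc,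
        ← ENNReal.ofReal_mul (by positivity), ← Real.rpow_add hr,
        show 1/2 - α + (α + 1/2 - 1) = 0 by ring]
      simp
    rw [← hA]
    apply cs
    · fun_prop
    · fun_prop
    · filter_upwards [ae_restrict_mem measurableSet_Ioi] with s hs
      have hs : 0 < s - v := sub_pos.mpr hs
      have hsr : 0 < s - r := by linarith
      rw [mul_pow, ← mul_assoc]
      gcongr
      rw [← ENNReal.ofReal_pow (by positivity), ← ENNReal.ofReal_mul (by positivity)]
      apply le_of_eq
      congr 1
      rw [show s - v + (v - r) = s - r by ring]
      have e1 : (v-r) ^ (1/2-α) * (v-r) ^ (-α-1/2) = ((v-r)^(-α))^2 := by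
        rw [← Real.rpow_add hr, ← Real.rpow_natCast, ← Real.rpow_mul hr.le]; congr 1; push_cast; ring
      have e2 : (s-v) ^ (α+1/2-1) * (s-v) ^ (α+1/2) = ((s-v)^(α))^2 := by
        rw [← Real.rpow_add hs, ← Real.rpow_natCast, ← Real.rpow_mul hs.le]; congr 1; push_cast; ring
      rw [mul_pow, mul_pow, ← e1, ← e2]
      field_simp
  calc _ ≤ ∫⁻ r in Iio v, Cb (α + 1/2) * ∫⁻ s in Ioi v, ENNReal.ofReal
        ((v - r) ^ (-α - 1/2) * (s - v) ^ (α + 1/2) * (s - r)⁻¹) * ‖φ s‖ₑ ^ 2 :=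
        setLIntegral_mono' measurableSet_Iio step1
    _ = Cb (α + 1/2) * ∫⁻ s in Ioi v, ∫⁻ r in Iio v, ENNReal.ofReal
        ((v - r) ^ (-α - 1/2) * (s - v) ^ (α + 1/2) * (s - r)⁻¹) * ‖φ s‖ₑ ^ 2 := by
        rw [lintegral_const_mul, lintegral_lintegral_swap]
        · fun_prop
        · apply Measurable.lintegral_prod_right (f := fun (r : ℝ) (s : ℝ) => _)
          fun_prop
    _ = Cb (α + 1/2) * ∫⁻ s in Ioi v, Cb (1/2 - α) * ‖φ s‖ₑ ^ 2 := by
        congr 1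
        apply setLIntegral_congr_fun measurableSet_Ioi
        intro s hs
        have hs : 0 < s - v := sub_pos.mpr hs
        simp only
        rw [lintegral_mul_const _ (by fun_prop)]
        congr 1
        have : ∀ r ∈ Iio v, ENNReal.ofReal ((v - r) ^ (-α - 1/2) * (s - v) ^ (α + 1/2) * (s - r)⁻¹)
            = ENNReal.ofReal ((s-v) ^ (α+1/2)) *
              ENNReal.ofReal ((v - r) ^ (1/2 - α - 1) / (v - r + (s - v))) := by
          intro r hr
          have hr : 0 < v - r := sub_pos.mpr hr
          rw [← ENNReal.ofReal_mul (by positivity)]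
          congr 1
          rw [show v - r + (s - v) = s - r by ring, show 1/2 - α - 1 = -α - 1/2 by ring]
          field_simp
        rw [setLIntegral_congr_fun measurableSet_Iio this, lintegral_const_mul _ (by fun_prop),
          Cb_left hs, ← mul_assoc, ← ENNReal.ofReal_mul (by positivity), ← Real.rpow_add hs,
          show α + 1/2 + (1/2 - α - 1) = 0 by ring]
        simp
    _ ≤ _ := by
        rw [lintegral_const_mul _ (by fun_prop), mul_assoc]
        gcongr
        exact Measure.restrict_le_self

lemma enorm_sq_add (a b : ℝ≥0∞) : (a + b) ^ 2 ≤ 2 * (a ^ 2 + b ^ 2) := by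
  have := ENNReal.rpow_add_le_mul_rpow_add_rpow a b (p := 2) (by norm_num)
  norm_num at this
  simpa using this

/-- The uniform bound. -/
noncomputable def MM (α : ℝ) (φ : ℝ → ℝ) : ℝ≥0∞ :=
  2 * ((∫⁻ s, ‖φ s‖ₑ ^ 2) + ENNReal.ofReal ((Cb α).toReal⁻¹) ^ 2 *
    (Cb (α + 1/2) * Cb (1/2 - α) * ∫⁻ s, ‖φ s‖ₑ ^ 2))

lemma psi_sq {α : ℝ} (h0 : 0 < α) {φ : ℝ → ℝ} (hφ : Measurable φ) (v : ℝ) :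
    ∫⁻ r, ‖psi α φ v r‖ₑ ^ 2 ≤ MM α φ := by
  set S : ℝ → ℝ≥0∞ := fun r => ∫⁻ s in Ioi v,
        ENNReal.ofReal ((v - r) ^ (-α) * (s - v) ^ α * (s - r)⁻¹) * ‖φ s‖ₑ with hS
  have hSm : Measurable S := by
    apply Measurable.lintegral_prod_right (f := fun (r : ℝ) (s : ℝ) => _)
    fun_prop
  have key : ∀ r, ‖psi α φ v r‖ₑ ^ 2 ≤
      2 * (‖φ r‖ₑ ^ 2 + (Iio v).indicator (fun r => ENNReal.ofReal ((Cb α).toReal⁻¹) ^ 2 * S r ^ 2) r) := by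
    intro r
    by_cases h : 0 < r ∧ r < v
    · have hvr : 0 < v - r := by linarith [h.2]
      have hr := h.1
      rw [indicator_of_mem (show r ∈ Iio v from h.2)]
      have : ‖psi α φ v r‖ₑ ≤ ‖φ r‖ₑ + ENNReal.ofReal ((Cb α).toReal⁻¹) * S r := by
        rw [psi, if_pos h]
        refine (enorm_add_le _ _).trans ?_
        gcongr
        rw [mul_assoc, enorm_mul, Real.enorm_of_nonneg (by positivity)]
        gcongr
        rw [enorm_mul, Real.enorm_of_nonneg (by positivity)]
        calc _ ≤ ENNReal.ofReal (r ^ α * (v - r) ^ (-α)) *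
            ∫⁻ s in Ioi v, ‖(s - v) ^ α * s ^ (-α) * (s - r)⁻¹ * φ s‖ₑ := by
              gcongr; exact enorm_integral_le_lintegral_enorm _
          _ = ∫⁻ s in Ioi v, ENNReal.ofReal (r ^ α * (v - r) ^ (-α)) *
              ‖(s - v) ^ α * s ^ (-α) * (s - r)⁻¹ * φ s‖ₑ := by
              rw [lintegral_const_mul _ (by fun_prop)]
          _ ≤ S r := by
              apply setLIntegral_mono' measurableSet_Ioi
              intro s hs
              have hs : v < s := hs
              have h1 : 0 < s - v := by linarith
              have h2 : 0 < s - r := by linarith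
              have h3 : 0 < s := by linarith
              rw [enorm_mul, Real.enorm_of_nonneg (by positivity), ← mul_assoc,
                ← ENNReal.ofReal_mul (by positivity)]
              gcongr ENNReal.ofReal ?_ * _
              have : r ^ α * s ^ (-α) ≤ 1 := by
                rw [Real.rpow_neg h3.le, ← div_eq_mul_inv, div_le_one (by positivity)]
                apply Real.rpow_le_rpow hr.le (by linarith) h0.le
              calc _ = (r ^ α * s ^ (-α)) * ((v - r) ^ (-α) * (s - v) ^ α * (s - r)⁻¹) := by ring
                _ ≤ 1 * _ := by gcongr
                _ = _ := one_mul _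
      refine (pow_le_pow_left' this 2).trans ((enorm_sq_add _ _).trans ?_)
      rw [mul_pow]
    · rw [psi, if_neg h]; simp
  calc _ ≤ _ := lintegral_mono key
    _ = 2 * ((∫⁻ s, ‖φ s‖ₑ ^ 2) + ENNReal.ofReal ((Cb α).toReal⁻¹) ^ 2 * ∫⁻ r in Iio v, S r ^ 2) := by
      have hm1 : Measurable ((Iio v).indicator
          (fun r => ENNReal.ofReal ((Cb α).toReal⁻¹) ^ 2 * S r ^ 2)) :=
        Measurable.indicator (by fun_prop) measurableSet_Iio
      rw [lintegral_const_mul _ (by fun_prop),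
        lintegral_add_left (by fun_prop), lintegral_indicator measurableSet_Iio,
        lintegral_const_mul _ (by fun_prop)]
    _ ≤ _ := by
      rw [MM]; gcongr; exact schur hφ v

/-- Constant for the mapping property of the weighted fractional integral. -/
noncomputable def DD (T α : ℝ) : ℝ≥0∞ := ∫⁻ x in Ioo 0 T, ENNReal.ofReal (x ^ (α - 1))

lemma DD_lt_top {T α : ℝ} (h0 : 0 < α) : DD T α < ∞ := by
  have : IntegrableOn (fun x : ℝ => x ^ (α - 1)) (Ioo 0 T) := by
    rcases le_total 0 T with h | h
    · rw [← integrableOn_Ioc_iff_integrableOn_Ioo,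
        ← intervalIntegrable_iff_integrableOn_Ioc_of_le h]
      exact intervalIntegral.intervalIntegrable_rpow' (by linarith)
    · simp [Ioo_eq_empty (not_lt.mpr h)]
  exact this.lintegral_lt_top

lemma frac_bound {T α : ℝ} (h0 : 0 < α) {h : ℝ → ℝ≥0∞} (hh : Measurable h) :
    ∫⁻ t in Icc 0 T, ENNReal.ofReal (t ^ α) * ∫⁻ s in Ioo t T, ENNReal.ofReal (kern α t s) * h s
      ≤ DD T α * ∫⁻ s in Icc 0 T, h s := by
  set F : ℝ → ℝ → ℝ≥0∞ := fun t s =>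
    (Ioo 0 T).indicator (fun x => ENNReal.ofReal (x ^ (α - 1))) (s - t) * h s with hF
  have hFm : Measurable (Function.uncurry F) := by
    have h1 : Measurable ((Ioo 0 T).indicator (fun x => ENNReal.ofReal (x ^ (α - 1)))) :=
      Measurable.indicator (by fun_prop) measurableSet_Ioo
    exact (h1.comp (measurable_snd.sub measurable_fst)).mul (hh.comp measurable_snd)
  calc _ ≤ ∫⁻ t in Icc 0 T, ∫⁻ s in Icc 0 T, F t s := by
        apply setLIntegral_mono' measurableSet_Icc
        intro t ht
        rw [← lintegral_const_mul _ (by unfold kern; fun_prop)]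
        calc _ ≤ ∫⁻ s in Ioo t T, F t s := by
              apply setLIntegral_mono' measurableSet_Ioo
              intro s hs
              have h1 : 0 < s - t := by linarith [hs.1]
              have h2 : 0 < s := by linarith [hs.1, ht.1]
              have ht0 := ht.1
              simp only [hF]
              rw [indicator_of_mem (show s - t ∈ Ioo 0 T from ⟨h1, by linarith [hs.2, ht.1]⟩),
                ← mul_assoc, ← ENNReal.ofReal_mul (by positivity)]
              gcongr ENNReal.ofReal ?_ * _
              have : t ^ α * s ^ (-α) ≤ 1 := by
                rw [Real.rpow_neg h2.le, ← div_eq_mul_inv, div_le_one (by positivity)]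
                apply Real.rpow_le_rpow ht.1 (by linarith) h0.le
              calc _ = (t ^ α * s ^ (-α)) * (s - t) ^ (α - 1) := by unfold kern; ring
                _ ≤ 1 * (s - t) ^ (α - 1) := by gcongr
                _ = _ := one_mul _
          _ ≤ _ := lintegral_mono_set (Ioo_subset_Icc_self.trans (Icc_subset_Icc_left ht.1))
    _ = ∫⁻ s in Icc 0 T, ∫⁻ t in Icc 0 T, F t s := by
        rw [lintegral_lintegral_swap hFm.aemeasurable]
    _ ≤ ∫⁻ s in Icc 0 T, DD T α * h s := by
        gcongr with s
        simp only [hF]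
        rw [lintegral_mul_const]
        · gcongr
          refine (lintegral_mono' Measure.restrict_le_self le_rfl).trans ?_
          rw [lintegral_sub_left_eq_self, lintegral_indicator measurableSet_Ioo, DD]
        · exact (Measurable.indicator (by fun_prop) measurableSet_Ioo).comp (measurable_const.sub measurable_id)
    _ = _ := lintegral_const_mul _ hh

lemma le_one_add_sq (x : ℝ≥0∞) : x ≤ 1 + x ^ 2 := by
  rcases le_total x 1 with h | h
  · exact h.trans le_self_add
  · refine le_trans ?_ le_add_self
    rw [sq]; exact le_mul_of_one_le_left zero_le h

lemma frac_bound2 {T α : ℝ} (h0 : 0 < α) {h : ℝ → ℝ} (hh : Measurable h) {M : ℝ≥0∞}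
    (hM : ∫⁻ r, ‖h r‖ₑ ^ 2 ≤ M) :
    ∫⁻ t in Icc 0 T, ENNReal.ofReal (t ^ α) * ∫⁻ s in Ioo t T, ENNReal.ofReal (kern α t s) * ‖h s‖ₑ
      ≤ DD T α * (ENNReal.ofReal T + M) := by
  refine (frac_bound h0 (by fun_prop)).trans ?_
  gcongr
  calc _ ≤ ∫⁻ s in Icc 0 T, (1 + ‖h s‖ₑ ^ 2) := lintegral_mono fun s => le_one_add_sq _
    _ = ENNReal.ofReal T + ∫⁻ s in Icc 0 T, ‖h s‖ₑ ^ 2 := by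
      rw [lintegral_add_left measurable_const]; simp
    _ ≤ _ := by
      gcongr
      exact (lintegral_mono' Measure.restrict_le_self le_rfl).trans hM

end TL

namespace TL

lemma beta_int {α u v s : ℝ} (huv : u < v) (hvs : v < s) :
    ∫ r in Ioo u v, (r - u) ^ (α - 1) * (v - r) ^ (-α) * (s - r)⁻¹
      = (Cb α).toReal * ((s - v) ^ (-α) * (s - u) ^ (α - 1)) := by
  have hsv : 0 < s - v := by linarith
  have hsu : 0 < s - u := by linarith
  rw [integral_eq_lintegral_of_nonneg_ae, beta huv hvs, ENNReal.toReal_mul,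
    ENNReal.toReal_ofReal (by positivity)]
  · filter_upwards [ae_restrict_mem measurableSet_Ioo] with r hr
    have h1 : 0 < r - u := by linarith [hr.1]
    have h2 : 0 < v - r := by linarith [hr.2]
    have h3 : 0 < s - r := by linarith
    simp only [Pi.zero_apply]
    positivity
  · exact Measurable.aestronglyMeasurable (by fun_prop)

lemma psi_zero {T α : ℝ} {φ : ℝ → ℝ} {t v : ℝ} (hv : v ≤ t) :
    ∫ s in Ioo t T, kern α t s * psi α φ v s = 0 := by
  apply integral_eq_zero_of_ae
  filter_upwards [ae_restrict_mem measurableSet_Ioo] with s hs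
  have : ¬ (0 < s ∧ s < v) := by
    rintro ⟨_, h⟩; linarith [hs.1]
  simp [psi, if_neg this]

lemma psi_repr {T α : ℝ} (h0 : 0 < α) (h1 : α < 1) {φ : ℝ → ℝ} (hφ : Measurable φ)
    (hsupp : ∀ s, T ≤ s → φ s = 0) {t v : ℝ} (ht : 0 < t) (htv : t < v) (hvT : v ≤ T)
    (hItg : IntegrableOn (fun s => kern α t s * φ s) (Ioo t T)) :
    ∫ s in Ioo t T, kern α t s * psi α φ v s = ∫ s in Ioo t T, kern α t s * φ s := by
  have hkm : Measurable (kern α t) := by unfold kern; fun_prop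
  have hC0 : (Cb α).toReal ≠ 0 := (ENNReal.toReal_pos Cb_pos.ne' (Cb_lt_top h0 h1).ne).ne'
  have hItg1 : IntegrableOn (fun s => kern α t s * φ s) (Ioi t) := by
    apply hItg.of_forall_sdiff_eq_zero measurableSet_Ioi
    intro s hs
    have : T ≤ s := by
      by_contra h; exact hs.2 ⟨hs.1, not_le.mp h⟩
    simp [hsupp s this]
  have hR : ∫ s in Ioo t T, kern α t s * φ s = ∫ s in Ioi t, kern α t s * φ s := by
    symm
    apply setIntegral_eq_of_subset_of_forall_sdiff_eq_zero measurableSet_Ioi Ioo_subset_Ioi_self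
    intro s hs
    have : T ≤ s := by
      by_contra h; exact hs.2 ⟨hs.1, not_le.mp h⟩
    simp [hsupp s this]
  have hL : ∫ s in Ioo t T, kern α t s * psi α φ v s = ∫ s in Ioo t v, kern α t s * psi α φ v s := by
    apply setIntegral_eq_of_subset_of_forall_sdiff_eq_zero measurableSet_Ioo
      (Ioo_subset_Ioo_right hvT)
    intro s hs
    have : ¬ (0 < s ∧ s < v) := by
      rintro ⟨_, h⟩; exact hs.2 ⟨hs.1.1, h⟩
    simp [psi, if_neg this]
  set G : ℝ → ℝ → ℝ := fun r s => ((r - t) ^ (α - 1) * (v - r) ^ (-α) * (s - r)⁻¹) *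
    ((s - v) ^ α * s ^ (-α) * φ s) with hG
  have hGm : Measurable (Function.uncurry G) := by
    simp only [hG]; unfold Function.uncurry; fun_prop
  have hGi : Integrable (Function.uncurry G)
      ((volume.restrict (Ioo t v)).prod (volume.restrict (Ioi v))) := by
    refine ⟨hGm.aestronglyMeasurable, ?_⟩
    rw [HasFiniteIntegral, lintegral_prod_symm _ hGm.enorm.aemeasurable]
    have : ∀ s ∈ Ioi v, ∫⁻ r in Ioo t v, ‖Function.uncurry G (r, s)‖ₑ =
        Cb α * ‖kern α t s * φ s‖ₑ := by
      intro s hs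
      have hs : v < s := hs
      have e1 : 0 < s - v := by linarith
      have e2 : 0 < s - t := by linarith
      have e3 : 0 < s := by linarith
      have : ∀ r ∈ Ioo t v, ‖Function.uncurry G (r, s)‖ₑ =
          ENNReal.ofReal ((r - t) ^ (α - 1) * (v - r) ^ (-α) * (s - r)⁻¹) *
            ‖(s - v) ^ α * s ^ (-α) * φ s‖ₑ := by
        intro r hr
        have h1 : 0 < r - t := by linarith [hr.1]
        have h2 : 0 < v - r := by linarith [hr.2]
        have h3 : 0 < s - r := by linarith
        simp only [Function.uncurry, hG]
        rw [enorm_mul, Real.enorm_of_nonneg (by positivity)]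
      rw [setLIntegral_congr_fun measurableSet_Ioo this, lintegral_mul_const _ (by fun_prop),
        beta htv hs, mul_assoc]
      congr 1
      rw [← Real.enorm_of_nonneg (by positivity), ← enorm_mul]
      congr 1
      rw [kern, Real.rpow_neg e1.le]
      field_simp
    rw [setLIntegral_congr_fun measurableSet_Ioi this, lintegral_const_mul _ (by fun_prop)]
    apply ENNReal.mul_lt_top (Cb_lt_top h0 h1)
    exact (hItg1.mono_set (Ioi_subset_Ioi htv.le)).2
  have hexp : ∀ r ∈ Ioo t v, kern α t r * psi α φ v r =
      kern α t r * φ r + (Cb α).toReal⁻¹ * ∫ s in Ioi v, G r s := by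
    intro r hr
    have hr0 : 0 < r := ht.trans hr.1
    rw [psi, if_pos ⟨hr0, hr.2⟩, mul_add]
    congr 1
    have : ∫ s in Ioi v, G r s = ((r - t) ^ (α - 1) * (v - r) ^ (-α)) *
        ∫ s in Ioi v, (s - v) ^ α * s ^ (-α) * (s - r)⁻¹ * φ s := by
      rw [← integral_const_mul]
      congr 1; ext s; simp only [hG]; ring
    rw [this, kern, Real.rpow_neg hr0.le]
    have : 0 < r ^ α := by positivity
    field_simp
  have hGl : Integrable (fun r => ∫ s in Ioi v, G r s) (volume.restrict (Ioo t v)) :=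
    hGi.integral_prod_left
  have hsplit : Ioi t = Ioo t v ∪ Ici v := (Ioo_union_Ici_eq_Ioi htv).symm
  rw [hL, hR, setIntegral_congr_fun measurableSet_Ioo hexp, integral_add
    (hItg1.mono_set Ioo_subset_Ioi_self) (hGl.const_mul _), integral_const_mul,
    integral_integral_swap hGi, hsplit, setIntegral_union
      (by rw [Set.disjoint_left]; intro x hx hx2; exact absurd hx.2 (not_lt.mpr hx2))
      measurableSet_Ici (hItg1.mono_set Ioo_subset_Ioi_self)
      (hItg1.mono_set (Ici_subset_Ioi.mpr htv)), integral_Ici_eq_integral_Ioi]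
  congr 1
  rw [← integral_const_mul]
  apply setIntegral_congr_fun measurableSet_Ioi
  intro s hs
  have hs : v < s := hs
  have e1 : 0 < s - v := by linarith
  have e2 : 0 < s - t := by linarith
  simp only [hG]
  rw [integral_mul_const, beta_int htv hs, kern, Real.rpow_neg e1.le]
  have : 0 < (s - v) ^ α := by positivity
  field_simp

end TL

namespace TL

lemma memLp_two_of {X : Type*} [MeasurableSpace X] {μ : Measure X} {g : X → ℝ}
    (hg : AEStronglyMeasurable g μ) (h : ∫⁻ x, ‖g x‖ₑ ^ 2 ∂μ < ∞) : MemLp g 2 μ := by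
  refine ⟨hg, ?_⟩
  rw [eLpNorm_lt_top_iff_lintegral_rpow_enorm_lt_top (by norm_num) (by norm_num)]
  simpa using h

lemma enorm_prod' {n : ℕ} (g : Fin n → ℝ) : ‖∏ i, g i‖ₑ = ∏ i, ‖g i‖ₑ := by
  simp [enorm, nnnorm_prod]

lemma lint_const_prod {n : ℕ} {μ : Fin n → Measure ℝ} [∀ i, SigmaFinite (μ i)] (c : ℝ≥0∞)
    (f : Fin n → ℝ → ℝ≥0∞) (hf : ∀ i, Measurable (f i)) :
    ∫⁻ x, c * ∏ i, f i (x i) ∂(Measure.pi μ) = c * ∏ i, ∫⁻ x, f i x ∂(μ i) := by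
  rw [lintegral_const_mul, lint_prod f hf]
  exact Finset.measurable_prod _ fun i _ => (hf i).comp (measurable_pi_apply i)

lemma frac_bound3 {T α : ℝ} (h0 : 0 < α) {h : ℝ → ℝ} (hh : Measurable h) {M : ℝ≥0∞}
    (hM : ∫⁻ r, ‖h r‖ₑ ^ 2 ≤ M) :
    ∫⁻ t in Icc 0 T, ENNReal.ofReal (t ^ α) * ∫⁻ s in Ioo t T, ‖kern α t s * h s‖ₑ
      ≤ DD T α * (ENNReal.ofReal T + M) := by
  refine le_trans (le_of_eq ?_) (frac_bound2 h0 hh hM)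
  apply setLIntegral_congr_fun measurableSet_Icc
  intro t ht
  simp only
  congr 1
  apply setLIntegral_congr_fun measurableSet_Ioo
  intro s hs
  have h1 : 0 < s - t := by linarith [hs.1]
  have h2 : 0 < s := by linarith [hs.1, ht.1]
  simp only
  rw [enorm_mul, Real.enorm_of_nonneg (by unfold kern; positivity)]

lemma measurable_kern {α : ℝ} : Measurable (fun p : ℝ × ℝ => kern α p.1 p.2) := by
  unfold kern; fun_prop

/-- Inner absolute integral. -/
noncomputable def JJ (T α : ℝ) (φ : ℝ → ℝ) (t v : ℝ) : ℝ≥0∞ :=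
  ∫⁻ s in Ioo t T, ‖kern α t s * psi α φ v s‖ₑ

lemma measurable_JJ {T α : ℝ} {φ : ℝ → ℝ} (hφ : Measurable φ) :
    Measurable (fun p : ℝ × ℝ => JJ T α φ p.1 p.2) := by
  have : (fun p : ℝ × ℝ => JJ T α φ p.1 p.2) =
      fun p : ℝ × ℝ => ∫⁻ s, {q : (ℝ × ℝ) × ℝ | q.1.1 < q.2 ∧ q.2 < T}.indicator
        (fun q => ‖kern α q.1.1 q.2 * psi α φ q.1.2 q.2‖ₑ) (p, s) := by
    ext p
    rw [JJ, ← lintegral_indicator measurableSet_Ioo]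
    congr 1
  rw [this]
  apply Measurable.lintegral_prod_right (f := fun (p : ℝ × ℝ) (s : ℝ) => _)
  apply Measurable.indicator
  · have h1 : Measurable (fun q : (ℝ × ℝ) × ℝ => kern α q.1.1 q.2) :=
      measurable_kern.comp (by fun_prop : Measurable (fun q : (ℝ × ℝ) × ℝ => (q.1.1, q.2)))
    have h2 : Measurable (fun q : (ℝ × ℝ) × ℝ => psi α φ q.1.2 q.2) :=
      (measurable_psi hφ).comp (by fun_prop : Measurable (fun q : (ℝ × ℝ) × ℝ => (q.1.2, q.2)))
    exact (h1.mul h2).enorm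
  · have h1 : MeasurableSet {q : (ℝ × ℝ) × ℝ | q.1.1 < q.2} :=
      measurableSet_lt (by fun_prop) (by fun_prop)
    have h2 : MeasurableSet {q : (ℝ × ℝ) × ℝ | q.2 < T} :=
      measurableSet_lt (by fun_prop) (by fun_prop)
    exact h1.inter h2

lemma MM_lt_top {α : ℝ} (h0 : 0 < α) (h1 : α < 1/2) {φ : ℝ → ℝ} (hφ2 : ∫⁻ s, ‖φ s‖ₑ ^ 2 < ∞) :
    MM α φ < ∞ := by
  rw [MM]
  have a1 := Cb_lt_top (β := α + 1/2) (by linarith) (by linarith)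
  have a2 := Cb_lt_top (β := 1/2 - α) (by linarith) (by linarith)
  finiteness

section assembly
variable {T α : ℝ} {φ b : ℝ → ℝ} {n : ℕ}

/-- The correction term. -/
noncomputable def corr (T α : ℝ) (φ b : ℝ → ℝ) (n : ℕ) (s : Fin n → ℝ) : ℝ :=
  ∫ v in Icc 0 T, b v * ∏ i, psi α φ v (s i)

lemma measurable_H (hφ : Measurable φ) (hb : Measurable b) :
    Measurable (fun p : (Fin n → ℝ) × ℝ => b p.2 * ∏ i, psi α φ p.2 (p.1 i)) := by
  refine Measurable.mul (by fun_prop) (Finset.measurable_prod _ fun i _ => ?_)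
  exact (measurable_psi hφ).comp (by fun_prop : Measurable (fun q : (Fin n → ℝ) × ℝ => (q.2, q.1 i)))

lemma measurable_corr (hφ : Measurable φ) (hb : Measurable b) : Measurable (corr T α φ b n) := by
  apply StronglyMeasurable.measurable
  exact StronglyMeasurable.integral_prod_right (f := fun (s : Fin n → ℝ) (v : ℝ) => _)
    (measurable_H hφ hb).stronglyMeasurable

lemma memLp_corr (h0 : 0 < α) (h1 : α < 1/2) (hφ : Measurable φ) (hb : Measurable b)
    (hφ2 : ∫⁻ s, ‖φ s‖ₑ ^ 2 < ∞) (hbi : ∫⁻ v in Icc 0 T, ‖b v‖ₑ < ∞) :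
    MemLp (corr T α φ b n) 2 (Measure.pi fun _ : Fin n => volume.restrict (Set.Icc 0 T)) := by
  apply memLp_two_of (measurable_corr hφ hb).aestronglyMeasurable
  set B := ∫⁻ v in Icc 0 T, ‖b v‖ₑ with hB
  have hHm : Measurable (fun p : (Fin n → ℝ) × ℝ => ‖b p.2‖ₑ * ∏ i, ‖psi α φ p.2 (p.1 i)‖ₑ ^ 2) := by
    refine Measurable.mul (by fun_prop) (Finset.measurable_prod _ fun i _ => ?_)
    exact (((measurable_psi hφ).comp
      (by fun_prop : Measurable (fun q : (Fin n → ℝ) × ℝ => (q.2, q.1 i)))).enorm).pow_const 2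
  have step : ∀ s : Fin n → ℝ, ‖corr T α φ b n s‖ₑ ^ 2 ≤
      B * ∫⁻ v in Icc 0 T, ‖b v‖ₑ * ∏ i, ‖psi α φ v (s i)‖ₑ ^ 2 := by
    intro s
    refine (pow_le_pow_left' (enorm_integral_le_lintegral_enorm _) 2).trans ?_
    apply cs
    · fun_prop
    · exact (hHm.comp (by fun_prop : Measurable (fun v : ℝ => (s, v)))).aemeasurable
    · filter_upwards with v
      rw [enorm_mul, mul_pow, sq ‖b v‖ₑ, mul_assoc, enorm_prod', Finset.prod_pow]
  calc _ ≤ _ := lintegral_mono step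
    _ = B * ∫⁻ v in Icc 0 T, ∫⁻ s, ‖b v‖ₑ * ∏ i, ‖psi α φ v (s i)‖ₑ ^ 2
          ∂(Measure.pi fun _ : Fin n => volume.restrict (Set.Icc 0 T)) := by
        rw [lintegral_const_mul, lintegral_lintegral_swap]
        · exact hHm.aemeasurable
        · exact Measurable.lintegral_prod_right (f := fun (s : Fin n → ℝ) (v : ℝ) => _) hHm
    _ ≤ B * ∫⁻ v in Icc 0 T, ‖b v‖ₑ * MM α φ ^ n := by
        gcongr with v
        have hm : Measurable (fun r => ‖psi α φ v r‖ₑ ^ 2) :=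
          (((measurable_psi hφ).comp (by fun_prop : Measurable (fun r : ℝ => (v, r)))).enorm).pow_const 2
        rw [lint_const_prod _ (fun _ r => ‖psi α φ v r‖ₑ ^ 2) (fun _ => hm), Finset.prod_const, Finset.card_univ, Fintype.card_fin]
        gcongr
        exact (lintegral_mono' Measure.restrict_le_self le_rfl).trans (psi_sq h0 hφ v)
    _ = B * (B * MM α φ ^ n) := by rw [lintegral_mul_const _ (by fun_prop)]
    _ < ∞ := by
        have := MM_lt_top h0 h1 hφ2
        finiteness

lemma ae_finite (h0 : 0 < α) (h1 : α < 1/2) (hφ : Measurable φ) (hb : Measurable b)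
    (hφ2 : ∫⁻ s, ‖φ s‖ₑ ^ 2 < ∞) (hbi : ∫⁻ v in Icc 0 T, ‖b v‖ₑ < ∞) :
    ∀ᵐ t ∂(Measure.pi fun _ : Fin n => volume.restrict (Set.Icc 0 T)),
      (∀ i, 0 < t i) → ∫⁻ v in Icc 0 T, ‖b v‖ₑ * ∏ i, JJ T α φ (t i) v < ∞ := by
  have hHm : Measurable (fun p : (Fin n → ℝ) × ℝ =>
      ‖b p.2‖ₑ * ∏ i, (ENNReal.ofReal (p.1 i ^ α) * JJ T α φ (p.1 i) p.2)) := by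
    refine Measurable.mul (by fun_prop) (Finset.measurable_prod _ fun i _ => ?_)
    refine Measurable.mul (by fun_prop) ?_
    exact (measurable_JJ hφ).comp (by fun_prop : Measurable (fun q : (Fin n → ℝ) × ℝ => (q.1 i, q.2)))
  have hfin : ∫⁻ t, (∫⁻ v in Icc 0 T, ‖b v‖ₑ * ∏ i, (ENNReal.ofReal (t i ^ α) * JJ T α φ (t i) v))
      ∂(Measure.pi fun _ : Fin n => volume.restrict (Set.Icc 0 T)) < ∞ := by
    rw [lintegral_lintegral_swap hHm.aemeasurable]
    calc _ ≤ ∫⁻ v in Icc 0 T, ‖b v‖ₑ * (DD T α * (ENNReal.ofReal T + MM α φ)) ^ n := by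
          gcongr with v
          have hm : Measurable (fun t => ENNReal.ofReal (t ^ α) * JJ T α φ t v) :=
            Measurable.mul (by fun_prop)
              ((measurable_JJ hφ).comp (by fun_prop : Measurable (fun t : ℝ => (t, v))))
          rw [lint_const_prod _ (fun _ t => ENNReal.ofReal (t ^ α) * JJ T α φ t v) (fun _ => hm), Finset.prod_const, Finset.card_univ, Fintype.card_fin]
          gcongr
          exact frac_bound3 h0
            ((measurable_psi hφ).comp (by fun_prop : Measurable (fun r : ℝ => (v, r)))) (psi_sq h0 hφ v)
      _ = (∫⁻ v in Icc 0 T, ‖b v‖ₑ) * (DD T α * (ENNReal.ofReal T + MM α φ)) ^ n :=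
          lintegral_mul_const _ (by fun_prop)
      _ < ∞ := by
          have := MM_lt_top h0 h1 hφ2
          have := DD_lt_top (T := T) h0
          finiteness
  filter_upwards [ae_lt_top (Measurable.lintegral_prod_right
    (f := fun (t : Fin n → ℝ) (v : ℝ) => ‖b v‖ₑ *
      ∏ i, (ENNReal.ofReal (t i ^ α) * JJ T α φ (t i) v)) hHm) hfin.ne] with t ht hpos
  have : ∀ v, ‖b v‖ₑ * ∏ i, (ENNReal.ofReal (t i ^ α) * JJ T α φ (t i) v) =
      (∏ i, ENNReal.ofReal (t i ^ α)) * (‖b v‖ₑ * ∏ i, JJ T α φ (t i) v) := by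
    intro v; rw [Finset.prod_mul_distrib]; ring
  simp_rw [this] at ht
  rw [lintegral_const_mul] at ht
  · refine ENNReal.lt_top_of_mul_ne_top_right ht.ne ?_
    rw [Finset.prod_ne_zero_iff]
    intro i _
    have := Real.rpow_pos_of_pos (hpos i) α
    simpa using this
  · refine Measurable.mul (by fun_prop) (Finset.measurable_prod _ fun i _ => ?_)
    exact (measurable_JJ hφ).comp (by fun_prop : Measurable (fun v : ℝ => (t i, v)))

lemma main_repr (h0 : 0 < α) (h1 : α < 1/2) (hφ : Measurable φ) (hb : Measurable b)
    (hsupp : ∀ s, T ≤ s → φ s = 0) (c : ℝ)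
    (t : Fin n → ℝ) (ht : ∀ i, 0 < t i)
    (hItg : ∀ i, IntegrableOn (fun s => kern α (t i) s * φ s) (Ioo (t i) T))
    (hJ : ∫⁻ v in Icc 0 T, ‖b v‖ₑ * ∏ i, JJ T α φ (t i) v < ∞) :
    ∫ s in Set.univ.pi (fun i => Set.Ioo (t i) T),
        (∏ i, kern α (t i) (s i)) * (c * (∏ i, φ (s i)) - corr T α φ b n s)
        ∂(Measure.pi fun _ : Fin n => volume)
      = (∏ i, ∫ s in Ioo (t i) T, kern α (t i) s * φ s) *
        (c - ∫ v in Icc 0 T, b v * ∏ i, if t i < v then 1 else 0) := by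
  rw [Measure.restrict_pi_pi]
  set ν := Measure.pi (fun i => volume.restrict (Ioo (t i) T)) with hnu
  have hA : Integrable (fun s : Fin n → ℝ => ∏ i, (kern α (t i) (s i) * φ (s i))) ν :=
    Integrable.fintype_prod_dep (f := fun i s => kern α (t i) s * φ s) hItg
  set H : (Fin n → ℝ) → ℝ → ℝ := fun s v => b v * ∏ i, (kern α (t i) (s i) * psi α φ v (s i)) with hH
  have hHm : Measurable (Function.uncurry H) := by
    refine Measurable.mul (by fun_prop) (Finset.measurable_prod _ fun i _ => ?_)
    refine Measurable.mul ?_ ?_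
    · exact measurable_kern.comp (by fun_prop : Measurable (fun q : (Fin n → ℝ) × ℝ => (t i, q.1 i)))
    · exact (measurable_psi hφ).comp (by fun_prop : Measurable (fun q : (Fin n → ℝ) × ℝ => (q.2, q.1 i)))
  have hHi : Integrable (Function.uncurry H) (ν.prod (volume.restrict (Icc 0 T))) := by
    refine ⟨hHm.aestronglyMeasurable, ?_⟩
    rw [HasFiniteIntegral, lintegral_prod_symm _ hHm.enorm.aemeasurable]
    refine lt_of_eq_of_lt ?_ hJ
    congr 1
    ext v
    have hm : ∀ i, Measurable (fun r => ‖kern α (t i) r * psi α φ v r‖ₑ) := fun i =>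
      ((measurable_kern.comp (by fun_prop : Measurable (fun r : ℝ => (t i, r)))).mul
        ((measurable_psi hφ).comp (by fun_prop : Measurable (fun r : ℝ => (v, r))))).enorm
    simp only [Function.uncurry, hH, enorm_mul (b v), enorm_prod']
    rw [hnu, lint_const_prod _ (fun i r => ‖kern α (t i) r * psi α φ v r‖ₑ) hm]
    rfl
  have hHl : Integrable (fun s => ∫ v in Icc 0 T, H s v) ν := hHi.integral_prod_left
  have e1 : ∀ s : Fin n → ℝ, (∏ i, kern α (t i) (s i)) * (c * (∏ i, φ (s i)) - corr T α φ b n s)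
      = c * (∏ i, (kern α (t i) (s i) * φ (s i))) - ∫ v in Icc 0 T, H s v := by
    intro s
    have : ∫ v in Icc 0 T, H s v = (∏ i, kern α (t i) (s i)) * corr T α φ b n s := by
      rw [corr, ← integral_const_mul]
      congr 1; ext v; simp only [hH]; rw [Finset.prod_mul_distrib]; ring
    rw [this, Finset.prod_mul_distrib]; ring
  simp_rw [e1]
  rw [integral_sub (hA.const_mul c) hHl, integral_const_mul, integral_integral_swap hHi,
    integral_fintype_prod_eq_prod (fun i s => kern α (t i) s * φ s), mul_sub]
  congr 1
  · ring
  rw [← integral_const_mul]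
  apply setIntegral_congr_fun measurableSet_Icc
  intro v hv
  simp only [hH]
  rw [integral_const_mul, integral_fintype_prod_eq_prod (fun i s => kern α (t i) s * psi α φ v s),
    mul_left_comm, ← Finset.prod_mul_distrib]
  congr 1
  apply Finset.prod_congr rfl
  intro i _
  split_ifs with h
  · rw [psi_repr h0 (by linarith) hφ hsupp (ht i) h hv.2 (hItg i), mul_one]
  · rw [psi_zero (not_lt.mp h), mul_zero]

end assembly

end TL
/-- Lemma 4.1.1 (qualitative part): for `f ∈ Λ^α_T`, `a ∈ L²([0,T])` and
`e(t) = exp(∫_0^t a)`, the function `(t_1,…,t_n) ↦ (∏ f(t_i)) e(t_1 ∨ ⋯ ∨ t_n)` belongs to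
the `n`-fold tensor space of `Λ^α_T`: it equals `(∏ t_i^α) Γ(α)^{-n}` times the
coordinatewise right-sided fractional integral of `(∏ s_i^{-α}) Φ` for some
`Φ ∈ L²([0,T]^n)`. -/
theorem tensor_memLambda (T α : ℝ) (hT : 0 < T) (hα : α ∈ Set.Ioo (0 : ℝ) (1 / 2))
    (f φf : ℝ → ℝ) (hf : memLambda T α f φf)
    (a : ℝ → ℝ) (ha : MemLp a 2 (volume.restrict (Set.Icc 0 T)))
    (e : ℝ → ℝ) (he : ∀ t, e t = Real.exp (∫ s in Set.Ioc 0 t, a s))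
    (n : ℕ) (hn : 0 < n) :
    ∃ Φ : (Fin n → ℝ) → ℝ,
      MemLp Φ 2 (Measure.pi fun _ : Fin n => volume.restrict (Set.Icc 0 T)) ∧
      ∀ᵐ t ∂(Measure.pi fun _ : Fin n => volume.restrict (Set.Icc 0 T)),
        (∏ i, f (t i)) *
            e (Finset.univ.sup' (Finset.univ_nonempty_iff.mpr (Fin.pos_iff_nonempty.mp hn)) t) =
          (∏ i, t i ^ α) * ((Real.Gamma α)⁻¹ ^ n *
            ∫ s in Set.univ.pi (fun i => Set.Ioo (t i) T),
              (∏ i, (s i - t i) ^ (α - 1) * s i ^ (-α)) * Φ s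
              ∂(Measure.pi fun _ : Fin n => volume)) := by
  obtain ⟨h0, h1⟩ := hα
  set ρ := volume.restrict (Icc 0 T) with hρ
  obtain ⟨hφL, hfrep⟩ := hf
  -- measurable representatives
  set φ : ℝ → ℝ := (Ioo 0 T).indicator (hφL.1.mk φf) with hφdef
  have hφ : Measurable φ := hφL.1.stronglyMeasurable_mk.measurable.indicator measurableSet_Ioo
  have hsupp : ∀ s, T ≤ s → φ s = 0 := fun s hs =>
    indicator_of_notMem (fun h => absurd h.2 (not_lt.mpr hs)) _
  have hφae : ∀ᵐ s, s ∈ Ioo 0 T → φf s = φ s := by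
    have := (ae_restrict_iff' measurableSet_Icc).mp hφL.1.ae_eq_mk
    filter_upwards [this] with s hs hs2
    rw [hs (Ioo_subset_Icc_self hs2), hφdef, indicator_of_mem hs2]
  have hφmem : MemLp φ 2 volume := by
    rw [hφdef, memLp_indicator_iff_restrict measurableSet_Ioo]
    exact ((memLp_congr_ae hφL.1.ae_eq_mk).mp hφL).mono_measure
      (Measure.restrict_mono Ioo_subset_Icc_self le_rfl)
  have hφ2 : ∫⁻ s, ‖φ s‖ₑ ^ 2 < ∞ := by
    have := (eLpNorm_lt_top_iff_lintegral_rpow_enorm_lt_top (by norm_num) (by norm_num)).mp hφmem.2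
    simpa using this
  set a' : ℝ → ℝ := (Icc 0 T).indicator (ha.1.mk a) with ha'def
  have ha'm : Measurable a' := ha.1.stronglyMeasurable_mk.measurable.indicator measurableSet_Icc
  have haint : Integrable a ρ := ha.integrable (by norm_num)
  have ha'i : Integrable a' := by
    rw [ha'def, integrable_indicator_iff measurableSet_Icc]
    exact haint.congr ha.1.ae_eq_mk
  have haae : ∀ᵐ s, s ∈ Icc 0 T → a s = a' s := by
    have := (ae_restrict_iff' measurableSet_Icc).mp ha.1.ae_eq_mk
    filter_upwards [this] with s hs hs2
    rw [hs hs2, ha'def, indicator_of_mem hs2]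
  set E : ℝ → ℝ := fun v => Real.exp (∫ s in (0:ℝ)..v, a' s) with hE
  have hEc : Continuous E := Real.continuous_exp.comp
    (intervalIntegral.continuous_primitive (fun _ _ => ha'i.intervalIntegrable) 0)
  have heE : ∀ v ∈ Icc 0 T, e v = E v := by
    intro v hv
    rw [he, hE]
    simp only
    rw [intervalIntegral.integral_of_le hv.1]
    congr 1
    apply setIntegral_congr_ae measurableSet_Ioc
    filter_upwards [haae] with s hs hs2
    exact hs ⟨hs2.1.le, hs2.2.trans hv.2⟩
  set b : ℝ → ℝ := fun v => a' v * E v with hbdef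
  have hbm : Measurable b := ha'm.mul hEc.measurable
  have hbi : IntegrableOn b (Icc 0 T) :=
    ha'i.integrableOn.mul_continuousOn hEc.continuousOn isCompact_Icc
  have hbfin : ∫⁻ v in Icc 0 T, ‖b v‖ₑ < ∞ := hbi.2
  refine ⟨fun s => E T * (∏ i, φ (s i)) - TL.corr T α φ b n s, ?_, ?_⟩
  · refine MemLp.sub (MemLp.const_mul ?_ _) (TL.memLp_corr h0 h1 hφ hbm hφ2 hbfin)
    have hm : Measurable (fun s : Fin n → ℝ => ∏ i, φ (s i)) := by fun_prop
    apply TL.memLp_two_of hm.aestronglyMeasurable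
    simp_rw [TL.enorm_prod', ← Finset.prod_pow]
    rw [TL.lint_prod (fun _ r => ‖φ r‖ₑ ^ 2) (fun _ => by fun_prop)]
    refine ENNReal.prod_lt_top fun i _ => ?_
    exact (lintegral_mono' Measure.restrict_le_self le_rfl).trans_lt hφ2
  · -- one-dimensional almost everywhere facts
    have hae1 : ∀ᵐ t ∂ρ, (0 < t → IntegrableOn (fun s => TL.kern α t s * φ s) (Ioo t T)) := by
      have hb := TL.frac_bound3 (T := T) h0 hφ le_rfl
      have hKm : Measurable (fun p : ℝ × ℝ => {q : ℝ × ℝ | q.1 < q.2 ∧ q.2 < T}.indicator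
          (fun q => ‖TL.kern α q.1 q.2 * φ q.2‖ₑ) p) := by
        apply Measurable.indicator
        · exact (TL.measurable_kern.mul (hφ.comp measurable_snd)).enorm
        · have h1 : MeasurableSet {q : ℝ × ℝ | q.1 < q.2} :=
            measurableSet_lt (by fun_prop) (by fun_prop)
          have h2 : MeasurableSet {q : ℝ × ℝ | q.2 < T} :=
            measurableSet_lt (by fun_prop) (by fun_prop)
          exact h1.inter h2
      have hm : Measurable (fun t => ∫⁻ s in Ioo t T, ‖TL.kern α t s * φ s‖ₑ) := by
        have : (fun t => ∫⁻ s in Ioo t T, ‖TL.kern α t s * φ s‖ₑ) =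
            fun t => ∫⁻ s, {q : ℝ × ℝ | q.1 < q.2 ∧ q.2 < T}.indicator
          (fun q => ‖TL.kern α q.1 q.2 * φ q.2‖ₑ) (t, s) := by
          ext t
          rw [← lintegral_indicator measurableSet_Ioo]
          congr 1
        rw [this]
        exact Measurable.lintegral_prod_right (f := fun (t : ℝ) (s : ℝ) => _) hKm
      have hD := TL.DD_lt_top (T := T) h0
      have hlt := ae_lt_top (f := fun t => ENNReal.ofReal (t ^ α) *
        ∫⁻ s in Ioo t T, ‖TL.kern α t s * φ s‖ₑ) (μ := ρ) (by fun_prop)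
        (hb.trans_lt (by finiteness)).ne
      filter_upwards [hlt] with t ht ht0
      refine ⟨Measurable.aestronglyMeasurable (by unfold TL.kern; fun_prop), ?_⟩
      refine ENNReal.lt_top_of_mul_ne_top_right ht.ne ?_
      have := Real.rpow_pos_of_pos ht0 α
      simpa using this
    have hae2 : ∀ᵐ t ∂ρ, 0 < t ∧ t ≤ T ∧ IntegrableOn (fun s => TL.kern α t s * φ s) (Ioo t T) ∧
        f t = t ^ α * ((Real.Gamma α)⁻¹ * ∫ s in Ioo t T, TL.kern α t s * φ s) := by
      have hne : ∀ᵐ t ∂ρ, t ≠ 0 := by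
        have : ∀ᵐ t : ℝ, t ≠ 0 := by simp [ae_iff]
        exact ae_restrict_of_ae this
      filter_upwards [hae1, hfrep, hne, ae_restrict_mem measurableSet_Icc] with t h1 h2 h3 h4
      have ht0 : 0 < t := lt_of_le_of_ne h4.1 (Ne.symm h3)
      refine ⟨ht0, h4.2, h1 ht0, ?_⟩
      rw [h2, fracInt, one_div]
      congr 2
      apply setIntegral_congr_ae measurableSet_Ioo
      filter_upwards [hφae] with s hs hs2
      rw [hs ⟨ht0.trans hs2.1, hs2.2⟩, TL.kern]; ring
    have hae3 : ∀ᵐ t ∂(Measure.pi fun _ : Fin n => ρ), ∀ i, 0 < t i ∧ t i ≤ T ∧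
        IntegrableOn (fun s => TL.kern α (t i) s * φ s) (Ioo (t i) T) ∧
        f (t i) = t i ^ α * ((Real.Gamma α)⁻¹ * ∫ s in Ioo (t i) T, TL.kern α (t i) s * φ s) := by
      rw [ae_all_iff]
      intro i
      exact (Measure.tendsto_eval_ae_ae (μ := fun _ : Fin n => ρ) (i := i)).eventually hae2
    filter_upwards [hae3, TL.ae_finite h0 h1 hφ hbm hφ2 hbfin] with t ht hJ
    have hpos : ∀ i, 0 < t i := fun i => (ht i).1
    have hmain := TL.main_repr h0 h1 hφ hbm hsupp (E T) t hpos (fun i => (ht i).2.2.1) (hJ hpos)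
    simp only [TL.kern] at hmain
    rw [hmain]
    set hne := Finset.univ_nonempty_iff.mpr (Fin.pos_iff_nonempty.mp hn)
    set m := Finset.univ.sup' hne t with hm
    have hm0 : 0 ≤ m := by
      have := Finset.le_sup' t (Finset.mem_univ (⟨0, hn⟩ : Fin n))
      exact (hpos _).le.trans this
    have hmT : m ≤ T := Finset.sup'_le _ _ fun i _ => (ht i).2.1
    have hItg : ∫ v in Icc 0 T, b v * ∏ i, (if t i < v then (1:ℝ) else 0) = E T - E m := by
      have hftc := TL.ftc ha'i hm0 hmT
      rw [intervalIntegral.integral_of_le hmT] at hftc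
      rw [← hftc]
      have : ∀ v, b v * ∏ i, (if t i < v then (1:ℝ) else 0) = (Ioi m).indicator b v := by
        intro v
        by_cases hv : m < v
        · rw [indicator_of_mem (show v ∈ Ioi m from hv), Finset.prod_eq_one, mul_one]
          intro i _
          rw [if_pos]
          exact (Finset.le_sup' t (Finset.mem_univ i)).trans_lt hv
        · rw [indicator_of_notMem (show v ∉ Ioi m from hv)]
          obtain ⟨i, _, hi⟩ := Finset.exists_mem_eq_sup' hne t
          rw [Finset.prod_eq_zero (Finset.mem_univ i), mul_zero]
          rw [if_neg]; rw [← hi]; exact hv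
      simp_rw [this]
      rw [setIntegral_indicator measurableSet_Ioi]
      congr 2
      ext v; simp only [mem_inter_iff, mem_Icc, mem_Ioi, mem_Ioc]
      constructor
      · rintro ⟨⟨_, h⟩, h'⟩; exact ⟨h', h⟩
      · rintro ⟨h, h'⟩; exact ⟨⟨hm0.trans h.le, h'⟩, h⟩
    rw [hItg, heE m ⟨hm0, hmT⟩]
    simp_rw [fun i => (ht i).2.2.2]
    rw [Finset.prod_mul_distrib, Finset.prod_mul_distrib, Finset.prod_const, Finset.card_univ,
      Fintype.card_fin]
    simp only [TL.kern]
    ring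
end

section
/- Let α ∈ (0,1/2) and let f ∈ Λ^α_T with representative φ_f ∈ L²([0,T]). Then f ∈ L²([0,T]) and ‖f‖_{L²([0,T])} ≤ (T^α / Γ(α+1)) ‖φ_f‖_{L²([0,T])}. In particular Λ^α_T ⊂ L²([0,T]). -/
open MeasureTheory Real Set

lemma schur_aux (μ : Measure ℝ) [SFinite μ] (k : ℝ → ℝ → ENNReal)
    (hk : Measurable (Function.uncurry k)) (g : ℝ → ENNReal) (hg : Measurable g) (C : ENNReal)
    (h1 : ∀ u, ∫⁻ s, k u s ∂μ ≤ C) (h2 : ∀ s, ∫⁻ u, k u s ∂μ ≤ C) :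
    ∫⁻ u, (∫⁻ s, k u s * g s ∂μ) ^ (2 : ℝ) ∂μ ≤ C ^ (2 : ℝ) * ∫⁻ s, g s ^ (2 : ℝ) ∂μ := by
  have hku : ∀ u, Measurable (k u) := fun u => hk.of_uncurry_left
  have hks : ∀ s, Measurable (fun u => k u s) := fun s => hk.of_uncurry_right
  have key : ∀ u, (∫⁻ s, k u s * g s ∂μ) ^ (2 : ℝ) ≤ C * ∫⁻ s, k u s * g s ^ (2 : ℝ) ∂μ := by
    intro u
    have h := ENNReal.lintegral_mul_norm_pow_le (μ := μ) (f := k u)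
      (g := fun s => k u s * g s ^ (2 : ℝ)) (hku u).aemeasurable
      ((hku u).mul (hg.pow_const _)).aemeasurable (p := 1/2) (q := 1/2)
      (by norm_num) (by norm_num) (by norm_num)
    have e : ∀ s, k u s ^ (1/2 : ℝ) * (k u s * g s ^ (2 : ℝ)) ^ (1/2 : ℝ) = k u s * g s := by
      intro s
      rw [ENNReal.mul_rpow_of_nonneg _ _ (by norm_num), ← mul_assoc,
        ← ENNReal.rpow_add_of_nonneg _ _ (by norm_num) (by norm_num), ← ENNReal.rpow_mul]
      norm_num
    simp only [e] at h
    calc _ ≤ _ := ENNReal.rpow_le_rpow h (by norm_num : (0 : ℝ) ≤ 2)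
      _ = (∫⁻ s, k u s ∂μ) * ∫⁻ s, k u s * g s ^ (2 : ℝ) ∂μ := by
        rw [ENNReal.mul_rpow_of_nonneg _ _ (by norm_num), ← ENNReal.rpow_mul, ← ENNReal.rpow_mul]
        norm_num
      _ ≤ _ := by gcongr; exact h1 u
  have hm : Measurable (Function.uncurry fun u s => k u s * g s ^ (2 : ℝ)) :=
    hk.mul ((hg.comp measurable_snd).pow_const _)
  calc _ ≤ ∫⁻ u, C * ∫⁻ s, k u s * g s ^ (2 : ℝ) ∂μ ∂μ := lintegral_mono key
    _ = C * ∫⁻ u, ∫⁻ s, k u s * g s ^ (2 : ℝ) ∂μ ∂μ :=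
        lintegral_const_mul _ (hm.lintegral_prod_right')
    _ = C * ∫⁻ s, ∫⁻ u, k u s * g s ^ (2 : ℝ) ∂μ ∂μ := by
        rw [lintegral_lintegral_swap hm.aemeasurable]
    _ ≤ C * ∫⁻ s, C * g s ^ (2 : ℝ) ∂μ := by
        gcongr with s
        rw [lintegral_mul_const _ (hks s)]
        gcongr
        exact h2 s
    _ = _ := by
        rw [lintegral_const_mul _ (hg.pow_const _), ← mul_assoc]
        congr 1
        rw [show (2 : ℝ) = ((2 : ℕ) : ℝ) by norm_num, ENNReal.rpow_natCast, sq]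

lemma kernel_lint (T α : ℝ) (hT : 0 < T) (hα : 0 < α) :
    ∫⁻ x, (Set.Ioc 0 T).indicator (fun x : ℝ => ENNReal.ofReal (x ^ (α - 1))) x
      = ENNReal.ofReal (T ^ α / α) := by
  rw [lintegral_indicator measurableSet_Ioc]
  have hi : IntervalIntegrable (fun x : ℝ => x ^ (α - 1)) volume 0 T :=
    intervalIntegral.intervalIntegrable_rpow' (by linarith)
  rw [← ofReal_integral_eq_lintegral_ofReal
    ((intervalIntegrable_iff_integrableOn_Ioc_of_le hT.le).1 hi)]
  · rw [← intervalIntegral.integral_of_le hT.le, integral_rpow (Or.inl (by linarith))]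
    simp [Real.zero_rpow hα.ne']
  · filter_upwards [ae_restrict_mem measurableSet_Ioc] with x hx
    exact Real.rpow_nonneg hx.1.le _

theorem memLambda_L2 (T α : ℝ) (hT : 0 < T) (hα : α ∈ Set.Ioo (0 : ℝ) (1 / 2))
    (f φ : ℝ → ℝ) (hf : memLambda T α f φ) :
    MemLp f 2 (volume.restrict (Set.Icc 0 T)) ∧
    eLpNorm f 2 (volume.restrict (Set.Icc 0 T)) ≤
      ENNReal.ofReal (T ^ α / Real.Gamma (α + 1) *
        (eLpNorm φ 2 (volume.restrict (Set.Icc 0 T))).toReal) := by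
  obtain ⟨hφ, hfe⟩ := hf
  have hα0 : 0 < α := hα.1
  have hΓ : 0 < Real.Gamma α := Real.Gamma_pos_of_pos hα0
  set μ := (volume : Measure ℝ).restrict (Set.Icc 0 T) with hμ
  obtain ⟨g, hgm, hge⟩ := hφ.1
  have hg : Measurable g := hgm.measurable
  set K : ℝ → ENNReal := (Set.Ioc 0 T).indicator (fun x : ℝ => ENNReal.ofReal (x ^ (α - 1))) with hK
  have hKm : Measurable K := by
    refine Measurable.indicator ?_ measurableSet_Ioc
    fun_prop
  set F : ℝ → ℝ := fun u => u ^ α * ((1 / Real.Gamma α) *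
    ∫ s in Set.Ioo u T, s ^ (-α) * g s * (s - u) ^ (α - 1)) with hF
  have hfF : f =ᵐ[μ] F := by
    filter_upwards [hfe, ae_restrict_mem measurableSet_Icc] with u hu hmem
    rw [hu, hF]
    simp only [fracInt]
    congr 2
    apply integral_congr_ae
    have hsub : Set.Ioo u T ⊆ Set.Icc 0 T := fun s hs => ⟨hmem.1.trans hs.1.le, hs.2.le⟩
    filter_upwards [ae_restrict_of_ae_restrict_of_subset hsub hge] with s hs
    rw [hs]
  have hFm : StronglyMeasurable F := by
    have e : F = fun u => u ^ α * ((1 / Real.Gamma α) *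
      ∫ s, Set.indicator {p : ℝ × ℝ | p.1 < p.2 ∧ p.2 < T}
        (fun p => p.2 ^ (-α) * g p.2 * (p.2 - p.1) ^ (α - 1)) (u, s)) := by
      funext u
      simp only [hF]
      congr 2
      rw [← integral_indicator measurableSet_Ioo]
      rfl
    rw [e]
    have hm : Measurable (Set.indicator {p : ℝ × ℝ | p.1 < p.2 ∧ p.2 < T}
        (fun p => p.2 ^ (-α) * g p.2 * (p.2 - p.1) ^ (α - 1))) := by
      refine Measurable.indicator (by fun_prop) ?_
      exact (measurableSet_lt measurable_fst measurable_snd).inter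
        (measurableSet_lt measurable_snd measurable_const)
    have h1 := (hm.stronglyMeasurable.integral_prod_right' (ν := (volume : Measure ℝ))).measurable
    have h2 : Measurable fun u : ℝ => u ^ α := by fun_prop
    exact (h2.mul (h1.const_mul _)).stronglyMeasurable
  have hbound : ∀ᵐ u ∂μ, ‖F u‖ₑ ≤
      ENNReal.ofReal (1 / Real.Gamma α) * ∫⁻ s, K (s - u) * ‖g s‖ₑ ∂μ := by
    filter_upwards [ae_restrict_mem measurableSet_Icc] with u hu
    have hsub : Set.Ioo u T ⊆ Set.Icc 0 T := fun s hs => ⟨hu.1.trans hs.1.le, hs.2.le⟩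
    have e : F u = (1 / Real.Gamma α) *
        ∫ s in Set.Ioo u T, u ^ α * (s ^ (-α) * g s * (s - u) ^ (α - 1)) := by
      rw [integral_const_mul]; simp only [hF]; ring
    rw [e, enorm_mul, Real.enorm_of_nonneg (by positivity)]
    gcongr
    refine (enorm_integral_le_lintegral_enorm _).trans ?_
    refine le_trans ?_ (lintegral_mono' (Measure.restrict_mono_set volume hsub) le_rfl)
    refine setLIntegral_mono' measurableSet_Ioo fun s hs => ?_
    have hs0 : 0 < s := lt_of_le_of_lt hu.1 hs.1
    have hsu : 0 < s - u := sub_pos.2 hs.1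
    have hKs : K (s - u) = ENNReal.ofReal ((s - u) ^ (α - 1)) :=
      Set.indicator_of_mem (show s - u ∈ Set.Ioc 0 T from ⟨hsu, by linarith [hs.2, hu.1]⟩) _
    rw [hKs, ← ofReal_norm, ← ofReal_norm, ← ENNReal.ofReal_mul (by positivity)]
    apply ENNReal.ofReal_le_ofReal
    have hle : u ^ α * s ^ (-α) ≤ 1 := by
      rw [Real.rpow_neg hs0.le, ← div_eq_mul_inv]
      exact div_le_one_of_le₀ (Real.rpow_le_rpow hu.1 hs.1.le hα0.le) (by positivity)
    have hu0 : 0 ≤ u := hu.1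
    simp only [norm_mul]
    rw [Real.norm_of_nonneg (Real.rpow_nonneg hu0 α), Real.norm_of_nonneg (Real.rpow_nonneg hs0.le _),
      Real.norm_of_nonneg (Real.rpow_nonneg hsu.le _)]
    calc _ = (u ^ α * s ^ (-α)) * ((s - u) ^ (α - 1) * ‖g s‖) := by ring
      _ ≤ 1 * ((s - u) ^ (α - 1) * ‖g s‖) := by gcongr
      _ = _ := one_mul _
  set C := ENNReal.ofReal (T ^ α / α) with hC
  have hschur := schur_aux μ (fun u s => K (s - u))
    (hKm.comp (measurable_snd.sub measurable_fst)) (fun s => ‖g s‖ₑ) hg.enorm C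
    (fun u => (lintegral_mono' Measure.restrict_le_self le_rfl).trans
      (by rw [lintegral_sub_right_eq_self K u, kernel_lint T α hT hα0]))
    (fun s => (lintegral_mono' Measure.restrict_le_self le_rfl).trans
      (by rw [lintegral_sub_left_eq_self K s, kernel_lint T α hT hα0]))
  have hnorm : eLpNorm F 2 μ ≤ ENNReal.ofReal (1 / Real.Gamma α) * (C * eLpNorm g 2 μ) := by
    simp only [eLpNorm_eq_lintegral_rpow_enorm_toReal (p := 2) (by norm_num) (by norm_num),
      ENNReal.toReal_ofNat]
    have h3 : ∫⁻ u, ‖F u‖ₑ ^ (2 : ℝ) ∂μ ≤ (ENNReal.ofReal (1 / Real.Gamma α)) ^ (2 : ℝ) *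
        (C ^ (2 : ℝ) * ∫⁻ s, ‖g s‖ₑ ^ (2 : ℝ) ∂μ) := by
      calc _ ≤ ∫⁻ u, (ENNReal.ofReal (1 / Real.Gamma α)) ^ (2 : ℝ) *
              (∫⁻ s, K (s - u) * ‖g s‖ₑ ∂μ) ^ (2 : ℝ) ∂μ := by
            apply lintegral_mono_ae
            filter_upwards [hbound] with u hu
            rw [← ENNReal.mul_rpow_of_nonneg _ _ (by norm_num)]
            exact ENNReal.rpow_le_rpow hu (by norm_num)
        _ = _ := lintegral_const_mul' _ _ (by finiteness)
        _ ≤ _ := by gcongr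
    calc _ ≤ _ := ENNReal.rpow_le_rpow h3 (by norm_num : (0 : ℝ) ≤ 1 / 2)
      _ = _ := by
        rw [ENNReal.mul_rpow_of_nonneg _ _ (by norm_num), ENNReal.mul_rpow_of_nonneg _ _ (by norm_num),
          ← ENNReal.rpow_mul, ← ENNReal.rpow_mul]
        norm_num
  have hfin : eLpNorm φ 2 μ ≠ ⊤ := hφ.2.ne
  have hfinal : eLpNorm f 2 μ ≤ ENNReal.ofReal (T ^ α / Real.Gamma (α + 1) *
        (eLpNorm φ 2 μ).toReal) := by
    rw [eLpNorm_congr_ae hfF]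
    refine hnorm.trans (le_of_eq ?_)
    rw [← eLpNorm_congr_ae hge, ENNReal.ofReal_mul (by
        rw [Real.Gamma_add_one hα0.ne']; positivity), ENNReal.ofReal_toReal hfin, ← mul_assoc, hC,
      ← ENNReal.ofReal_mul (by positivity), Real.Gamma_add_one hα0.ne']
    congr 2
    field_simp
  exact ⟨⟨hFm.aestronglyMeasurable.congr hfF.symm, hfinal.trans_lt ENNReal.ofReal_lt_top⟩, hfinal⟩
end
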